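/- arXiv:2106.03227 — 5 statements merged into one kernel-verified Lean document; each statement's English description precedes it below -/
import Mathlib

section
/- (Theorem 3.1, Type-I error part.) Assume the null hypothesis p = q. Let α_level ∈ (0,1), define λ₁ = √(8 log(4/α_level)) and the threshold t_thres = 4/(c n) + 4 λ₁ √(ν/(c n)). If n > λ₁²/(9 ν c), then the probability (under the product law p^{⊗n_X} ⊗ q^{⊗n_Y}) that T̂ > t_thres is at most α_level. -/
open MeasureTheory Real
open scoped BigOperators ENNReal

/-- The biased empirical squared MMD statistic `T̂` of kernel `K` on samples
`ω = (X, Y)` with `n_X` and `n_Y` points. -/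
noncomputable def mmdStat {𝒳 : Type*} (K : 𝒳 → 𝒳 → ℝ) (nX nY : ℕ)
    (ω : (Fin nX → 𝒳) × (Fin nY → 𝒳)) : ℝ :=
  (1/(nX:ℝ)^2) * ∑ i, ∑ j, K (ω.1 i) (ω.1 j)
  + (1/(nY:ℝ)^2) * ∑ i, ∑ j, K (ω.2 i) (ω.2 j)
  - (2/((nX:ℝ)*(nY:ℝ))) * ∑ i, ∑ j, K (ω.1 i) (ω.2 j)


theorem feature_exists {E : Type} (K : E → E → ℝ) (hKsym : ∀ x y, K x y = K y x)
    (hKpsd : ∀ (m : ℕ) (z : Fin m → E) (a : Fin m → ℝ),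
      0 ≤ ∑ i, ∑ j, a i * a j * K (z i) (z j)) :
    ∃ (H : Type) (_ : NormedAddCommGroup H) (_ : InnerProductSpace ℝ H) (φ : E → H),
      ∀ x y, K x y = inner ℝ (φ x) (φ y) := by
  let M : Matrix E E (ℝ →L[ℝ] ℝ) := .of fun x y => K x y • ContinuousLinearMap.id ℝ ℝ
  have hM : M.PosSemidef := by
    refine ((RKHS.posSemidef_tfae (K := M)).out 0 2).mpr (And.intro ?_ ?_)
    · ext x y
      have hst : star (ContinuousLinearMap.id ℝ ℝ) = ContinuousLinearMap.id ℝ ℝ :=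
        star_one (ℝ →L[ℝ] ℝ)
      simp [M, Matrix.conjTranspose_apply, hKsym x y, hst]
    · intro v
      have h := hKpsd v.support.card (fun i => (v.support.equivFin.symm i : E))
        (fun i => v (v.support.equivFin.symm i : E))
      simp only [RCLike.re_to_real, Finsupp.sum]
      refine h.trans_eq ?_
      rw [Equiv.sum_comp v.support.equivFin.symm
        (fun x : v.support => ∑ j, v x * v (v.support.equivFin.symm j : E) * K x (v.support.equivFin.symm j : E)),
        ← Finset.sum_coe_sort v.support]
      refine Finset.sum_congr rfl fun x _ => ?_
      rw [Equiv.sum_comp v.support.equivFin.symm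
        (fun y : v.support => v x * v y * K x y),
        ← Finset.sum_coe_sort v.support]
      refine Finset.sum_congr rfl fun y _ => ?_
      simp [M, hKsym x y]
      ring
  have : Fact M.PosSemidef := ⟨hM⟩
  refine ⟨RKHS.OfKernel M, inferInstance, inferInstance,
    fun x => RKHS.kerFun (RKHS.OfKernel M) x (1:ℝ), fun x y => ?_⟩
  rw [← RKHS.kernel_inner, RKHS.OfKernel.kernel_ofKernel]
  simp [M, hKsym x y]

theorem hoeffding_osc {E : Type*} [MeasurableSpace E] (p : Measure E) [IsProbabilityMeasure p]
    (g : E → ℝ) (hg : Measurable g) (c : ℝ) (hosc : ∀ x y, |g x - g y| ≤ c) (t : ℝ) :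
    ∫ x, exp (t * (g x - ∫ y, g y ∂p)) ∂p ≤ exp (t^2 * c^2 / 8) := by
  have : Nonempty E := p.nonempty_of_neZero
  have hb : BddBelow (Set.range g) := by
    obtain ⟨x0⟩ := ‹Nonempty E›
    refine ⟨g x0 - c, ?_⟩
    rintro _ ⟨x, rfl⟩
    have := abs_le.1 (hosc x x0)
    linarith
  have hmem : ∀ x, g x ∈ Set.Icc (⨅ y, g y) ((⨅ y, g y) + c) := by
    intro x
    refine ⟨ciInf_le hb x, ?_⟩
    have : g x - c ≤ ⨅ y, g y := le_ciInf fun y => by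
      have := abs_le.1 (hosc x y); linarith
    linarith
  have := (ProbabilityTheory.hasSubgaussianMGF_of_mem_Icc (μ := p) hg.aemeasurable
    (Filter.Eventually.of_forall hmem)).mgf_le t
  rw [ProbabilityTheory.mgf] at this
  refine this.trans_eq ?_
  congr 1
  simp [div_pow]
  ring

theorem mcdiarmid {E : Type*} [MeasurableSpace E] (p : Measure E) [IsProbabilityMeasure p] (t : ℝ) :
    ∀ (n : ℕ) (f : (Fin n → E) → ℝ) (_ : Measurable f) (B : ℝ) (_ : ∀ z, |f z| ≤ B)
    (c : Fin n → ℝ) (_ : ∀ i z x, |f z - f (Function.update z i x)| ≤ c i),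
    ∫ z, exp (t * (f z - ∫ w, f w ∂(Measure.pi fun _ => p))) ∂(Measure.pi fun _ => p)
      ≤ exp (t^2 * (∑ i, c i ^ 2) / 8) := by
  intro n
  induction n with
  | zero =>
    intro f hf B hB c hc
    rw [Measure.pi_of_empty]
    simp
  | succ n ih =>
    intro f hf B hB c hc
    let Q : Measure (Fin n → E) := Measure.pi fun _ => p
    let e := MeasurableEquiv.piFinSuccAbove (fun _ : Fin (n+1) => E) 0
    have he : MeasurePreserving e (Measure.pi fun _ => p) (p.prod Q) :=
      measurePreserving_piFinSuccAbove (fun _ : Fin (n+1) => p) 0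
    have hsymm : ∀ x z, e.symm (x, z) = Fin.cons x z := by
      intro x z
      simp [e, MeasurableEquiv.piFinSuccAbove_symm_apply, Fin.insertNthEquiv]
    let F : E × (Fin n → E) → ℝ := fun u => f (e.symm u)
    have hF : Measurable F := hf.comp e.symm.measurable
    have hFB : ∀ u, |F u| ≤ B := fun u => hB _
    have hFi : ∀ (μ : Measure (E × (Fin n → E))) [IsFiniteMeasure μ], Integrable F μ := fun μ _ =>
      Integrable.of_bound hF.aestronglyMeasurable B (Filter.Eventually.of_forall hFB)
    let h : (Fin n → E) → ℝ := fun z => ∫ x, F (x, z) ∂p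
    have hh : Measurable h :=
      (hF.stronglyMeasurable.integral_prod_left').measurable
    have hFx : ∀ z, Integrable (fun x => F (x, z)) p := fun z =>
      Integrable.of_bound (hF.comp (by fun_prop)).aestronglyMeasurable B
        (Filter.Eventually.of_forall fun _ => hFB _)
    have hhB : ∀ z, |h z| ≤ B := fun z => by
      have := norm_integral_le_of_norm_le_const (μ := p) (f := fun x => F (x, z)) (C := B)
        (Filter.Eventually.of_forall fun _ => hFB _)
      simpa using this
    have hhc : ∀ i z x, |h z - h (Function.update z i x)| ≤ c i.succ := by
      intro i z x
      simp only [h]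
      rw [← integral_sub (hFx _) (hFx _)]
      have := norm_integral_le_of_norm_le_const (μ := p)
        (f := fun y => F (y, z) - F (y, Function.update z i x)) (C := c i.succ)
        (Filter.Eventually.of_forall fun y => by
          simp only [F, hsymm, Fin.cons_update]
          exact hc _ _ _)
      simpa using this
    have IH := ih h hh B hhB (fun i => c i.succ) hhc
    have hmean : ∫ w, f w ∂(Measure.pi fun _ => p) = ∫ z, h z ∂Q := by
      rw [← he.symm.integral_comp', integral_prod_symm _ (hFi _)]
    set m := ∫ z, h z ∂Q
    rw [hmean, ← he.symm.integral_comp']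
    have hexpi : ∀ {Ω : Type _} [MeasurableSpace Ω] (P : Measure Ω) [IsFiniteMeasure P]
        (G : Ω → ℝ), Measurable G → (∀ u, |G u| ≤ B + B) →
        Integrable (fun u => exp (t * G u)) P := by
      intro Ω _ P _ G hG hGB
      refine Integrable.of_bound (by fun_prop) (exp (|t| * (B + B)))
        (Filter.Eventually.of_forall fun u => ?_)
      rw [norm_eq_abs, abs_exp]
      refine exp_le_exp.2 ((le_abs_self _).trans ?_)
      rw [abs_mul]
      exact mul_le_mul_of_nonneg_left (hGB u) (abs_nonneg _)
    have hm : |m| ≤ B := by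
      have := norm_integral_le_of_norm_le_const (μ := Q) (f := h) (C := B)
        (Filter.Eventually.of_forall hhB)
      simpa using this
    have I1 := hexpi (p.prod Q) (fun u => F u - m) (by fun_prop)
      (fun u => (abs_sub _ _).trans (add_le_add (hFB u) hm))
    have I2 : Integrable (fun z => exp (t * (h z - m))) Q :=
      hexpi Q (fun u => h u - m) (by fun_prop)
        (fun u => (abs_sub _ _).trans (add_le_add (hhB _) hm))
    change ∫ u, exp (t * (F u - m)) ∂(p.prod Q) ≤ _
    rw [integral_prod_symm _ I1]
    calc ∫ z, ∫ x, exp (t * (F (x, z) - m)) ∂p ∂Q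
        ≤ ∫ z, exp (t^2 * (c 0)^2/8) * exp (t * (h z - m)) ∂Q := by
          refine integral_mono I1.integral_prod_right (I2.const_mul _) fun z => ?_
          have H := hoeffding_osc p (fun x => F (x, z)) (hF.comp (by fun_prop)) (c 0) (by
            intro x y
            simp only [F, hsymm]
            have := hc 0 (Fin.cons x z) y
            simpa using this) t
          have : ∀ x, exp (t * (F (x, z) - m)) =
              exp (t * (F (x, z) - h z)) * exp (t * (h z - m)) := by
            intro x; rw [← exp_add]; congr 1; ring
          simp only [this]
          rw [integral_mul_const]
          exact mul_le_mul_of_nonneg_right H (exp_pos _).le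
      _ = exp (t^2 * (c 0)^2/8) * ∫ z, exp (t * (h z - m)) ∂Q := integral_const_mul _ _
      _ ≤ exp (t^2 * (c 0)^2/8) * exp (t^2 * (∑ i : Fin n, c i.succ ^ 2) / 8) :=
          mul_le_mul_of_nonneg_left IH (exp_pos _).le
      _ = _ := by
          rw [← exp_add, Fin.sum_univ_succ]; congr 1; ring

theorem pair_mp {E : Type*} [MeasurableSpace E] (p : Measure E) [IsProbabilityMeasure p] {N : ℕ}
    {i j : Fin N} (hij : i ≠ j) :
    MeasurePreserving (fun z : Fin N → E => (z i, z j)) (Measure.pi fun _ => p) (p.prod p) := by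
  refine ⟨by fun_prop, ?_⟩
  have h := (ProbabilityTheory.iIndepFun_pi (μ := fun _ : Fin N => p) (X := fun _ => id)
    (fun _ => aemeasurable_id)).indepFun hij
  simp only [id] at h
  rw [ProbabilityTheory.indepFun_iff_map_prod_eq_prod_map_map
    (measurable_pi_apply i).aemeasurable (measurable_pi_apply j).aemeasurable] at h
  rw [h]
  have e : ∀ k : Fin N, Measure.map (fun z : Fin N → E => z k) (Measure.pi fun _ => p) = p :=
    fun k => (measurePreserving_eval (fun _ : Fin N => p) k).map_eq
  rw [e, e]

theorem append_mp {E : Type*} [MeasurableSpace E] (p : Measure E) [IsProbabilityMeasure p]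
    (n m : ℕ) :
    MeasurePreserving (fun ω : (Fin n → E) × (Fin m → E) => Fin.append ω.1 ω.2)
      ((Measure.pi fun _ => p).prod (Measure.pi fun _ => p)) (Measure.pi fun _ => p) := by
  have hm : Measurable (fun ω : (Fin n → E) × (Fin m → E) => Fin.append ω.1 ω.2) := by
    refine measurable_pi_iff.2 fun i => ?_
    refine Fin.addCases (fun i => ?_) (fun i => ?_) i
    · simp only [Fin.append_left]; fun_prop
    · simp only [Fin.append_right]; fun_prop
  refine ⟨hm, ?_⟩
  symm
  refine Measure.pi_eq fun s hs => ?_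
  rw [Measure.map_apply hm (MeasurableSet.univ_pi hs)]
  have : (fun ω : (Fin n → E) × (Fin m → E) => Fin.append ω.1 ω.2) ⁻¹' (Set.univ.pi s) =
      (Set.univ.pi fun i => s (Fin.castAdd m i)) ×ˢ (Set.univ.pi fun i => s (Fin.natAdd n i)) := by
    ext ω
    simp only [Set.mem_preimage, Set.mem_pi, Set.mem_univ, true_imp_iff, Set.mem_prod]
    constructor
    · intro h
      exact ⟨fun i => by simpa using h (Fin.castAdd m i), fun i => by simpa using h (Fin.natAdd n i)⟩
    · rintro ⟨h1, h2⟩ i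
      refine Fin.addCases (fun i => ?_) (fun i => ?_) i
      · simpa using h1 i
      · simpa using h2 i
  rw [this, Measure.prod_prod, Measure.pi_pi, Measure.pi_pi, Fin.prod_univ_add]

theorem tail_bound {E : Type} [MeasurableSpace E] (K : E → E → ℝ)
    (hKmeas : Measurable (Function.uncurry K)) (hKsym : ∀ x y, K x y = K y x)
    (hKpsd : ∀ (m : ℕ) (z : Fin m → E) (a : Fin m → ℝ),
      0 ≤ ∑ i, ∑ j, a i * a j * K (z i) (z j))
    (hKbdd : ∀ x y, |K x y| ≤ 1)
    (p : Measure E) [IsProbabilityMeasure p] (N : ℕ) (a : Fin N → ℝ) (ha : ∑ i, a i = 0)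
    (hA : 0 < ∑ i, a i ^ 2) (L : ℝ) (hL : 0 ≤ L) :
    (Measure.pi fun _ : Fin N => p).real
      {z | 2 * (∑ i, a i ^ 2) * (1 + √L)^2 < ∑ i, ∑ j, a i * a j * K (z i) (z j)} ≤ exp (-L) := by
  obtain ⟨H, _, _, φ, hφ⟩ := feature_exists K hKsym hKpsd
  set A := ∑ i, a i ^ 2 with hAdef
  let T : (Fin N → E) → ℝ := fun z => ∑ i, ∑ j, a i * a j * K (z i) (z j)
  let S : (Fin N → E) → ℝ := fun z => √(T z)
  let μ : Measure (Fin N → E) := Measure.pi fun _ => p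
  have hKij : ∀ i j, Measurable (fun z : Fin N → E => K (z i) (z j)) := fun i j =>
    hKmeas.comp (f := fun z : Fin N → E => (z i, z j)) (by fun_prop)
  have hT : Measurable T := by
    refine Finset.measurable_sum _ fun i _ => Finset.measurable_sum _ fun j _ => ?_
    exact (hKij i j).const_mul _
  have hS : Measurable S := hT.sqrt
  have hφ1 : ∀ x, ‖φ x‖ ≤ 1 := by
    intro x
    have h1 := (abs_le.1 (hKbdd x x)).2
    rw [hφ, real_inner_self_eq_norm_sq] at h1
    nlinarith [norm_nonneg (φ x)]
  have hTn : ∀ z, T z = ‖∑ i, a i • φ (z i)‖^2 := by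
    intro z
    rw [← real_inner_self_eq_norm_sq, sum_inner]
    refine Finset.sum_congr rfl fun i _ => ?_
    rw [inner_sum]
    refine Finset.sum_congr rfl fun j _ => ?_
    rw [real_inner_smul_left, real_inner_smul_right, hφ]; ring
  have hSn : ∀ z, S z = ‖∑ i, a i • φ (z i)‖ := fun z => by
    simp only [S]; rw [hTn, sqrt_sq (norm_nonneg _)]
  have hSB : ∀ z, |S z| ≤ ∑ i, |a i| := by
    intro z
    rw [hSn, abs_norm]
    refine norm_sum_le_of_le _ fun i _ => ?_
    rw [norm_smul, norm_eq_abs]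
    exact mul_le_of_le_one_right (abs_nonneg _) (hφ1 _)
  have hSc : ∀ i z x, |S z - S (Function.update z i x)| ≤ 2 * |a i| := by
    intro i z x
    rw [hSn, hSn]
    refine (abs_norm_sub_norm_le _ _).trans ?_
    rw [← Finset.sum_sub_distrib, Finset.sum_eq_single i]
    · rw [Function.update_self, ← smul_sub, norm_smul, norm_eq_abs]
      have := norm_sub_le (φ (z i)) (φ x)
      nlinarith [hφ1 (z i), hφ1 x, abs_nonneg (a i)]
    · intro j _ hj
      rw [Function.update_of_ne hj, sub_self]
    · simp
  -- mean bound
  have hKi : ∀ i j, Integrable (fun z : Fin N → E => K (z i) (z j)) μ := fun i j =>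
    Integrable.of_bound (hKij i j).aestronglyMeasurable 1
      (Filter.Eventually.of_forall fun _ => hKbdd _ _)
  set κ := ∫ u, K u.1 u.2 ∂(p.prod p) with hκ
  have hκ1 : |κ| ≤ 1 := by
    have := norm_integral_le_of_norm_le_const (μ := p.prod p) (f := fun u => K u.1 u.2) (C := 1)
      (Filter.Eventually.of_forall fun _ => hKbdd _ _)
    simpa using this
  have hoff : ∀ i j, i ≠ j → ∫ z, K (z i) (z j) ∂μ = κ := by
    intro i j hij
    have h := pair_mp p hij
    rw [hκ, ← h.map_eq, integral_map h.measurable.aemeasurable]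
    rw [h.map_eq]
    exact hKmeas.aestronglyMeasurable
  have hterm : ∀ i j, ∫ z, a i * a j * K (z i) (z j) ∂μ ≤
      a i * a j * κ + (if i = j then 2 * a i ^ 2 else 0) := by
    intro i j
    rw [integral_const_mul]
    by_cases hij : i = j
    · subst hij
      have h1 : ∫ z, K (z i) (z i) ∂μ ≤ 1 := by
        have := norm_integral_le_of_norm_le_const (μ := μ) (f := fun z => K (z i) (z i)) (C := 1)
          (Filter.Eventually.of_forall fun _ => hKbdd _ _)
        refine (le_abs_self _).trans ?_
        simpa using this
      have h2 := (abs_le.1 hκ1).1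
      simp only [if_true]
      nlinarith [sq_nonneg (a i)]
    · rw [hoff i j hij, if_neg hij, add_zero]
  have hTi : ∀ i j, Integrable (fun z : Fin N → E => a i * a j * K (z i) (z j)) μ := fun i j =>
    (hKi i j).const_mul _
  have hET : ∫ z, T z ∂μ ≤ 2 * A := by
    simp only [T]
    rw [integral_finsetSum _ fun i _ => integrable_finsetSum _ fun j _ => hTi i j]
    calc _ = ∑ i, ∑ j, ∫ z, a i * a j * K (z i) (z j) ∂μ :=
          Finset.sum_congr rfl fun i _ => integral_finsetSum _ fun j _ => hTi i j
      _ ≤ ∑ i, ∑ j, (a i * a j * κ + (if i = j then 2 * a i ^ 2 else 0)) :=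
          Finset.sum_le_sum fun i _ => Finset.sum_le_sum fun j _ => hterm i j
      _ = (∑ i, a i) * (∑ j, a j) * κ + 2 * A := by
          simp only [Finset.sum_add_distrib, Finset.sum_ite_eq, Finset.mem_univ, if_true]
          rw [Finset.sum_mul_sum, Finset.sum_mul, hAdef, Finset.mul_sum]
          simp only [Finset.sum_mul]
      _ = 2 * A := by rw [ha]; ring
  have hSi : Integrable S μ := Integrable.of_bound hS.aestronglyMeasurable _
    (Filter.Eventually.of_forall hSB)
  have hTS : ∀ z, S z ^ 2 = T z := fun z => by rw [hSn, hTn]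
  have hTint : Integrable T μ :=
    integrable_finsetSum _ fun i _ => integrable_finsetSum _ fun j _ => hTi i j
  set m := ∫ z, S z ∂μ with hm
  have hmT : m ^ 2 ≤ ∫ z, T z ∂μ := by
    have h0 : 0 ≤ ∫ z, (S z - m)^2 ∂μ := integral_nonneg fun z => sq_nonneg _
    have : ∫ z, (S z - m)^2 ∂μ = ∫ z, T z ∂μ - m^2 := by
      have e : ∀ z, (S z - m)^2 = T z - ((2 * m) * S z - m^2) := fun z => by
        rw [← hTS]; ring
      simp only [e]
      have hI : Integrable (fun z => 2 * m * S z - m ^ 2) μ :=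
        (hSi.const_mul _).sub (integrable_const _)
      rw [integral_sub hTint hI,
        integral_sub (hSi.const_mul _) (integrable_const _), integral_const_mul, ← hm]
      simp
      ring
    linarith
  have hm2 : m ≤ √(2 * A) := le_sqrt_of_sq_le (hmT.trans hET)
  -- Chernoff
  let s := √(2 * A) * √L
  have hs0 : 0 ≤ s := by positivity
  have hs2 : s ^ 2 = 2 * A * L := by
    simp only [s]; rw [mul_pow, sq_sqrt (by positivity), sq_sqrt hL]
  let t := s / A
  have ht : 0 ≤ t := by positivity
  have hmc := mcdiarmid p t N S hS _ hSB (fun i => 2 * |a i|) hSc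
  have hX : Integrable (fun z => exp (t * (S z - m))) μ := by
    refine Integrable.of_bound (by fun_prop) (exp (t * ((∑ i, |a i|) - m)))
        (Filter.Eventually.of_forall fun u => ?_)
    rw [norm_eq_abs, abs_exp]
    refine exp_le_exp.2 (mul_le_mul_of_nonneg_left ?_ ht)
    linarith [(abs_le.1 (hSB u)).2]
  have hch := ProbabilityTheory.measure_ge_le_exp_mul_mgf (μ := μ) (X := fun z => S z - m) s ht hX
  refine (measureReal_mono (fun z hz => ?_)).trans (hch.trans ?_)
  · have hz' : 2 * A * (1 + √L)^2 < T z := hz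
    have : √(2 * A) * (1 + √L) < S z := by
      refine lt_sqrt_of_sq_lt ?_
      rwa [mul_pow, sq_sqrt (by positivity)]
    show s ≤ S z - m
    simp only [s]
    linarith
  · rw [ProbabilityTheory.mgf]
    refine (mul_le_mul_of_nonneg_left hmc (exp_pos _).le).trans ?_
    rw [← exp_add, exp_le_exp]
    have : ∑ i, (2 * |a i|)^2 = 4 * A := by
      rw [hAdef, Finset.mul_sum]
      refine Finset.sum_congr rfl fun i _ => ?_
      rw [mul_pow, sq_abs]; norm_num
    rw [this]
    have h1 : t * s = 2 * L := by
      simp only [t]; rw [div_mul_eq_mul_div, ← sq, hs2]; field_simp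
    have h2 : t^2 * A = 2 * L := by
      simp only [t]; rw [div_pow, hs2]; field_simp
    linarith

theorem zero_bound {E : Type} [MeasurableSpace E] (K : E → E → ℝ)
    (hKmeas : Measurable (Function.uncurry K))
    (hKbdd : ∀ x y, |K x y| ≤ 1)
    (p : Measure E) [IsProbabilityMeasure p] (h0 : ∫ x, ∫ y, (K x y)^2 ∂p ∂p ≤ 0)
    (N : ℕ) (a : Fin N → ℝ) :
    ∀ᵐ z ∂(Measure.pi fun _ : Fin N => p),
      ∑ i, ∑ j, a i * a j * K (z i) (z j) ≤ ∑ i, a i ^ 2 := by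
  have hi : Integrable (fun u : E × E => (K u.1 u.2)^2) (p.prod p) :=
    Integrable.of_bound (hKmeas.pow_const 2).aestronglyMeasurable 1
      (Filter.Eventually.of_forall fun u => by
        have := hKbdd u.1 u.2
        rw [norm_eq_abs, abs_pow]
        exact pow_le_one₀ (abs_nonneg _) this)
  have hae : ∀ᵐ u ∂(p.prod p), K u.1 u.2 = 0 := by
    rw [← integral_prod (fun u : E × E => (K u.1 u.2)^2) hi] at h0
    have := (integral_eq_zero_iff_of_nonneg (fun u => sq_nonneg _) hi).1
      (le_antisymm h0 (integral_nonneg fun u => sq_nonneg _))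
    filter_upwards [this] with u hu
    simpa using hu
  have h2 : ∀ i j : Fin N, i ≠ j → ∀ᵐ z ∂(Measure.pi fun _ : Fin N => p), K (z i) (z j) = 0 :=
    fun i j hij => (pair_mp p hij).quasiMeasurePreserving.ae hae
  have h3 : ∀ᵐ z ∂(Measure.pi fun _ : Fin N => p), ∀ i j : Fin N, i ≠ j → K (z i) (z j) = 0 := by
    simp only [ae_all_iff]
    exact h2
  filter_upwards [h3] with z hz
  refine Finset.sum_le_sum fun i _ => ?_
  rw [Finset.sum_eq_single i]
  · have := (abs_le.1 (hKbdd (z i) (z i))).2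
    nlinarith [sq_nonneg (a i)]
  · intro j _ hj
    rw [hz i j (Ne.symm hj), mul_zero]
  · simp

/-- Theorem 3.1, Type-I error part: under `H₀ : p = q`, with threshold
`t_thres = 4/(cn) + 4λ₁√(ν/(cn))`, `λ₁ = √(8 log(4/α))`, if `n > λ₁²/(9νc)` then
`Pr[T̂ > t_thres] ≤ α`. -/
theorem mmd_type_I_error
    {d : ℕ} (𝒳 : Set (EuclideanSpace ℝ (Fin d))) (h𝒳 : MeasurableSet 𝒳)
    (K : 𝒳 → 𝒳 → ℝ)
    (hKmeas : Measurable (Function.uncurry K))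
    (hKsym : ∀ x y, K x y = K y x)
    (hKpsd : ∀ (m : ℕ) (z : Fin m → 𝒳) (a : Fin m → ℝ),
      0 ≤ ∑ i, ∑ j, a i * a j * K (z i) (z j))
    (hKbdd : ∀ x y, |K x y| ≤ 1)
    (p q : Measure 𝒳) [IsProbabilityMeasure p] [IsProbabilityMeasure q]
    (ν : ℝ) (hν1 : ν ≤ 1)
    (hνpp : ∫ x, ∫ y, (K x y)^2 ∂p ∂p ≤ ν)
    (hνpq : ∫ x, ∫ y, (K x y)^2 ∂q ∂p ≤ ν)
    (hνqq : ∫ x, ∫ y, (K x y)^2 ∂q ∂q ≤ ν)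
    (nX nY : ℕ) (c : ℝ) (hc : 0 < c) (hc1 : c < 1)
    (hbalX : c * ((nX + nY : ℕ) : ℝ) + 1 ≤ (nX : ℝ))
    (hbalY : c * ((nX + nY : ℕ) : ℝ) + 1 ≤ (nY : ℝ))
    (hH0 : p = q)
    (α : ℝ) (hα : 0 < α) (hα1 : α < 1)
    (hn : ((nX + nY : ℕ) : ℝ) > (Real.sqrt (8 * Real.log (4/α)))^2 / (9 * ν * c)) :
    ((Measure.pi fun _ : Fin nX => p).prod (Measure.pi fun _ : Fin nY => q))
      {ω : (Fin nX → 𝒳) × (Fin nY → 𝒳) |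
        mmdStat K nX nY ω >
          4/(c * ((nX + nY : ℕ) : ℝ))
          + 4 * Real.sqrt (8 * Real.log (4/α))
              * Real.sqrt (ν/(c * ((nX + nY : ℕ) : ℝ)))}
      ≤ ENNReal.ofReal α := by
  subst hH0
  set n : ℝ := ((nX + nY : ℕ) : ℝ) with hndef
  have hn0 : 0 ≤ n := Nat.cast_nonneg _
  have hX1 : (1:ℝ) ≤ nX := by nlinarith
  have hY1 : (1:ℝ) ≤ nY := by nlinarith
  have hnpos : 0 < n := by
    rw [hndef]; push_cast; linarith
  have hcn : 0 < c * n := mul_pos hc hnpos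
  let a : Fin (nX + nY) → ℝ := Fin.append (fun _ => 1 / (nX:ℝ)) (fun _ => - (1 / (nY:ℝ)))
  have hX0 : (nX:ℝ) ≠ 0 := by linarith
  have hY0 : (nY:ℝ) ≠ 0 := by linarith
  have ha : ∑ i, a i = 0 := by
    simp [a, Fin.sum_univ_add, hX0, hY0]
  have hA : ∑ i, a i ^ 2 = 1 / (nX:ℝ) + 1 / (nY:ℝ) := by
    simp [a, Fin.sum_univ_add]
    field_simp
  have hA0 : 0 < ∑ i, a i ^ 2 := by rw [hA]; positivity
  have hAle : ∑ i, a i ^ 2 ≤ 2 / (c * n) := by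
    rw [hA]
    have h1 : 1 / (nX:ℝ) ≤ 1 / (c * n) := one_div_le_one_div_of_le hcn (by linarith)
    have h2 : 1 / (nY:ℝ) ≤ 1 / (c * n) := one_div_le_one_div_of_le hcn (by linarith)
    calc _ ≤ 1 / (c * n) + 1 / (c * n) := add_le_add h1 h2
      _ = _ := by ring
  have hstat : ∀ ω : (Fin nX → 𝒳) × (Fin nY → 𝒳), mmdStat K nX nY ω =
      ∑ i, ∑ j, a i * a j * K (Fin.append ω.1 ω.2 i) (Fin.append ω.1 ω.2 j) := by
    intro ω
    have hsw : ∑ i, ∑ j, K (ω.2 i) (ω.1 j) = ∑ i, ∑ j, K (ω.1 i) (ω.2 j) := by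
      rw [Finset.sum_comm]
      exact Finset.sum_congr rfl fun i _ => Finset.sum_congr rfl fun j _ => hKsym _ _
    simp only [a, Fin.sum_univ_add, Fin.append_left, Fin.append_right, Finset.sum_add_distrib,
      ← Finset.mul_sum, hsw, mmdStat]
    field_simp
    ring
  have hmp := append_mp p nX nY
  set thr := 4/(c * n) + 4 * Real.sqrt (8 * Real.log (4/α)) * Real.sqrt (ν/(c * n)) with hthr
  have hν0 : 0 ≤ ν := le_trans (integral_nonneg fun x => integral_nonneg fun y => sq_nonneg _) hνpp
  have hsub : (Measure.pi fun _ : Fin nX => p).prod (Measure.pi fun _ : Fin nY => p)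
      {ω | mmdStat K nX nY ω > thr} =
      (Measure.pi fun _ : Fin (nX + nY) => p)
        {z | thr < ∑ i, ∑ j, a i * a j * K (z i) (z j)} := by
    rw [← hmp.measure_preimage]
    · congr 1
      ext ω
      simp only [Set.mem_ofPred_eq, Set.mem_preimage, hstat, gt_iff_lt]
    · refine MeasurableSet.nullMeasurableSet (measurableSet_lt measurable_const ?_)
      refine Finset.measurable_sum _ fun i _ => Finset.measurable_sum _ fun j _ => ?_
      exact (hKmeas.comp (f := fun z : Fin (nX + nY) → 𝒳 => (z i, z j)) (by fun_prop)).const_mul _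
  rw [hsub]
  rcases hν0.eq_or_lt with hν | hν
  · rw [← hν] at hνpp
    have hz := zero_bound K hKmeas hKbdd p hνpp (nX + nY) a
    have : (Measure.pi fun _ : Fin (nX + nY) => p)
        {z | thr < ∑ i, ∑ j, a i * a j * K (z i) (z j)} = 0 := by
      refine measure_mono_null (fun z hz => ?_) hz
      simp only [Set.mem_compl_iff, Set.mem_ofPred_eq, not_le] at hz ⊢
      refine lt_of_le_of_lt ?_ hz
      refine hAle.trans ?_
      rw [hthr]
      have h1 : 2 / (c * n) ≤ 4 / (c * n) := by gcongr; norm_num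
      have h2 : 0 ≤ 4 * Real.sqrt (8 * Real.log (4/α)) * Real.sqrt (ν/(c * n)) := by positivity
      linarith
    rw [this]
    exact zero_le
  · have hlogα : Real.log α < 0 := Real.log_neg hα hα1
    let L := - Real.log α
    have hL : 0 ≤ L := by simp only [L]; linarith
    have hlog4 : 1 ≤ Real.log 4 := by
      rw [Real.le_log_iff_exp_le (by norm_num)]
      linarith [Real.exp_one_lt_d9]
    have hl : Real.log (4/α) = Real.log 4 + L := by
      rw [Real.log_div (by norm_num) hα.ne']; simp only [L]; ring
    have key : 2 * (∑ i, a i ^ 2) * (1 + √L)^2 ≤ thr := by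
      have hlam : 0 ≤ 8 * Real.log (4/α) := by rw [hl]; linarith
      set lam := Real.sqrt (8 * Real.log (4/α)) with hlamdef
      have hlam0 : 0 ≤ lam := Real.sqrt_nonneg _
      have hlam2 : lam ^ 2 = 8 * Real.log (4/α) := Real.sq_sqrt hlam
      have hge : lam / (3 * (c * n)) ≤ Real.sqrt (ν/(c * n)) := by
        refine Real.le_sqrt_of_sq_le ?_
        have h9 : lam^2 < n * (9 * ν * c) := by
          rwa [gt_iff_lt, div_lt_iff₀ (by positivity)] at hn
        rw [div_pow, div_le_div_iff₀ (by positivity) hcn]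
        have := mul_le_mul_of_nonneg_right h9.le hcn.le
        nlinarith
      have h1 : 4 / (c * n) + 4 / 3 * (8 * (Real.log 4 + L)) / (c * n) ≤ thr := by
        have := mul_le_mul_of_nonneg_left hge (show 0 ≤ 4 * lam by positivity)
        have e : 4 * lam * (lam / (3 * (c * n))) = 4 / 3 * (8 * (Real.log 4 + L)) / (c * n) := by
          rw [← hl, ← hlam2]; field_simp
        rw [hthr, ← e]; linarith
      refine le_trans ?_ h1
      have h2 : (1 + √L)^2 ≤ 2 + 2 * L := by
        nlinarith [sq_nonneg (1 - √L), Real.sq_sqrt hL]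
      calc 2 * (∑ i, a i ^ 2) * (1 + √L)^2 ≤ 2 * (2 / (c * n)) * (2 + 2 * L) := by gcongr
        _ = (8 + 8 * L) / (c * n) := by ring
        _ ≤ (4 + 4 / 3 * (8 * (Real.log 4 + L))) / (c * n) := by
            exact div_le_div_of_nonneg_right (by linarith) hcn.le
        _ = _ := by ring
    have hb := tail_bound K hKmeas hKsym hKpsd hKbdd p (nX + nY) a ha hA0 L hL
    have hexp : Real.exp (-L) = α := by simp only [L, neg_neg]; exact Real.exp_log hα
    rw [hexp] at hb
    refine (measure_mono (fun z hz => ?_)).trans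
      ((ENNReal.le_ofReal_iff_toReal_le (measure_ne_top _ _) hα.le).2 hb)
    exact lt_of_le_of_lt key hz
end

section
/- (Theorem 3.1, power part.) Assume the alternative hypothesis p ≠ q with δ_K > 0. Let α_level ∈ (0,1), define λ₁ = √(8 log(4/α_level)) and the threshold t_thres = 4/(c n) + 4 λ₁ √(ν/(c n)). If for some λ₂ > 0, n > (1/c) · max{ max{λ₁, λ₂}²/(9 ν), 8/δ_K, (ν/δ_K²)·(8(λ₁ + λ₂))² }, then the probability (under the product law p^{⊗n_X} ⊗ q^{⊗n_Y}) that T̂ ≤ t_thres is at most 3 e^{−λ₂²/8}. -/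
open MeasureTheory Real
open scoped BigOperators ENNReal

/-- The squared population MMD `δ_K = ∬ K d(p−q)d(p−q)`, written out as
`∬K dp dp − 2∬K dp dq + ∬K dq dq`. -/
noncomputable def deltaK {𝒳 : Type*} [MeasurableSpace 𝒳] (K : 𝒳 → 𝒳 → ℝ)
    (p q : Measure 𝒳) : ℝ :=
  (∫ x, ∫ y, K x y ∂p ∂p) - 2 * (∫ x, ∫ y, K x y ∂q ∂p) + (∫ x, ∫ y, K x y ∂q ∂q)

open ProbabilityTheory

lemma aux_exp (u : ℝ) (hu : u ≤ 3/2) : exp u ≤ 1 + u + u^2 := by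
  rcases le_total u (-1) with h | h
  · have : exp u ≤ 1 := exp_le_one_iff.2 (by linarith)
    nlinarith
  rcases le_total u 1 with h1 | h1
  · have := Real.abs_exp_sub_one_sub_id_le (abs_le.2 ⟨h, h1⟩)
    have := (abs_le.1 this).2
    linarith
  · obtain ⟨v, rfl⟩ : ∃ v, u = 1 + v := ⟨u - 1, by ring⟩
    have hv : 0 ≤ v := by linarith
    have hv2 : v ≤ 1/2 := by linarith
    have h3 := Real.exp_bound' hv (by linarith) (n := 3) (by norm_num)
    simp [Finset.sum_range_succ, Nat.factorial] at h3
    rw [exp_add]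
    have he := Real.exp_one_lt_d9
    have hp := exp_pos v
    have : exp 1 * exp v ≤ 2.7182818286 * (1 + v + v ^ 2 / 2 + v ^ 3 * (3 + 1) / (3 * 2 * 3)) :=
      mul_le_mul (by linarith) (by linarith) hp.le (by norm_num)
    have e2 : v^2 ≤ v * (1/2) := by nlinarith
    have e3 : v^3 ≤ v^2 * (1/2) := by nlinarith [sq_nonneg v]
    nlinarith

lemma aux_perm1 {n : ℕ} (f : Fin n → ℝ) (k : Fin n) :
    (n:ℝ) * ∑ σ : Equiv.Perm (Fin n), f (σ k) = (Fintype.card (Equiv.Perm (Fin n))) * ∑ i, f i := by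
  have h : ∀ j : Fin n, ∑ σ : Equiv.Perm (Fin n), f (σ j) = ∑ σ : Equiv.Perm (Fin n), f (σ k) := by
    intro j
    rw [← Equiv.sum_comp (Equiv.mulRight (Equiv.swap j k))]
    simp
  have h2 : ∑ j : Fin n, ∑ σ : Equiv.Perm (Fin n), f (σ j) = n * ∑ σ : Equiv.Perm (Fin n), f (σ k) := by
    rw [Finset.sum_congr rfl (fun j _ => h j)]; simp
  rw [← h2, Finset.sum_comm, Finset.sum_congr rfl (fun (σ : Equiv.Perm (Fin n)) _ => Equiv.sum_comp σ f)]
  simp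

lemma aux_perm2 {n : ℕ} (f : Fin n → Fin n → ℝ) (a b : Fin n) (hab : a ≠ b) :
    (n:ℝ) * (n - 1) * ∑ σ : Equiv.Perm (Fin n), f (σ a) (σ b)
      = (Fintype.card (Equiv.Perm (Fin n))) * (∑ i, ∑ j, f i j - ∑ i, f i i) := by
  have h : ∀ c d : Fin n, c ≠ d → ∑ σ : Equiv.Perm (Fin n), f (σ c) (σ d) = ∑ σ : Equiv.Perm (Fin n), f (σ a) (σ b) := by
    intro c d hcd
    obtain ⟨τ, h1, h2⟩ : ∃ τ : Equiv.Perm (Fin n), τ c = a ∧ τ d = b := by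
      refine ⟨Equiv.swap (Equiv.swap c a d) b * Equiv.swap c a, ?_, ?_⟩
      · simp only [Equiv.Perm.mul_apply, Equiv.swap_apply_left]
        refine Equiv.swap_apply_of_ne_of_ne ?_ hab
        intro h
        apply hcd
        apply (Equiv.swap c a).injective
        rw [← h]; simp
      · simp
    rw [← Equiv.sum_comp (Equiv.mulRight τ) (fun σ : Equiv.Perm (Fin n) => f (σ c) (σ d))]
    simp [h1, h2]
  have key : ∀ g : Fin n → Fin n → ℝ, ∑ i, ∑ j, g i j - ∑ i, g i i = ∑ x ∈ (Finset.univ : Finset (Fin n)).offDiag, g x.1 x.2 := by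
    intro g
    have : ∑ x ∈ (Finset.univ : Finset (Fin n)).diag, g x.1 x.2 = ∑ i, g i i := by
      simp [Finset.sum_diag]
    rw [← this, ← Finset.sum_product', ← Finset.diag_union_offDiag, Finset.sum_union (Finset.disjoint_diag_offDiag _)]
    ring
  have hc : ((Finset.univ : Finset (Fin n)).offDiag.card : ℝ) = n * (n - 1) := by
    rw [Finset.offDiag_card]
    simp
    rw [Nat.cast_sub (Nat.le_mul_self n)]
    push_cast; ring
  have h2 : ∑ x ∈ (Finset.univ : Finset (Fin n)).offDiag, ∑ σ : Equiv.Perm (Fin n), f (σ x.1) (σ x.2) = n * (n-1) * ∑ σ : Equiv.Perm (Fin n), f (σ a) (σ b) := by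
    rw [Finset.sum_congr rfl (fun j hj => h j.1 j.2 (by simpa using hj)), Finset.sum_const, nsmul_eq_mul, hc]
  rw [← h2, Finset.sum_comm]
  have : ∀ σ : Equiv.Perm (Fin n), ∑ x ∈ (Finset.univ : Finset (Fin n)).offDiag, f (σ x.1) (σ x.2)
     = ∑ i, ∑ j, f i j - ∑ i, f i i := by
    intro σ
    rw [← key (fun i j => f (σ i) (σ j))]
    congr 1
    · rw [← Equiv.sum_comp σ (fun i => ∑ j, f i j)]
      exact Finset.sum_congr rfl (fun i _ => Equiv.sum_comp σ (f (σ i)))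
    · exact Equiv.sum_comp σ (fun i => f i i)
  rw [Finset.sum_congr rfl (fun σ _ => this σ)]
  rw [Finset.sum_const, nsmul_eq_mul, Finset.card_univ]

lemma aux_int {E : Type*} [MeasurableSpace E] {ι : Type*} [Fintype ι] (μ : ι → Measure E)
    [∀ i, IsProbabilityMeasure (μ i)] (P Q : Measure E) [IsProbabilityMeasure P]
    [IsProbabilityMeasure Q] (m : ℕ) (a b : Fin m → ι)
    (hinj : Function.Injective (Sum.elim a b)) (ha : ∀ k, μ (a k) = P) (hb : ∀ k, μ (b k) = Q)
    (g : E → E → ℝ) (hg : Measurable (Function.uncurry g)) (C : ℝ) (hC : ∀ x y, |g x y| ≤ C) :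
    ∫ ω, ∏ k, g (ω (a k)) (ω (b k)) ∂(Measure.pi μ) = (∫ x, ∫ y, g x y ∂Q ∂P) ^ m := by
  let M : Fin m ⊕ Fin m → Measure E := Sum.elim (fun _ => P) (fun _ => Q)
  have : ∀ i, IsProbabilityMeasure (M i) := by
    rintro (i | i)
    · exact inferInstanceAs (IsProbabilityMeasure P)
    · exact inferInstanceAs (IsProbabilityMeasure Q)
  have hind : iIndepFun (fun i (ω : ι → E) => ω i) (Measure.pi μ) :=
    iIndepFun_pi (X := fun i (x : E) => x) (fun i => aemeasurable_id)
  have hind2 := hind.precomp hinj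
  have hmap := (iIndepFun_iff_map_fun_eq_pi_map
    (fun i => (measurable_pi_apply (Sum.elim a b i)).aemeasurable)).1 hind2
  have hM : (fun i => (Measure.pi μ).map (fun ω : ι → E => ω (Sum.elim a b i))) = M := by
    funext i
    have := (measurePreserving_eval μ (Sum.elim a b i)).map_eq
    refine this.trans ?_
    rcases i with i | i
    · exact ha i
    · exact hb i
  rw [hM] at hmap
  have hmeas : Measurable (fun (ω : ι → E) (i : Fin m ⊕ Fin m) => ω (Sum.elim a b i)) := by
    fun_prop
  have hgm : Measurable (fun z : (Fin m → E) × (Fin m → E) => ∏ k, g (z.1 k) (z.2 k)) := by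
    refine Finset.measurable_prod _ (fun k _ => ?_)
    exact hg.comp (f := fun z : (Fin m → E) × (Fin m → E) => (z.1 k, z.2 k)) (by fun_prop)
  have hgm2 : Measurable (fun z : (Fin m ⊕ Fin m) → E => ∏ k, g (z (.inl k)) (z (.inr k))) := by
    refine Finset.measurable_prod _ (fun k _ => ?_)
    exact hg.comp (f := fun z : (Fin m ⊕ Fin m) → E => (z (.inl k), z (.inr k))) (by fun_prop)
  have e1 : ∫ ω, ∏ k, g (ω (a k)) (ω (b k)) ∂(Measure.pi μ)
      = ∫ z, ∏ k, g (z (.inl k)) (z (.inr k)) ∂(Measure.pi M) := by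
    rw [← hmap, integral_map hmeas.aemeasurable hgm2.aestronglyMeasurable]
    rfl
  have mp := measurePreserving_sumPiEquivProdPi (X := fun _ => E) M
  have e2 : ∫ z, ∏ k, g (z (.inl k)) (z (.inr k)) ∂(Measure.pi M)
      = ∫ z, ∏ k, g (z.1 k) (z.2 k) ∂((Measure.pi fun _ : Fin m => P).prod (Measure.pi fun _ : Fin m => Q)) :=
    mp.integral_comp' (fun z : (Fin m → E) × (Fin m → E) => ∏ k, g (z.1 k) (z.2 k))
  have hint : Integrable (fun z : (Fin m → E) × (Fin m → E) => ∏ k, g (z.1 k) (z.2 k))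
      ((Measure.pi fun _ : Fin m => P).prod (Measure.pi fun _ : Fin m => Q)) := by
    refine Integrable.of_bound hgm.aestronglyMeasurable (C ^ m) (Filter.Eventually.of_forall ?_)
    intro z
    rw [Real.norm_eq_abs, Finset.abs_prod]
    refine (Finset.prod_le_prod (fun _ _ => abs_nonneg _) (fun k _ => hC _ _)).trans ?_
    simp
  rw [e1, e2, integral_prod _ hint]
  have e3 : ∀ x : Fin m → E, ∫ y, ∏ k, g (x k) (y k) ∂(Measure.pi fun _ : Fin m => Q)
      = ∏ k, ∫ y, g (x k) y ∂Q := fun x =>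
    integral_fintype_prod_eq_prod (fun k y => g (x k) y)
  simp_rw [e3]
  rw [integral_fintype_prod_eq_prod (μ := fun _ : Fin m => P) (fun k x => ∫ y, g x y ∂Q)]
  simp

lemma aux_mgf {E : Type*} [MeasurableSpace E] (P Q : Measure E) [IsProbabilityMeasure P]
    [IsProbabilityMeasure Q] (f : E → E → ℝ) (hf : Measurable (Function.uncurry f))
    (hb : ∀ x y, |f x y| ≤ 1) (ν t : ℝ) (hν : ∫ x, ∫ y, (f x y)^2 ∂Q ∂P ≤ ν)
    (ht0 : 0 ≤ t) (ht : t ≤ 3/2) :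
    ∫ x, ∫ y, exp (t * f x y) ∂Q ∂P ≤ exp (t * (∫ x, ∫ y, f x y ∂Q ∂P) + t^2 * ν) := by
  have bi : ∀ g : E × E → ℝ, Measurable g → (C : ℝ) → (∀ z, |g z| ≤ C) → Integrable g (P.prod Q) :=
    fun g hg C h => Integrable.of_bound hg.aestronglyMeasurable C (Filter.Eventually.of_forall h)
  have i1 : Integrable (fun z : E × E => f z.1 z.2) (P.prod Q) := bi _ hf 1 (fun z => hb _ _)
  have i2 : Integrable (fun z : E × E => (f z.1 z.2)^2) (P.prod Q) :=
    bi _ (hf.pow_const 2) 1 (fun z => by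
      have := hb z.1 z.2
      rw [abs_of_nonneg (sq_nonneg _)]
      rw [← sq_abs]; nlinarith [abs_nonneg (f z.1 z.2)])
  have hle : ∀ x y, t * f x y ≤ 3/2 := fun x y => by
    have := (abs_le.1 (hb x y)).2
    nlinarith
  have i3 : Integrable (fun z : E × E => exp (t * f z.1 z.2)) (P.prod Q) :=
    bi _ (measurable_exp.comp (hf.const_mul t)) (exp (3/2)) (fun z => by
      rw [abs_of_pos (exp_pos _)]
      exact exp_le_exp.2 (hle _ _))
  rw [← integral_prod (fun z : E × E => (f z.1 z.2)^2) i2] at hν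
  rw [← integral_prod (fun z : E × E => exp (t * f z.1 z.2)) i3,
    ← integral_prod (fun z : E × E => f z.1 z.2) i1]
  have : ∫ z, exp (t * f z.1 z.2) ∂(P.prod Q)
      ≤ ∫ z, (1 + t * f z.1 z.2 + t^2 * (f z.1 z.2)^2) ∂(P.prod Q) := by
    refine integral_mono i3 (((integrable_const 1).add (i1.const_mul t)).add (i2.const_mul (t^2))) ?_
    intro z
    have := aux_exp _ (hle z.1 z.2)
    simpa [mul_pow] using this
  have i12 : Integrable (fun z : E × E => 1 + t * f z.1 z.2) (P.prod Q) :=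
    (integrable_const 1).add (i1.const_mul t)
  rw [integral_add i12 (i2.const_mul (t^2)),
    integral_add (integrable_const 1) (i1.const_mul t), integral_const_mul, integral_const_mul] at this
  simp at this
  refine this.trans ?_
  have h2 := add_one_le_exp (t * (∫ z, f z.1 z.2 ∂(P.prod Q)) + t^2 * ν)
  nlinarith [mul_le_mul_of_nonneg_left hν (sq_nonneg t)]

lemma aux_bern {E : Type*} [MeasurableSpace E] {ι Γ : Type*} [Fintype ι] [Fintype Γ] [Nonempty Γ]
    (μ : ι → Measure E)
    [∀ i, IsProbabilityMeasure (μ i)] (P Q : Measure E) [IsProbabilityMeasure P]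
    [IsProbabilityMeasure Q] (m : ℕ) (hm : 0 < m) (a b : Γ → Fin m → ι)
    (hinj : ∀ g, Function.Injective (Sum.elim (a g) (b g))) (ha : ∀ g k, μ (a g k) = P)
    (hb : ∀ g k, μ (b g k) = Q)
    (f : E → E → ℝ) (hf : Measurable (Function.uncurry f))
    (hbd : ∀ x y, |f x y| ≤ 1) (ν s : ℝ) (hν0 : 0 < ν) (hν : ∫ x, ∫ y, (f x y)^2 ∂Q ∂P ≤ ν)
    (hs0 : 0 ≤ s) (hs : s ≤ 3 * ν) (S : (ι → E) → ℝ)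
    (hS : ∀ ω, (m : ℝ) * (Fintype.card Γ : ℝ) * S ω = ∑ g, ∑ k, f (ω (a g k)) (ω (b g k))) :
    (Measure.pi μ) {ω | (∫ x, ∫ y, f x y ∂Q ∂P) + s ≤ S ω}
      ≤ ENNReal.ofReal (exp (-((m : ℝ) * s^2 / (4 * ν)))) := by
  set t := s / (2 * ν) with ht
  have ht0 : 0 ≤ t := by positivity
  have ht1 : t ≤ 3/2 := by rw [ht, div_le_iff₀ (by positivity)]; linarith
  have hst : s = 2 * ν * t := by rw [ht]; field_simp
  have hm' : (0:ℝ) < m := by exact_mod_cast hm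
  have hG : (0:ℝ) < Fintype.card Γ := by exact_mod_cast Fintype.card_pos
  have hfm : ∀ g k, Measurable (fun ω : ι → E => f (ω (a g k)) (ω (b g k))) := fun g k =>
    hf.comp (f := fun ω : ι → E => (ω (a g k), ω (b g k))) (by fun_prop)
  have hSm : Measurable S := by
    have : S = fun ω => ((m : ℝ) * (Fintype.card Γ : ℝ))⁻¹ * ∑ g, ∑ k, f (ω (a g k)) (ω (b g k)) := by
      funext ω
      rw [← hS]; field_simp
    rw [this]
    exact (Finset.measurable_sum _ (fun g _ => Finset.measurable_sum _ (fun k _ => hfm g k))).const_mul _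
  have hpt : ∀ ω, exp (m * t * S ω) ≤
      ∑ g : Γ, (Fintype.card Γ : ℝ)⁻¹ * ∏ k, exp (t * f (ω (a g k)) (ω (b g k))) := by
    intro ω
    have h := convexOn_exp.map_sum_le (t := (Finset.univ : Finset Γ)) (w := fun _ => (Fintype.card Γ : ℝ)⁻¹)
      (p := fun g => ∑ k, t * f (ω (a g k)) (ω (b g k))) (fun _ _ => by positivity)
      (by simp) (fun _ _ => Set.mem_univ _)
    simp only [smul_eq_mul, exp_sum] at h
    refine le_trans (le_of_eq ?_) h
    rw [← exp_sum]
    congr 1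
    simp_rw [← Finset.mul_sum]
    rw [← hS]
    field_simp
  have hint : ∀ g, Integrable (fun ω => ∏ k, exp (t * f (ω (a g k)) (ω (b g k)))) (Measure.pi μ) := by
    intro g
    refine Integrable.of_bound (Finset.measurable_prod _ (fun k _ =>
      measurable_exp.comp ((hfm g k).const_mul t))).aestronglyMeasurable (∏ k : Fin m, exp t)
      (Filter.Eventually.of_forall fun ω => ?_)
    rw [Real.norm_eq_abs, Finset.abs_prod]
    refine Finset.prod_le_prod (fun _ _ => abs_nonneg _) (fun k _ => ?_)
    rw [abs_of_pos (exp_pos _)]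
    refine exp_le_exp.2 ?_
    have := (abs_le.1 (hbd (ω (a g k)) (ω (b g k)))).2
    nlinarith
  have hint2 : Integrable (fun ω => ∑ g : Γ, (Fintype.card Γ : ℝ)⁻¹ *
      ∏ k, exp (t * f (ω (a g k)) (ω (b g k)))) (Measure.pi μ) :=
    integrable_finsetSum _ (fun g _ => (hint g).const_mul _)
  have hintS : Integrable (fun ω => exp (m * t * S ω)) (Measure.pi μ) := by
    refine hint2.mono' (measurable_exp.comp (hSm.const_mul _)).aestronglyMeasurable
      (Filter.Eventually.of_forall fun ω => ?_)
    rw [Real.norm_eq_abs, abs_of_pos (exp_pos _)]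
    exact hpt ω
  set I := ∫ x, ∫ y, f x y ∂Q ∂P with hI
  have hmgf : mgf S (Measure.pi μ) (m * t) ≤ exp (m * (t * I + t^2 * ν)) := by
    rw [mgf]
    refine (integral_mono hintS hint2 hpt).trans ?_
    rw [integral_finsetSum _ (fun g _ => (hint g).const_mul _)]
    have : ∀ g ∈ (Finset.univ : Finset Γ), ∫ ω, (Fintype.card Γ : ℝ)⁻¹ * ∏ k, exp (t * f (ω (a g k)) (ω (b g k))) ∂(Measure.pi μ)
        ≤ (Fintype.card Γ : ℝ)⁻¹ * exp (m * (t * I + t^2 * ν)) := by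
      intro g _
      rw [integral_const_mul, aux_int μ P Q m (a g) (b g) (hinj g) (ha g) (hb g)
        (fun x y => exp (t * f x y)) (measurable_exp.comp (hf.const_mul t)) (exp t) (fun x y => by
          rw [abs_of_pos (exp_pos _)]
          refine exp_le_exp.2 ?_
          have := (abs_le.1 (hbd x y)).2
          nlinarith)]
      rw [exp_nat_mul]
      have h0 : 0 ≤ ∫ x, ∫ y, exp (t * f x y) ∂Q ∂P :=
        integral_nonneg fun x => integral_nonneg fun y => (exp_pos _).le
      have := aux_mgf P Q f hf hbd ν t hν ht0 ht1
      gcongr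
    refine (Finset.sum_le_sum this).trans (le_of_eq ?_)
    simp
  have hch := measure_ge_le_exp_mul_mgf (μ := Measure.pi μ) (X := S) (t := m * t) (I + s)
    (by positivity) hintS
  rw [ENNReal.le_ofReal_iff_toReal_le (measure_ne_top _ _) (exp_pos _).le]
  refine hch.trans ((mul_le_mul_of_nonneg_left hmgf (exp_pos _).le).trans (le_of_eq ?_))
  rw [← exp_add]
  congr 1
  rw [hst]
  field_simp
  ring

lemma aux_sq {E : Type*} [MeasurableSpace E] (P Q : Measure E) [IsProbabilityMeasure P]
    [IsProbabilityMeasure Q] (f : E → E → ℝ) (hf : Measurable (Function.uncurry f))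
    (hb : ∀ x y, |f x y| ≤ 1) (hν : ∫ x, ∫ y, (f x y)^2 ∂Q ∂P ≤ 0) :
    ∫ x, ∫ y, f x y ∂Q ∂P = 0 := by
  have bi : ∀ g : E × E → ℝ, Measurable g → (C : ℝ) → (∀ z, |g z| ≤ C) → Integrable g (P.prod Q) :=
    fun g hg C h => Integrable.of_bound hg.aestronglyMeasurable C (Filter.Eventually.of_forall h)
  have i1 : Integrable (fun z : E × E => f z.1 z.2) (P.prod Q) := bi _ hf 1 (fun z => hb _ _)
  have i2 : Integrable (fun z : E × E => (f z.1 z.2)^2) (P.prod Q) :=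
    bi _ (hf.pow_const 2) 1 (fun z => by
      have := hb z.1 z.2
      rw [abs_of_nonneg (sq_nonneg _)]
      rw [← sq_abs]; nlinarith [abs_nonneg (f z.1 z.2)])
  rw [← integral_prod (fun z : E × E => (f z.1 z.2)^2) i2] at hν
  rw [← integral_prod (fun z : E × E => f z.1 z.2) i1]
  have h0 : ∫ z, (f z.1 z.2)^2 ∂(P.prod Q) = 0 :=
    le_antisymm hν (integral_nonneg fun z => sq_nonneg _)
  rw [integral_eq_zero_iff_of_nonneg (fun z => sq_nonneg _) i2] at h0
  refine integral_eq_zero_of_ae ?_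
  filter_upwards [h0] with z hz
  simpa using hz

lemma aux_diag {E : Type*} (K : E → E → ℝ) (hKsym : ∀ x y, K x y = K y x)
    (hKpsd : ∀ (m : ℕ) (z : Fin m → E) (a : Fin m → ℝ),
      0 ≤ ∑ i, ∑ j, a i * a j * K (z i) (z j)) (n : ℕ) (hn : 2 ≤ n) (x : Fin n → E) :
    (∑ i, ∑ j, K (x i) (x j) - ∑ i, K (x i) (x i)) / ((n:ℝ) * (n - 1))
      ≤ (1/(n:ℝ)^2) * ∑ i, ∑ j, K (x i) (x j) := by
  have h2 : ∀ u v, 2 * K u v ≤ K u u + K v v := by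
    intro u v
    have := hKpsd 2 ![u, v] ![1, -1]
    simp [Fin.sum_univ_two] at this
    have h3 := hKsym u v
    linarith
  have h : ∑ i, ∑ j, 2 * K (x i) (x j) ≤ ∑ i, ∑ j, (K (x i) (x i) + K (x j) (x j)) :=
    Finset.sum_le_sum fun i _ => Finset.sum_le_sum fun j _ => h2 _ _
  simp only [Finset.sum_add_distrib, Finset.sum_const, Finset.card_univ, Fintype.card_fin,
    nsmul_eq_mul, ← Finset.mul_sum] at h
  have hn' : (2:ℝ) ≤ n := by exact_mod_cast hn
  set A := ∑ i, ∑ j, K (x i) (x j)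
  set D := ∑ i, K (x i) (x i)
  have hp : (0:ℝ) < n - 1 := by linarith
  rw [div_le_iff₀ (by positivity)]
  have : 1 / (n:ℝ)^2 * A * (n * (n - 1)) = A - A / n := by field_simp
  rw [this]
  have : A / n ≤ D := by
    rw [div_le_iff₀ (by positivity)]; linarith
  linarith

lemma aux_main {E : Type*} [MeasurableSpace E]
    (K : E → E → ℝ)
    (hKmeas : Measurable (Function.uncurry K))
    (hKsym : ∀ x y, K x y = K y x)
    (hKpsd : ∀ (m : ℕ) (z : Fin m → E) (a : Fin m → ℝ),
      0 ≤ ∑ i, ∑ j, a i * a j * K (z i) (z j))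
    (hKbdd : ∀ x y, |K x y| ≤ 1)
    (p q : Measure E) [IsProbabilityMeasure p] [IsProbabilityMeasure q]
    (ν : ℝ) (hν : 0 < ν)
    (hνpp : ∫ x, ∫ y, (K x y)^2 ∂p ∂p ≤ ν)
    (hνpq : ∫ x, ∫ y, (K x y)^2 ∂q ∂p ≤ ν)
    (hνqq : ∫ x, ∫ y, (K x y)^2 ∂q ∂q ≤ ν)
    (nX nY : ℕ) (r : ℝ) (hr : 0 < r)
    (hX : r + 1 ≤ (nX : ℝ)) (hY : r + 1 ≤ (nY : ℝ))
    (s : ℝ) (hs0 : 0 ≤ s) (hs : s ≤ 3 * ν) :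
    ((Measure.pi fun _ : Fin nX => p).prod (Measure.pi fun _ : Fin nY => q))
      {ω : (Fin nX → E) × (Fin nY → E) | mmdStat K nX nY ω ≤ deltaK K p q - 4 * s}
      ≤ ENNReal.ofReal (3 * exp (-(r * s^2 / (8 * ν)))) := by
  have hX1 : 2 ≤ nX := by
    have : (1:ℝ) < nX := by linarith
    have : 1 < nX := by exact_mod_cast this
    omega
  have hY1 : 2 ≤ nY := by
    have : (1:ℝ) < nY := by linarith
    have : 1 < nY := by exact_mod_cast this
    omega
  let M : Fin nX ⊕ Fin nY → Measure E := Sum.elim (fun _ => p) (fun _ => q)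
  have hMp : ∀ i, IsProbabilityMeasure (M i) := by
    rintro (i | i)
    · exact inferInstanceAs (IsProbabilityMeasure p)
    · exact inferInstanceAs (IsProbabilityMeasure q)
  have mp := measurePreserving_sumPiEquivProdPi (X := fun _ => E) M
  have htr := mp.measure_preimage_equiv
    {ω : (Fin nX → E) × (Fin nY → E) | mmdStat K nX nY ω ≤ deltaK K p q - 4 * s}
  refine (le_of_eq htr.symm).trans ?_
  have hneg : ∀ P Q : Measure E, ∫ x, ∫ y, -K x y ∂Q ∂P = -∫ x, ∫ y, K x y ∂Q ∂P := by
    intro P Q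
    simp_rw [integral_neg]
  -- general bound on the exponent
  have hexp : ∀ m : ℕ, r ≤ 2 * (m:ℝ) → ENNReal.ofReal (exp (-((m : ℝ) * s^2 / (4 * ν))))
      ≤ ENNReal.ofReal (exp (-(r * s^2 / (8 * ν)))) := by
    intro m hm
    refine ENNReal.ofReal_le_ofReal (exp_le_exp.2 (neg_le_neg ?_))
    have : (m : ℝ) * s^2 / (4 * ν) = (2 * m) * s^2 / (8 * ν) := by field_simp; ring
    rw [this]
    gcongr
  -- the U-statistic bound
  have hU : ∀ (P : Measure E) [IsProbabilityMeasure P] (n : ℕ) (e : Fin n → Fin nX ⊕ Fin nY),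
      Function.Injective e → (∀ i, M (e i) = P) → r + 1 ≤ (n:ℝ) → 2 ≤ n →
      ∫ x, ∫ y, (K x y)^2 ∂P ∂P ≤ ν →
      (Measure.pi M) {ω | -(∫ x, ∫ y, K x y ∂P ∂P) + s ≤
        -((∑ i, ∑ j, K (ω (e i)) (ω (e j)) - ∑ i, K (ω (e i)) (ω (e i))) / ((n:ℝ) * (n - 1)))}
      ≤ ENNReal.ofReal (exp (-(r * s^2 / (8 * ν)))) := by
    intro P _ n e he heP hrn hn hνP
    have hn' : (2:ℝ) ≤ n := by exact_mod_cast hn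
    have hm2 : n ≤ 2 * (n / 2) + 1 := by omega
    have hm2' : (n:ℝ) ≤ 2 * ((n / 2 : ℕ) : ℝ) + 1 := by exact_mod_cast hm2
    refine le_trans ?_ (hexp (n / 2) (by linarith))
    rw [← hneg]
    refine aux_bern (Γ := Equiv.Perm (Fin n)) M P P (n / 2) (by omega)
      (fun σ k => e (σ ⟨2 * k.1, by omega⟩)) (fun σ k => e (σ ⟨2 * k.1 + 1, by omega⟩))
      ?_ (fun σ k => heP _) (fun σ k => heP _) (fun x y => -K x y) hKmeas.neg
      (fun x y => by rw [abs_neg]; exact hKbdd x y) ν s hν (by simpa using hνP) hs0 hs _ ?_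
    · intro σ
      rintro (k | k) (l | l) h
      all_goals
        simp only [Sum.elim_inl, Sum.elim_inr] at h
        have h1 := σ.injective (he h)
        rw [Fin.mk.injEq] at h1
      · congr 1; ext; omega
      · omega
      · omega
      · congr 1; ext; omega
    · intro ω
      refine Eq.trans ?_ Finset.sum_comm
      have : ∀ k ∈ (Finset.univ : Finset (Fin (n/2))), ∑ σ : Equiv.Perm (Fin n),
          -K (ω (e (σ ⟨2 * k.1, by omega⟩))) (ω (e (σ ⟨2 * k.1 + 1, by omega⟩)))
          = (Fintype.card (Equiv.Perm (Fin n)) : ℝ) * -((∑ i, ∑ j, K (ω (e i)) (ω (e j)) - ∑ i, K (ω (e i)) (ω (e i))) / ((n:ℝ) * (n - 1))) := by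
        intro k _
        have h := aux_perm2 (fun i j => K (ω (e i)) (ω (e j))) ⟨2 * k.1, by omega⟩
          ⟨2 * k.1 + 1, by omega⟩ (by simp)
        have hp : (0:ℝ) < n - 1 := by linarith
        rw [Finset.sum_neg_distrib, mul_neg, ← mul_div_assoc, ← h]
        field_simp
      rw [Finset.sum_congr rfl this, Finset.sum_const, nsmul_eq_mul, Finset.card_univ,
        Fintype.card_fin]
      ring
  have hUX := hU p nX Sum.inl Sum.inl_injective (fun _ => rfl) hX hX1 hνpp
  have hUY := hU q nY Sum.inr Sum.inr_injective (fun _ => rfl) hY hY1 hνqq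
  have hV : (Measure.pi M) {ω | (∫ x, ∫ y, K x y ∂q ∂p) + s ≤
        (∑ i, ∑ j, K (ω (Sum.inl i)) (ω (Sum.inr j))) / ((nX:ℝ) * nY)}
      ≤ ENNReal.ofReal (exp (-(r * s^2 / (8 * ν)))) := by
    have hmin : r + 1 ≤ ((min nX nY : ℕ) : ℝ) := by
      rw [Nat.cast_min]; exact le_min hX hY
    refine le_trans ?_ (hexp (min nX nY) (by linarith))
    have hlX : min nX nY ≤ nX := min_le_left _ _
    have hlY : min nX nY ≤ nY := min_le_right _ _
    refine aux_bern (Γ := Equiv.Perm (Fin nX) × Equiv.Perm (Fin nY)) M p q (min nX nY) (by omega)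
      (fun g k => Sum.inl (g.1 (Fin.castLE hlX k))) (fun g k => Sum.inr (g.2 (Fin.castLE hlY k)))
      ?_ (fun g k => rfl) (fun g k => rfl) K hKmeas hKbdd ν s hν hνpq hs0 hs _ ?_
    · intro g
      rintro (k | k) (l | l) h
      all_goals simp at h
      · rw [h]
      · rw [h]
    · intro ω
      refine Eq.trans ?_ Finset.sum_comm
      have : ∀ k ∈ (Finset.univ : Finset (Fin (min nX nY))),
          ∑ g : Equiv.Perm (Fin nX) × Equiv.Perm (Fin nY),
          K (ω (Sum.inl (g.1 (Fin.castLE hlX k)))) (ω (Sum.inr (g.2 (Fin.castLE hlY k))))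
          = (Fintype.card (Equiv.Perm (Fin nX) × Equiv.Perm (Fin nY)) : ℝ) *
            ((∑ i, ∑ j, K (ω (Sum.inl i)) (ω (Sum.inr j))) / ((nX:ℝ) * nY)) := by
        intro k _
        have hx0 : (nX:ℝ) ≠ 0 := by positivity
        have hy0 : (nY:ℝ) ≠ 0 := by positivity
        rw [Fintype.sum_prod_type]
        have h1 := aux_perm1 (fun i => ∑ τ : Equiv.Perm (Fin nY), K (ω (Sum.inl i)) (ω (Sum.inr (τ (Fin.castLE hlY k))))) (Fin.castLE hlX k)
        have h2 : ∀ i, (nY:ℝ) * ∑ τ : Equiv.Perm (Fin nY), K (ω (Sum.inl i)) (ω (Sum.inr (τ (Fin.castLE hlY k)))) = _ := fun i =>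
          aux_perm1 (fun j => K (ω (Sum.inl i)) (ω (Sum.inr j))) (Fin.castLE hlY k)
        have h3 : (nY:ℝ) * ∑ i, ∑ τ : Equiv.Perm (Fin nY), K (ω (Sum.inl i)) (ω (Sum.inr (τ (Fin.castLE hlY k))))
            = (Fintype.card (Equiv.Perm (Fin nY)) : ℝ) * ∑ i, ∑ j, K (ω (Sum.inl i)) (ω (Sum.inr j)) := by
          rw [Finset.mul_sum, Finset.mul_sum]
          exact Finset.sum_congr rfl fun i _ => h2 i
        rw [Fintype.card_prod, Nat.cast_mul, ← mul_div_assoc, eq_div_iff (by positivity), mul_assoc, ← h3]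
        linear_combination (nY:ℝ) * h1
      rw [Finset.sum_congr rfl this, Finset.sum_const, nsmul_eq_mul, Finset.card_univ,
        Fintype.card_fin]
      ring
  have hsub : (MeasurableEquiv.sumPiEquivProdPi (fun _ : Fin nX ⊕ Fin nY => E)) ⁻¹'
      {ω : (Fin nX → E) × (Fin nY → E) | mmdStat K nX nY ω ≤ deltaK K p q - 4 * s}
      ⊆ ({ω | -(∫ x, ∫ y, K x y ∂p ∂p) + s ≤
        -((∑ i, ∑ j, K (ω (Sum.inl i)) (ω (Sum.inl j)) - ∑ i, K (ω (Sum.inl i)) (ω (Sum.inl i))) / ((nX:ℝ) * (nX - 1)))}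
      ∪ {ω | -(∫ x, ∫ y, K x y ∂q ∂q) + s ≤
        -((∑ i, ∑ j, K (ω (Sum.inr i)) (ω (Sum.inr j)) - ∑ i, K (ω (Sum.inr i)) (ω (Sum.inr i))) / ((nY:ℝ) * (nY - 1)))})
      ∪ {ω | (∫ x, ∫ y, K x y ∂q ∂p) + s ≤
        (∑ i, ∑ j, K (ω (Sum.inl i)) (ω (Sum.inr j))) / ((nX:ℝ) * nY)} := by
    intro ω hω
    by_contra hcon
    simp only [Set.mem_union, Set.mem_setOf_eq, not_or, not_le] at hcon
    obtain ⟨⟨c1, c2⟩, c3⟩ := hcon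
    have hω' : mmdStat K nX nY (fun i => ω (Sum.inl i), fun i => ω (Sum.inr i)) ≤ deltaK K p q - 4 * s := hω
    have d1 := aux_diag K hKsym hKpsd nX hX1 (fun i => ω (Sum.inl i))
    have d2 := aux_diag K hKsym hKpsd nY hY1 (fun i => ω (Sum.inr i))
    simp only [mmdStat, deltaK] at hω'
    have : (2 / ((nX:ℝ) * nY)) * ∑ i, ∑ j, K (ω (Sum.inl i)) (ω (Sum.inr j))
      = 2 * ((∑ i, ∑ j, K (ω (Sum.inl i)) (ω (Sum.inr j))) / ((nX:ℝ) * nY)) := by ring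
    linarith
  refine (measure_mono hsub).trans ((measure_union_le _ _).trans ?_)
  refine (add_le_add ((measure_union_le _ _).trans (add_le_add hUX hUY)) hV).trans (le_of_eq ?_)
  rw [← ENNReal.ofReal_add (exp_pos _).le (exp_pos _).le, ← ENNReal.ofReal_add (by positivity) (exp_pos _).le]
  congr 1
  ring

/-- Theorem 3.1, power part: under `H₁ : p ≠ q` with `δ_K > 0`, with threshold
`t_thres = 4/(cn) + 4λ₁√(ν/(cn))`, `λ₁ = √(8 log(4/α))`, if
`n > (1/c)·max{max{λ₁,λ₂}²/(9ν), 8/δ_K, (ν/δ_K²)(8(λ₁+λ₂))²}` then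
`Pr[T̂ ≤ t_thres] ≤ 3 e^{−λ₂²/8}`. -/
theorem mmd_test_power
    {d : ℕ} (𝒳 : Set (EuclideanSpace ℝ (Fin d))) (h𝒳 : MeasurableSet 𝒳)
    (K : 𝒳 → 𝒳 → ℝ)
    (hKmeas : Measurable (Function.uncurry K))
    (hKsym : ∀ x y, K x y = K y x)
    (hKpsd : ∀ (m : ℕ) (z : Fin m → 𝒳) (a : Fin m → ℝ),
      0 ≤ ∑ i, ∑ j, a i * a j * K (z i) (z j))
    (hKbdd : ∀ x y, |K x y| ≤ 1)
    (p q : Measure 𝒳) [IsProbabilityMeasure p] [IsProbabilityMeasure q]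
    (ν : ℝ) (hν1 : ν ≤ 1)
    (hνpp : ∫ x, ∫ y, (K x y)^2 ∂p ∂p ≤ ν)
    (hνpq : ∫ x, ∫ y, (K x y)^2 ∂q ∂p ≤ ν)
    (hνqq : ∫ x, ∫ y, (K x y)^2 ∂q ∂q ≤ ν)
    (nX nY : ℕ) (c : ℝ) (hc : 0 < c) (hc1 : c < 1)
    (hbalX : c * ((nX + nY : ℕ) : ℝ) + 1 ≤ (nX : ℝ))
    (hbalY : c * ((nX + nY : ℕ) : ℝ) + 1 ≤ (nY : ℝ))
    (hH1 : p ≠ q) (hδ : 0 < deltaK K p q)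
    (α : ℝ) (hα : 0 < α) (hα1 : α < 1)
    (lam₂ : ℝ) (hlam₂ : 0 < lam₂)
    (hn : ((nX + nY : ℕ) : ℝ) > (1/c) * max
        ((max (Real.sqrt (8 * Real.log (4/α))) lam₂)^2 / (9 * ν))
        (max (8 / deltaK K p q)
          ((ν / (deltaK K p q)^2) * (8 * (Real.sqrt (8 * Real.log (4/α)) + lam₂))^2))) :
    ((Measure.pi fun _ : Fin nX => p).prod (Measure.pi fun _ : Fin nY => q))
      {ω : (Fin nX → 𝒳) × (Fin nY → 𝒳) |
        mmdStat K nX nY ω ≤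
          4/(c * ((nX + nY : ℕ) : ℝ))
          + 4 * Real.sqrt (8 * Real.log (4/α))
              * Real.sqrt (ν/(c * ((nX + nY : ℕ) : ℝ)))}
      ≤ ENNReal.ofReal (3 * Real.exp (-lam₂^2 / 8)) := by
  set n : ℝ := ((nX + nY : ℕ) : ℝ) with hndef
  set l₁ := Real.sqrt (8 * Real.log (4/α)) with hl₁
  have hl₁0 : 0 ≤ l₁ := Real.sqrt_nonneg _
  have hν : 0 < ν := by
    by_contra hcon
    have h0 : ν ≤ 0 := not_lt.1 hcon
    have e1 := aux_sq p p K hKmeas hKbdd (hνpp.trans h0)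
    have e2 := aux_sq p q K hKmeas hKbdd (hνpq.trans h0)
    have e3 := aux_sq q q K hKmeas hKbdd (hνqq.trans h0)
    rw [deltaK, e1, e2, e3] at hδ
    simp at hδ
  set δ := deltaK K p q with hδd
  set r := c * n with hr
  have hn' : max (max l₁ lam₂ ^ 2 / (9 * ν)) (max (8 / δ) (ν / δ^2 * (8 * (l₁ + lam₂))^2)) < r := by
    have := mul_lt_mul_of_pos_left hn hc
    rwa [← mul_assoc, mul_one_div_cancel hc.ne', one_mul] at this
  obtain ⟨g1, g23⟩ := max_lt_iff.1 hn'
  obtain ⟨g2, g3⟩ := max_lt_iff.1 g23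
  have hr0 : 0 < r := lt_trans (by positivity) g2
  set w := Real.sqrt (ν / r) with hw
  have hw0 : 0 ≤ w := Real.sqrt_nonneg _
  have hw2 : w ^ 2 = ν / r := Real.sq_sqrt (by positivity)
  have hwr : w ^ 2 * r = ν := by rw [hw2]; field_simp
  have hs : lam₂ * w ≤ 3 * ν := by
    refine abs_le_of_sq_le_sq' ?_ (by positivity) |>.2
    have h1 : lam₂ ^ 2 ≤ max l₁ lam₂ ^ 2 := pow_le_pow_left₀ hlam₂.le (le_max_right _ _) 2
    rw [div_lt_iff₀ (by positivity)] at g1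
    have h2 : lam₂ ^ 2 ≤ r * (9 * ν) := h1.trans g1.le
    calc (lam₂ * w)^2 = lam₂^2 * w^2 := by ring
      _ ≤ r * (9 * ν) * w^2 := by gcongr
      _ = (3 * ν)^2 := by rw [← hwr]; ring
  have hd1 : 4 / r < δ / 2 := by
    rw [div_lt_iff₀ hδ] at g2
    rw [div_lt_iff₀ hr0]; linarith
  have hd2 : 8 * (l₁ + lam₂) * w ≤ δ := by
    refine abs_le_of_sq_le_sq' ?_ hδ.le |>.2
    have h1 : ν * (8 * (l₁ + lam₂))^2 ≤ r * δ^2 := by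
      rw [div_mul_eq_mul_div, div_lt_iff₀ (by positivity)] at g3
      exact g3.le
    rw [mul_pow, hw2, ← mul_div_assoc, div_le_iff₀ hr0]
    linarith
  have hmain := aux_main K hKmeas hKsym hKpsd hKbdd p q ν hν hνpp hνpq hνqq nX nY r hr0 hbalX hbalY
    (lam₂ * w) (by positivity) hs
  have he : -(r * (lam₂ * w)^2 / (8 * ν)) = -lam₂^2 / 8 := by
    rw [mul_pow, hw2]; field_simp
  rw [he] at hmain
  refine (measure_mono ?_).trans hmain
  intro ω hω
  simp only [Set.mem_setOf_eq] at hω ⊢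
  refine hω.trans ?_
  nlinarith
end

section
/- (Theorem 3.2, Type-I error part, test-only bootstrap.) Assume the null hypothesis p = q. Let α_level, γ ∈ (0,1), define λ_{(2),1} = √(4 log(4/α_level)), λ_{(1)} = √(4 log(8/γ)), and the threshold t_thres = 4 (√(1.1) λ_{(2),1} + λ_{(1)}) √(ν/(c_a n)). If n > (λ_{(1)}/(0.1 ν))²/(8 c_a) and n > max{λ_{(1)}, λ_{(2),1}}²/(9 ν c_a), then there exists a measurable set E of training configurations D_tr with P_(1)(E) ≥ 1 − γ such that for every D_tr ∈ E, the conditional probability P_(2)[ T̂_a > t_thres ] ≤ α_level. -/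
open MeasureTheory Real
open scoped BigOperators ENNReal

/-- The asymmetric empirical MMD statistic `T̂_a` of kernel `K`, computed between the
training sample `dtr = (X₍₁₎, Y₍₁₎)` and the test sample `dte = (X₍₂₎, Y₍₂₎)`. -/
noncomputable def asymMMD {𝒳 : Type*} (K : 𝒳 → 𝒳 → ℝ) (n1X n1Y n2X n2Y : ℕ)
    (dtr : (Fin n1X → 𝒳) × (Fin n1Y → 𝒳))
    (dte : (Fin n2X → 𝒳) × (Fin n2Y → 𝒳)) : ℝ :=
  (1/((n2X:ℝ)*(n1X:ℝ))) * ∑ i, ∑ j, K (dte.1 i) (dtr.1 j)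
  - (1/((n2X:ℝ)*(n1Y:ℝ))) * ∑ i, ∑ j, K (dte.1 i) (dtr.2 j)
  - (1/((n2Y:ℝ)*(n1X:ℝ))) * ∑ i, ∑ j, K (dte.2 i) (dtr.1 j)
  + (1/((n2Y:ℝ)*(n1Y:ℝ))) * ∑ i, ∑ j, K (dte.2 i) (dtr.2 j)

namespace AsymAux

/-- core function -/
noncomputable def hh {X : Type*} (K : X → X → ℝ) (z : (X × X) × (X × X)) : ℝ :=
  K z.2.1 z.1.1 - K z.2.1 z.1.2 - K z.2.2 z.1.1 + K z.2.2 z.1.2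

section
variable {X : Type*} [MeasurableSpace X]

lemma integrable_bdd {Y : Type*} [MeasurableSpace Y] {μ : Measure Y} [IsFiniteMeasure μ]
    {f : Y → ℝ} (hf : Measurable f) (C : ℝ) (hC : ∀ y, |f y| ≤ C) : Integrable f μ :=
  Integrable.of_bound hf.aestronglyMeasurable C (Filter.Eventually.of_forall hC)

lemma abs_hh_le {X : Type*} {K : X → X → ℝ} (hb : ∀ x y, |K x y| ≤ 1) (z) : |hh K z| ≤ 4 := by
  unfold hh
  have h1 := abs_le.1 (hb z.2.1 z.1.1)
  have h2 := abs_le.1 (hb z.2.1 z.1.2)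
  have h3 := abs_le.1 (hb z.2.2 z.1.1)
  have h4 := abs_le.1 (hb z.2.2 z.1.2)
  rw [abs_le]; constructor <;> linarith

lemma measurable_K {K : X → X → ℝ} (hK : Measurable (Function.uncurry K))
    {Y : Type*} [MeasurableSpace Y] {f g : Y → X} (hf : Measurable f) (hg : Measurable g) :
    Measurable (fun y => K (f y) (g y)) :=
  hK.comp (hf.prodMk hg)

lemma measurable_hh {K : X → X → ℝ} (hK : Measurable (Function.uncurry K)) :
    Measurable (hh K) := by
  unfold hh
  refine ((Measurable.sub ?_ ?_).sub ?_).add ?_ <;>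
    exact measurable_K hK (by fun_prop) (by fun_prop)

lemma diff_sq (p : Measure X) [IsProbabilityMeasure p] {f : X → ℝ} (hf : Measurable f)
    (C : ℝ) (hC : ∀ y, |f y| ≤ C) :
    ∫ a : X × X, (f a.1 - f a.2)^2 ∂(p.prod p) ≤ 2 * ∫ x, (f x)^2 ∂p := by
  have i2 : Integrable (fun x => (f x)^2) p :=
    integrable_bdd (by fun_prop) (C^2) (fun y => by
      rw [abs_pow]; exact pow_le_pow_left₀ (abs_nonneg _) (hC y) 2)
  have i1 : Integrable f p := integrable_bdd hf C hC
  have e : ∀ a : X × X, (f a.1 - f a.2)^2 = (f a.1)^2 + (f a.2)^2 - 2 * (f a.1 * f a.2) := by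
    intro a; ring
  simp_rw [e]
  have i3 : Integrable (fun a : X × X => (f a.1)^2 + (f a.2)^2) (p.prod p) :=
    (i2.comp_fst p).add (i2.comp_snd p)
  rw [integral_sub i3 ((i1.mul_prod i1).const_mul 2),
    integral_add (i2.comp_fst p) (i2.comp_snd p), integral_const_mul,
    integral_prod_mul, integral_fun_fst (fun x => f x ^2), integral_fun_snd (fun x => f x ^2)]
  simp
  nlinarith [mul_self_nonneg (∫ x, f x ∂p)]

lemma hh_var (p : Measure X) [IsProbabilityMeasure p] {K : X → X → ℝ}
    (hK : Measurable (Function.uncurry K)) (hb : ∀ x y, |K x y| ≤ 1) {ν : ℝ}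
    (hν : ∫ x, ∫ y, (K x y)^2 ∂p ∂p ≤ ν) :
    ∫ z, (hh K z)^2 ∂((p.prod p).prod (p.prod p)) ≤ 4 * ν := by
  have bA : ∀ (x : X) (a : X × X), |K x a.1 - K x a.2| ≤ 2 := by
    intro x a
    have h1 := abs_le.1 (hb x a.1)
    have h2 := abs_le.1 (hb x a.2)
    rw [abs_le]; constructor <;> linarith
  have mA : Measurable (fun u : (X × X) × X => (K u.2 u.1.1 - K u.2 u.1.2)) := by
    refine Measurable.sub ?_ ?_ <;>
    exact measurable_K hK (by fun_prop) (by fun_prop)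
  have bA2 : ∀ (x : X) (a : X × X), |(K x a.1 - K x a.2)^2| ≤ 2^2 := by
    intro x a
    rw [abs_pow]; exact pow_le_pow_left₀ (abs_nonneg _) (bA x a) 2
  have iA : Integrable (fun u : (X × X) × X => (K u.2 u.1.1 - K u.2 u.1.2)^2)
      ((p.prod p).prod p) :=
    integrable_bdd (mA.pow_const 2) (2^2) (fun u => bA2 _ _)
  have mK : ∀ x, Measurable (K x) := fun x => measurable_K hK measurable_const measurable_id
  have iK : Integrable (fun u : X × X => (K u.1 u.2)^2) (p.prod p) :=
    integrable_bdd ((measurable_K hK measurable_fst measurable_snd).pow_const 2) 1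
      (fun u => by rw [abs_pow]; exact pow_le_one₀ (abs_nonneg _) (hb _ _))
  have ih : Integrable (fun z => (hh K z)^2) ((p.prod p).prod (p.prod p)) :=
    integrable_bdd ((measurable_hh hK).pow_const 2) (4^2) (fun u => by
      rw [abs_pow]; exact pow_le_pow_left₀ (abs_nonneg _) (abs_hh_le hb u) 2)
  rw [integral_prod _ ih]
  calc ∫ a, ∫ c, (hh K (a, c))^2 ∂(p.prod p) ∂(p.prod p)
      ≤ ∫ a : X × X, 2 * ∫ x, (K x a.1 - K x a.2)^2 ∂p ∂(p.prod p) := by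
        refine integral_mono ih.integral_prod_left (iA.integral_prod_left.const_mul 2) ?_
        intro a
        have := diff_sq p (f := fun x => K x a.1 - K x a.2)
          (mA.comp (measurable_const.prodMk measurable_id : Measurable (fun x : X => (a, x))))
          2 (fun x => bA x a)
        refine le_trans (le_of_eq ?_) this
        refine integral_congr_ae (Filter.Eventually.of_forall fun c => ?_)
        simp only [hh]; ring
    _ = 2 * ∫ x, ∫ a : X × X, (K x a.1 - K x a.2)^2 ∂(p.prod p) ∂p := by
        rw [integral_const_mul, integral_integral_swap iA]
    _ ≤ 2 * ∫ x, 2 * ∫ y, (K x y)^2 ∂p ∂p := by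
        refine mul_le_mul_of_nonneg_left ?_ (by norm_num)
        refine integral_mono iA.integral_prod_right (iK.integral_prod_left.const_mul 2) ?_
        intro x
        exact diff_sq p (mK x) 1 (hb x)
    _ ≤ 4 * ν := by
        rw [integral_const_mul]; linarith

lemma hh_mean (p : Measure X) [IsProbabilityMeasure p] {K : X → X → ℝ}
    (hK : Measurable (Function.uncurry K)) (hb : ∀ x y, |K x y| ≤ 1) :
    ∫ z, hh K z ∂((p.prod p).prod (p.prod p)) = 0 := by
  have ih : Integrable (fun z => hh K z) ((p.prod p).prod (p.prod p)) :=
    integrable_bdd (measurable_hh hK) 4 (abs_hh_le hb)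
  rw [integral_prod _ ih]
  have : ∀ a : X × X, ∫ c, hh K (a, c) ∂(p.prod p) = 0 := by
    intro a
    have e : ∀ c : X × X, hh K (a, c) = (K c.1 a.1 - K c.1 a.2) - (K c.2 a.1 - K c.2 a.2) := by
      intro c; simp only [hh]; ring
    have i1 : Integrable (fun x => K x a.1 - K x a.2) p := by
      refine Integrable.sub ?_ ?_ <;>
      exact integrable_bdd (measurable_K hK measurable_id measurable_const) 1 (fun x => hb _ _)
    simp_rw [e]
    rw [integral_sub (i1.comp_fst p) (i1.comp_snd p),
      integral_fun_fst (fun x => K x a.1 - K x a.2),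
      integral_fun_snd (fun x => K x a.1 - K x a.2)]
    simp
  simp [this]

lemma hh_mgf (p : Measure X) [IsProbabilityMeasure p] {K : X → X → ℝ}
    (hK : Measurable (Function.uncurry K)) (hb : ∀ x y, |K x y| ≤ 1) {ν : ℝ}
    (hν : ∫ x, ∫ y, (K x y)^2 ∂p ∂p ≤ ν) {θ : ℝ} (h0 : 0 ≤ θ) (h1 : θ ≤ 1/4) :
    ∫ z, exp (θ * hh K z) ∂((p.prod p).prod (p.prod p)) ≤ exp (4 * ν * θ^2) := by
  have bθ : ∀ z, |θ * hh K z| ≤ 1 := by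
    intro z
    rw [abs_mul, abs_of_nonneg h0]
    have := abs_hh_le hb z
    nlinarith [abs_nonneg (hh K z)]
  have i1 : Integrable (fun z => hh K z) ((p.prod p).prod (p.prod p)) :=
    integrable_bdd (measurable_hh hK) 4 (abs_hh_le hb)
  have i2 : Integrable (fun z => (hh K z)^2) ((p.prod p).prod (p.prod p)) :=
    integrable_bdd ((measurable_hh hK).pow_const 2) (4^2) (fun u => by
      rw [abs_pow]; exact pow_le_pow_left₀ (abs_nonneg _) (abs_hh_le hb u) 2)
  have ie : Integrable (fun z => exp (θ * hh K z)) ((p.prod p).prod (p.prod p)) :=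
    integrable_bdd ((measurable_hh hK).const_mul θ).exp (exp 1) (fun z => by
      rw [abs_exp]; exact exp_le_exp.2 (abs_le.1 (bθ z)).2)
  calc _ ≤ ∫ z, ((1 + θ * hh K z) + θ^2 * (hh K z)^2) ∂((p.prod p).prod (p.prod p)) := by
        refine integral_mono ie (((integrable_const 1).add (i1.const_mul θ)).add
          (i2.const_mul _)) ?_
        intro z
        have := (abs_le.1 (abs_exp_sub_one_sub_id_le (bθ z))).2
        simp only
        nlinarith
    _ = 1 + θ^2 * ∫ z, (hh K z)^2 ∂((p.prod p).prod (p.prod p)) := by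
        have i3 : Integrable (fun z => 1 + θ * hh K z) ((p.prod p).prod (p.prod p)) :=
          (integrable_const 1).add (i1.const_mul θ)
        rw [integral_add i3 (i2.const_mul _),
          integral_add (integrable_const 1) (i1.const_mul θ), integral_const_mul,
          integral_const_mul, hh_mean p hK hb]
        simp
    _ ≤ 1 + 4 * ν * θ^2 := by
        nlinarith [hh_var p hK hb hν, sq_nonneg θ]
    _ ≤ _ := by linarith [add_one_le_exp (4 * ν * θ^2)]

lemma mp_comp (p : Measure X) [IsProbabilityMeasure p] {m N : ℕ} (f : Fin N → Fin m)
    (hf : Function.Injective f) :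
    MeasurePreserving (fun (x : Fin m → X) (k : Fin N) => x (f k))
      (Measure.pi fun _ => p) (Measure.pi fun _ => p) := by
  refine ⟨by fun_prop, ?_⟩
  have h := ProbabilityTheory.iIndepFun_pi (μ := fun _ : Fin m => p)
    (X := fun _ (x : X) => x) (fun _ => aemeasurable_id)
  have h2 := h.precomp hf
  rw [ProbabilityTheory.iIndepFun_iff_map_fun_eq_pi_map
    (fun k => (measurable_pi_apply (f k)).aemeasurable)] at h2
  refine h2.trans ?_
  congr 1
  ext1 k
  exact (measurePreserving_eval (fun _ : Fin m => p) (f k)).map_eq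

lemma mp_pair {Y Z A B : Type*} [MeasurableSpace Y] [MeasurableSpace Z] [MeasurableSpace A]
    [MeasurableSpace B] {μ : Measure A} {ρ : Measure B} {p : Measure Y} {q : Measure Z}
    [SigmaFinite p] [SigmaFinite q] [SFinite ρ] [SFinite μ]
    {N : ℕ} {f : A → Fin N → Y} {g : B → Fin N → Z}
    (hf : MeasurePreserving f μ (Measure.pi fun _ => p))
    (hg : MeasurePreserving g ρ (Measure.pi fun _ => q)) :
    MeasurePreserving (fun (x : A × B) (k : Fin N) => (f x.1 k, g x.2 k))
      (μ.prod ρ) (Measure.pi fun _ => p.prod q) := by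
  have h := (measurePreserving_arrowProdEquivProdArrow Y Z (Fin N) (fun _ => p) (fun _ => q)).symm
  exact h.comp (hf.prod hg)

/-- shifted index -/
def sh {N n : ℕ} (h : N ≤ n) (a : Fin n) (k : Fin N) : Fin n :=
  haveI : NeZero n := ⟨fun h0 => by subst h0; exact a.elim0⟩
  Fin.castLE h k + a

lemma sh_inj {N n : ℕ} (h : N ≤ n) (a : Fin n) : Function.Injective (sh h a) := by
  intro k l hkl
  have : NeZero n := ⟨fun h0 => by subst h0; exact a.elim0⟩
  have : Fin.castLE h k + a = Fin.castLE h l + a := hkl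
  exact Fin.castLE_injective h (add_right_cancel this)

lemma sh_bij {N n : ℕ} (h : N ≤ n) (k : Fin N) : Function.Bijective (fun a => sh h a k) := by
  haveI : NeZero n := ⟨fun h0 => by have := k.2; omega⟩
  exact (Equiv.addLeft (Fin.castLE h k)).bijective

/-- index type -/
abbrev Ix (n1X n1Y n2X n2Y : ℕ) := Fin n2X × Fin n2Y × Fin n1X × Fin n1Y

/-- total sample -/
abbrev Sm (X : Type*) (n1X n1Y n2X n2Y : ℕ) :=
  ((Fin n1X → X) × (Fin n1Y → X)) × ((Fin n2X → X) × (Fin n2Y → X))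

/-- block extraction -/
def Ph {X : Type*} {N n1X n1Y n2X n2Y : ℕ} (h1 : N ≤ n1X) (h2 : N ≤ n1Y) (h3 : N ≤ n2X)
    (h4 : N ≤ n2Y) (τ : Ix n1X n1Y n2X n2Y) (z : Sm X n1X n1Y n2X n2Y) (k : Fin N) :
    (X × X) × (X × X) :=
  ((z.1.1 (sh h1 τ.2.2.1 k), z.1.2 (sh h2 τ.2.2.2 k)),
    (z.2.1 (sh h3 τ.1 k), z.2.2 (sh h4 τ.2.1 k)))

/-- joint law -/
noncomputable abbrev PP (p : Measure X) (n1X n1Y n2X n2Y : ℕ) :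
    Measure (Sm X n1X n1Y n2X n2Y) :=
  ((Measure.pi fun _ : Fin n1X => p).prod (Measure.pi fun _ : Fin n1Y => p)).prod
  ((Measure.pi fun _ : Fin n2X => p).prod (Measure.pi fun _ : Fin n2Y => p))

lemma mp_Ph (p : Measure X) [IsProbabilityMeasure p] {N n1X n1Y n2X n2Y : ℕ}
    (h1 : N ≤ n1X) (h2 : N ≤ n1Y) (h3 : N ≤ n2X)
    (h4 : N ≤ n2Y) (τ : Ix n1X n1Y n2X n2Y) :
    MeasurePreserving (Ph (X := X) h1 h2 h3 h4 τ) (PP p n1X n1Y n2X n2Y)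
      (Measure.pi fun _ => (p.prod p).prod (p.prod p)) :=
  mp_pair (mp_pair (mp_comp p _ (sh_inj h1 _)) (mp_comp p _ (sh_inj h2 _)))
    (mp_pair (mp_comp p _ (sh_inj h3 _)) (mp_comp p _ (sh_inj h4 _)))

lemma T_avg {X : Type*} (K : X → X → ℝ) {N n1X n1Y n2X n2Y : ℕ} (hN : 0 < N)
    (h1 : N ≤ n1X) (h2 : N ≤ n1Y) (h3 : N ≤ n2X)
    (h4 : N ≤ n2Y) (z : Sm X n1X n1Y n2X n2Y) :
    asymMMD K n1X n1Y n2X n2Y z.1 z.2 =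
      ∑ τ : Ix n1X n1Y n2X n2Y, (1 / ((n2X : ℝ) * n2Y * n1X * n1Y)) *
        ((1 / (N : ℝ)) * ∑ k, hh K (Ph h1 h2 h3 h4 τ z k)) := by
  have key : ∀ k : Fin N, ∑ τ : Ix n1X n1Y n2X n2Y, hh K (Ph h1 h2 h3 h4 τ z k)
      = ∑ τ : Ix n1X n1Y n2X n2Y,
        hh K ((z.1.1 τ.2.2.1, z.1.2 τ.2.2.2), (z.2.1 τ.1, z.2.2 τ.2.1)) := by
    intro k
    have hb : Function.Bijective (fun τ : Ix n1X n1Y n2X n2Y =>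
        ((sh h3 τ.1 k, sh h4 τ.2.1 k, sh h1 τ.2.2.1 k, sh h2 τ.2.2.2 k) :
          Ix n1X n1Y n2X n2Y)) :=
      (sh_bij h3 k).prodMap ((sh_bij h4 k).prodMap ((sh_bij h1 k).prodMap (sh_bij h2 k)))
    exact hb.sum_comp (fun τ : Ix n1X n1Y n2X n2Y =>
        hh K ((z.1.1 τ.2.2.1, z.1.2 τ.2.2.2), (z.2.1 τ.1, z.2.2 τ.2.1)))
  rw [← Finset.mul_sum, ← Finset.mul_sum, Finset.sum_comm, Finset.sum_congr rfl (fun k _ => key k)]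
  have hN' : (N : ℝ) ≠ 0 := by positivity
  have e1 : (n1X : ℝ) ≠ 0 := by have : n1X ≠ 0 := by omega
                                exact_mod_cast this
  have e2 : (n1Y : ℝ) ≠ 0 := by have : n1Y ≠ 0 := by omega
                                exact_mod_cast this
  have e3 : (n2X : ℝ) ≠ 0 := by have : n2X ≠ 0 := by omega
                                exact_mod_cast this
  have e4 : (n2Y : ℝ) ≠ 0 := by have : n2Y ≠ 0 := by omega
                                exact_mod_cast this
  simp only [Finset.sum_const, Finset.card_univ, Fintype.card_fin, nsmul_eq_mul,
    Fintype.sum_prod_type, hh, Finset.sum_add_distrib, Finset.sum_sub_distrib, ← Finset.mul_sum,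
    asymMMD]
  field_simp

lemma joint_mgf (p : Measure X) [IsProbabilityMeasure p] {K : X → X → ℝ}
    (hK : Measurable (Function.uncurry K)) (hb : ∀ x y, |K x y| ≤ 1) {ν : ℝ}
    (hν : ∫ x, ∫ y, (K x y)^2 ∂p ∂p ≤ ν) {θ : ℝ} (hθ0 : 0 ≤ θ) (hθ1 : θ ≤ 1/4)
    {N n1X n1Y n2X n2Y : ℕ} (hN : 0 < N)
    (h1 : N ≤ n1X) (h2 : N ≤ n1Y) (h3 : N ≤ n2X) (h4 : N ≤ n2Y) :
    Integrable (fun z : Sm X n1X n1Y n2X n2Y =>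
      exp (N * θ * asymMMD K n1X n1Y n2X n2Y z.1 z.2)) (PP p n1X n1Y n2X n2Y) ∧
    ∫ z, exp (N * θ * asymMMD K n1X n1Y n2X n2Y z.1 z.2) ∂(PP p n1X n1Y n2X n2Y) ≤
      exp (N * (4 * ν * θ^2)) := by
  set w : ℝ := 1 / ((n2X : ℝ) * n2Y * n1X * n1Y) with hw
  have hN' : (N : ℝ) ≠ 0 := by positivity
  have e1 : (n1X : ℝ) ≠ 0 := by have : n1X ≠ 0 := by omega
                                exact_mod_cast this
  have e2 : (n1Y : ℝ) ≠ 0 := by have : n1Y ≠ 0 := by omega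
                                exact_mod_cast this
  have e3 : (n2X : ℝ) ≠ 0 := by have : n2X ≠ 0 := by omega
                                exact_mod_cast this
  have e4 : (n2Y : ℝ) ≠ 0 := by have : n2Y ≠ 0 := by omega
                                exact_mod_cast this
  have hw0 : 0 ≤ w := by positivity
  have hw1 : ∑ τ : Ix n1X n1Y n2X n2Y, w = 1 := by
    simp [hw]
    field_simp
  have mhh := measurable_hh hK
  have mS : ∀ τ : Ix n1X n1Y n2X n2Y, Measurable
      (fun z : Sm X n1X n1Y n2X n2Y => ∑ k, θ * hh K (Ph h1 h2 h3 h4 τ z k)) := by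
    intro τ
    refine Finset.measurable_sum _ fun k _ => Measurable.const_mul ?_ _
    exact mhh.comp ((measurable_pi_apply k).comp (mp_Ph p h1 h2 h3 h4 τ).measurable)
  have bS : ∀ (τ : Ix n1X n1Y n2X n2Y) z,
      |exp (∑ k, θ * hh K (Ph h1 h2 h3 h4 τ z k))| ≤ exp N := by
    intro τ z
    rw [abs_exp, exp_le_exp]
    calc _ ≤ ∑ k : Fin N, (1 : ℝ) := by
          refine Finset.sum_le_sum fun k _ => ?_
          have := (abs_le.1 (abs_hh_le hb (Ph h1 h2 h3 h4 τ z k))).2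
          nlinarith
      _ = N := by simp
  have iS : ∀ τ : Ix n1X n1Y n2X n2Y, Integrable
      (fun z => exp (∑ k, θ * hh K (Ph h1 h2 h3 h4 τ z k))) (PP p n1X n1Y n2X n2Y) :=
    fun τ => integrable_bdd (mS τ).exp _ (bS τ)
  have hpt : ∀ z : Sm X n1X n1Y n2X n2Y, exp (N * θ * asymMMD K n1X n1Y n2X n2Y z.1 z.2) ≤
      ∑ τ : Ix n1X n1Y n2X n2Y, w * exp (∑ k, θ * hh K (Ph h1 h2 h3 h4 τ z k)) := by
    intro z
    have := convexOn_exp.map_sum_le (t := Finset.univ) (w := fun _ : Ix n1X n1Y n2X n2Y => w)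
      (p := fun τ => ∑ k, θ * hh K (Ph h1 h2 h3 h4 τ z k)) (fun _ _ => hw0) hw1
      (fun _ _ => Set.mem_univ _)
    simp only [smul_eq_mul] at this
    refine le_trans (le_of_eq ?_) this
    rw [T_avg K hN h1 h2 h3 h4 z, Finset.mul_sum]
    congr 1
    refine Finset.sum_congr rfl fun τ _ => ?_
    rw [← Finset.mul_sum, hw]
    field_simp
  have iR : Integrable (fun z => ∑ τ : Ix n1X n1Y n2X n2Y,
      w * exp (∑ k, θ * hh K (Ph h1 h2 h3 h4 τ z k))) (PP p n1X n1Y n2X n2Y) :=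
    integrable_finsetSum _ fun τ _ => (iS τ).const_mul w
  have mT : Measurable (fun z : Sm X n1X n1Y n2X n2Y =>
      exp (N * θ * asymMMD K n1X n1Y n2X n2Y z.1 z.2)) := by
    have : (fun z : Sm X n1X n1Y n2X n2Y =>
      exp (N * θ * asymMMD K n1X n1Y n2X n2Y z.1 z.2)) = fun z => exp (∑ τ : Ix n1X n1Y n2X n2Y,
        w * ∑ k, θ * hh K (Ph h1 h2 h3 h4 τ z k)) := by
      funext z
      rw [T_avg K hN h1 h2 h3 h4 z, Finset.mul_sum]
      congr 1
      refine Finset.sum_congr rfl fun τ _ => ?_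
      rw [← Finset.mul_sum, hw]
      field_simp
    rw [this]
    exact (Finset.measurable_sum _ fun τ _ => (mS τ).const_mul w).exp
  have iT : Integrable (fun z : Sm X n1X n1Y n2X n2Y =>
      exp (N * θ * asymMMD K n1X n1Y n2X n2Y z.1 z.2)) (PP p n1X n1Y n2X n2Y) :=
    iR.mono' mT.aestronglyMeasurable (Filter.Eventually.of_forall fun z => by
      rw [norm_eq_abs, abs_exp]; exact hpt z)
  refine ⟨iT, (integral_mono iT iR hpt).trans ?_⟩
  rw [integral_finsetSum _ fun τ _ => (iS τ).const_mul w]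
  calc _ ≤ ∑ τ : Ix n1X n1Y n2X n2Y, w * exp (N * (4 * ν * θ^2)) := by
        refine Finset.sum_le_sum fun τ _ => ?_
        rw [integral_const_mul]
        refine mul_le_mul_of_nonneg_left ?_ hw0
        have hmp := mp_Ph p h1 h2 h3 h4 τ
        have mG : Measurable (fun u : Fin N → (X × X) × (X × X) =>
            ∏ k, exp (θ * hh K (u k))) :=
          Finset.measurable_prod _ fun k _ =>
            ((mhh.comp (measurable_pi_apply k)).const_mul θ).exp
        have hc : ∫ z, exp (∑ k, θ * hh K (Ph h1 h2 h3 h4 τ z k)) ∂(PP p n1X n1Y n2X n2Y)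
            = ∫ u, ∏ k, exp (θ * hh K (u k))
              ∂(Measure.pi fun _ : Fin N => (p.prod p).prod (p.prod p)) := by
          rw [← hmp.map_eq, integral_map hmp.measurable.aemeasurable mG.aestronglyMeasurable]
          simp_rw [exp_sum]
        rw [hc, integral_fintype_prod_eq_pow (ι := Fin N) (fun z => exp (θ * hh K z)), Fintype.card_fin, exp_nat_mul]
        exact pow_le_pow_left₀ (integral_nonneg fun _ => (exp_pos _).le)
          (hh_mgf p hK hb hν hθ0 hθ1) N
    _ = _ := by rw [← Finset.sum_mul, hw1, one_mul]

lemma measurable_T {K : X → X → ℝ} (hK : Measurable (Function.uncurry K))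
    (n1X n1Y n2X n2Y : ℕ) : Measurable (fun z : Sm X n1X n1Y n2X n2Y =>
      asymMMD K n1X n1Y n2X n2Y z.1 z.2) := by
  unfold asymMMD
  refine ((Measurable.sub ?_ ?_).sub ?_).add ?_ <;>
  · refine Measurable.const_mul ?_ _
    refine Finset.measurable_sum _ fun k _ => Finset.measurable_sum _ fun l _ => ?_
    exact measurable_K hK (by fun_prop) (by fun_prop)

lemma joint_zero (p : Measure X) [IsProbabilityMeasure p] {K : X → X → ℝ}
    (hK : Measurable (Function.uncurry K)) (hb : ∀ x y, |K x y| ≤ 1)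
    (hν : ∫ x, ∫ y, (K x y)^2 ∂p ∂p ≤ 0)
    {N n1X n1Y n2X n2Y : ℕ} (hN : 0 < N)
    (h1 : N ≤ n1X) (h2 : N ≤ n1Y) (h3 : N ≤ n2X) (h4 : N ≤ n2Y) :
    PP p n1X n1Y n2X n2Y {z | asymMMD K n1X n1Y n2X n2Y z.1 z.2 > 0} = 0 := by
  have ih : Integrable (fun z => (hh K z)^2) ((p.prod p).prod (p.prod p)) :=
    integrable_bdd ((measurable_hh hK).pow_const 2) (4^2) (fun u => by
      rw [abs_pow]; exact pow_le_pow_left₀ (abs_nonneg _) (abs_hh_le hb u) 2)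
  have h0 : ∫ z, (hh K z)^2 ∂((p.prod p).prod (p.prod p)) = 0 :=
    le_antisymm (by simpa using hh_var p hK hb hν) (integral_nonneg fun _ => sq_nonneg _)
  rw [integral_eq_zero_iff_of_nonneg (fun _ => sq_nonneg _) ih] at h0
  have h5 : ∀ (τ : Ix n1X n1Y n2X n2Y) (k : Fin N), ∀ᵐ z ∂(PP p n1X n1Y n2X n2Y),
      (hh K (Ph h1 h2 h3 h4 τ z k))^2 = 0 := by
    intro τ k
    have := (measurePreserving_eval (fun _ : Fin N => (p.prod p).prod (p.prod p)) k).comp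
      (mp_Ph p h1 h2 h3 h4 τ)
    exact this.quasiMeasurePreserving.ae h0
  have h6 : ∀ᵐ z ∂(PP p n1X n1Y n2X n2Y), ∀ (τ : Ix n1X n1Y n2X n2Y) (k : Fin N),
      (hh K (Ph h1 h2 h3 h4 τ z k))^2 = 0 :=
    ae_all_iff.2 fun τ => ae_all_iff.2 fun k => h5 τ k
  have h7 : ∀ᵐ z ∂(PP p n1X n1Y n2X n2Y), ¬ (asymMMD K n1X n1Y n2X n2Y z.1 z.2 > 0) := by
    filter_upwards [h6] with z hz
    rw [T_avg K hN h1 h2 h3 h4 z]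
    simp [fun τ k => pow_eq_zero_iff (two_ne_zero) |>.1 (hz τ k)]
  simpa [ae_iff] using h7

lemma good_set {A B : Type*} [MeasurableSpace A] [MeasurableSpace B] (μ : Measure A)
    (ρ : Measure B) [IsProbabilityMeasure μ] [IsProbabilityMeasure ρ] (S : Set (A × B))
    (hS : MeasurableSet S) {α γ : ℝ} (hα : 0 < α)
    (h : μ.prod ρ S ≤ ENNReal.ofReal (α * γ)) :
    ∃ E : Set A, MeasurableSet E ∧ 1 - ENNReal.ofReal γ ≤ μ E ∧
      ∀ a ∈ E, ρ (Prod.mk a ⁻¹' S) ≤ ENNReal.ofReal α := by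
  have hm : Measurable (fun a => ρ (Prod.mk a ⁻¹' S)) := measurable_measure_prodMk_left hS
  have hE : MeasurableSet {a | ρ (Prod.mk a ⁻¹' S) ≤ ENNReal.ofReal α} :=
    measurableSet_le hm measurable_const
  refine ⟨_, hE, ?_, fun a ha => ha⟩
  rw [Measure.prod_apply hS] at h
  have h2 := mul_meas_ge_le_lintegral (μ := μ) hm (ENNReal.ofReal α)
  have h3 : μ {a | ENNReal.ofReal α ≤ ρ (Prod.mk a ⁻¹' S)} ≤ ENNReal.ofReal γ := by
    have h4 := h2.trans h
    rw [ENNReal.ofReal_mul hα.le] at h4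
    exact (ENNReal.mul_le_mul_iff_right (by simpa using hα) ENNReal.ofReal_ne_top).1 h4
  have h5 : μ {a | ρ (Prod.mk a ⁻¹' S) ≤ ENNReal.ofReal α}ᶜ ≤ ENNReal.ofReal γ := by
    refine (measure_mono ?_).trans h3
    intro a ha
    simp only [Set.mem_compl_iff, Set.mem_ofPred_eq, not_le] at ha ⊢
    exact ha.le
  have h6 := prob_add_prob_compl (μ := μ) hE
  rw [tsub_le_iff_right, ← h6]
  gcongr


lemma choose_theta {ν m N l1 l2 : ℝ} (hν : 0 < ν) (hm : 0 < m) (hmN : m ≤ N)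
    (hl1 : 0 ≤ l1) (hl2 : 0 ≤ l2) (h : (max l1 l2)^2 / (9 * ν) ≤ m) :
    ∃ θ : ℝ, 0 ≤ θ ∧ θ ≤ 1/4 ∧
      (l1^2 + l2^2) / 4 ≤ N * (θ * (4 * (sqrt 1.1 * l2 + l1) * sqrt (ν / m)) - 4 * ν * θ^2) := by
  set M := max l1 l2 with hM
  set u := sqrt (ν / m) with hu
  have hu0 : 0 ≤ u := sqrt_nonneg _
  have hu2 : u^2 = ν / m := sq_sqrt (by positivity)
  have hM0 : 0 ≤ M := hl1.trans (le_max_left _ _)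
  have hMu : M * u ≤ 3 * ν := by
    refine abs_le_of_sq_le_sq' ?_ (by positivity) |>.2
    rw [mul_pow, hu2, ← mul_div_assoc, div_le_iff₀ hm]
    rw [div_le_iff₀ (by positivity)] at h
    nlinarith
  have hs : 1 ≤ sqrt 1.1 := by
    rw [one_le_sqrt]; norm_num
  refine ⟨M * u / (12 * ν), by positivity, ?_, ?_⟩
  · rw [div_le_iff₀ (by positivity)]; linarith
  · have e : M * u / (12 * ν) * (4 * (sqrt 1.1 * l2 + l1) * u) - 4 * ν * (M * u / (12 * ν))^2
        = ((sqrt 1.1 * l2 + l1) * M / 3 - M^2 / 36) / m := by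
      have : M * u / (12 * ν) * (4 * (sqrt 1.1 * l2 + l1) * u) - 4 * ν * (M * u / (12 * ν))^2
        = ((sqrt 1.1 * l2 + l1) * M / 3 - M^2 / 36) * u^2 / ν := by
        field_simp; ring
      rw [this, hu2]; field_simp
    rw [e]
    have hL : l2 + l1 ≤ sqrt 1.1 * l2 + l1 := by nlinarith
    have hA : (l1^2 + l2^2) / 4 ≤ (sqrt 1.1 * l2 + l1) * M / 3 - M^2 / 36 := by
      have : (l2 + l1) * M ≤ (sqrt 1.1 * l2 + l1) * M := by gcongr
      rcases le_total l1 l2 with h' | h'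
      · have : M = l2 := max_eq_right h'
        rw [this] at *
        nlinarith
      · have : M = l1 := max_eq_left h'
        rw [this] at *
        nlinarith
    refine hA.trans ?_
    rw [mul_div_assoc', le_div_iff₀ hm, mul_comm N]
    refine mul_le_mul_of_nonneg_left hmN (le_trans (by positivity) hA)

end
end AsymAux

/-- Theorem 3.2, Type-I error part (test-only bootstrap): under `H₀ : p = q`, with
`λ₍₂₎,₁ = √(4 log(4/α))`, `λ₍₁₎ = √(4 log(8/γ))` and threshold
`t_thres = 4(√1.1 λ₍₂₎,₁ + λ₍₁₎)√(ν/(c_a n))`, if `n > (λ₍₁₎/(0.1ν))²/(8c_a)` and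
`n > max{λ₍₁₎, λ₍₂₎,₁}²/(9νc_a)`, then there is a good event `E` of training data with
`P₍₁₎(E) ≥ 1 − γ`, under which `P₍₂₎[T̂_a > t_thres] ≤ α`. -/
theorem asym_mmd_type_I_error_testonly_bootstrap
    {d : ℕ} (𝒳 : Set (EuclideanSpace ℝ (Fin d))) (h𝒳 : MeasurableSet 𝒳)
    (K : 𝒳 → 𝒳 → ℝ)
    (hKmeas : Measurable (Function.uncurry K))
    (hKsym : ∀ x y, K x y = K y x)
    (hKpsd : ∀ (m : ℕ) (z : Fin m → 𝒳) (a : Fin m → ℝ),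
      0 ≤ ∑ i, ∑ j, a i * a j * K (z i) (z j))
    (hKbdd : ∀ x y, |K x y| ≤ 1)
    (p q : Measure 𝒳) [IsProbabilityMeasure p] [IsProbabilityMeasure q]
    (ν : ℝ) (hν1 : ν ≤ 1)
    (hνpp : ∫ x, ∫ y, (K x y)^2 ∂p ∂p ≤ ν)
    (hνpq : ∫ x, ∫ y, (K x y)^2 ∂q ∂p ≤ ν)
    (hνqq : ∫ x, ∫ y, (K x y)^2 ∂q ∂q ≤ ν)
    (n1X n1Y n2X n2Y : ℕ) (ca : ℝ) (hca : 0 < ca) (hca1 : ca < 1)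
    (hbal1 : ca * ((n1X + n1Y + n2X + n2Y : ℕ) : ℝ) ≤ (n1X : ℝ))
    (hbal2 : ca * ((n1X + n1Y + n2X + n2Y : ℕ) : ℝ) ≤ (n1Y : ℝ))
    (hbal3 : ca * ((n1X + n1Y + n2X + n2Y : ℕ) : ℝ) ≤ (n2X : ℝ))
    (hbal4 : ca * ((n1X + n1Y + n2X + n2Y : ℕ) : ℝ) ≤ (n2Y : ℝ))
    (hH0 : p = q)
    (α γ : ℝ) (hα : 0 < α) (hα1 : α < 1) (hγ : 0 < γ) (hγ1 : γ < 1)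
    (hn1 : ((n1X + n1Y + n2X + n2Y : ℕ) : ℝ) >
      (Real.sqrt (4 * Real.log (8/γ)) / (0.1 * ν))^2 / (8 * ca))
    (hn2 : ((n1X + n1Y + n2X + n2Y : ℕ) : ℝ) >
      (max (Real.sqrt (4 * Real.log (8/γ))) (Real.sqrt (4 * Real.log (4/α))))^2
        / (9 * ν * ca)) :
    ∃ E : Set ((Fin n1X → 𝒳) × (Fin n1Y → 𝒳)), MeasurableSet E ∧
      1 - ENNReal.ofReal γ ≤
        ((Measure.pi fun _ : Fin n1X => p).prod (Measure.pi fun _ : Fin n1Y => q)) E ∧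
      ∀ dtr ∈ E,
        ((Measure.pi fun _ : Fin n2X => p).prod (Measure.pi fun _ : Fin n2Y => q))
          {dte : (Fin n2X → 𝒳) × (Fin n2Y → 𝒳) |
            asymMMD K n1X n1Y n2X n2Y dtr dte >
              4 * (Real.sqrt 1.1 * Real.sqrt (4 * Real.log (4/α))
                    + Real.sqrt (4 * Real.log (8/γ)))
                * Real.sqrt (ν/(ca * ((n1X + n1Y + n2X + n2Y : ℕ) : ℝ)))}
          ≤ ENNReal.ofReal α := by
  subst hH0
  set n : ℝ := ((n1X + n1Y + n2X + n2Y : ℕ) : ℝ) with hn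
  have hn0 : 0 < n := lt_of_le_of_lt (by positivity) hn1
  set l1 := Real.sqrt (4 * Real.log (8/γ)) with hl1
  set l2 := Real.sqrt (4 * Real.log (4/α)) with hl2
  set t := 4 * (Real.sqrt 1.1 * l2 + l1) * Real.sqrt (ν/(ca * n)) with ht
  have hm : 0 < ca * n := by positivity
  have hν0 : 0 ≤ ν := le_trans
    (integral_nonneg fun x => integral_nonneg fun y => sq_nonneg _) hνpp
  obtain ⟨N, hmN, h1, h2, h3, h4⟩ : ∃ N : ℕ, ca * n ≤ N ∧ N ≤ n1X ∧ N ≤ n1Y ∧ N ≤ n2X ∧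
      N ≤ n2Y := by
    refine ⟨min (min n1X n1Y) (min n2X n2Y), ?_, by omega, by omega, by omega, by omega⟩
    push_cast
    exact le_min (le_min hbal1 hbal2) (le_min hbal3 hbal4)
  have hN : 0 < N := by
    have : (0 : ℝ) < N := hm.trans_le hmN
    exact_mod_cast this
  have mT := AsymAux.measurable_T hKmeas n1X n1Y n2X n2Y
  have hS : MeasurableSet {z : AsymAux.Sm 𝒳 n1X n1Y n2X n2Y |
      asymMMD K n1X n1Y n2X n2Y z.1 z.2 > t} := measurableSet_lt measurable_const mT
  refine AsymAux.good_set _ _ {z : AsymAux.Sm 𝒳 n1X n1Y n2X n2Y |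
      asymMMD K n1X n1Y n2X n2Y z.1 z.2 > t} hS hα ?_
  rcases hν0.eq_or_lt with h0 | h0
  · have ht0 : t = 0 := by rw [ht, ← h0]; simp
    rw [ht0]
    have := AsymAux.joint_zero p hKmeas hKbdd (hνpp.trans h0.ge) hN h1 h2 h3 h4
    rw [this]
    exact bot_le
  · have hl2' : l2^2 = 4 * Real.log (4/α) := Real.sq_sqrt (by
      have : 0 ≤ Real.log (4/α) := Real.log_nonneg (by rw [le_div_iff₀ hα]; linarith)
      linarith)
    have hl1' : l1^2 = 4 * Real.log (8/γ) := Real.sq_sqrt (by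
      have : 0 ≤ Real.log (8/γ) := Real.log_nonneg (by rw [le_div_iff₀ hγ]; linarith)
      linarith)
    obtain ⟨θ, hθ0, hθ1, hθ⟩ := AsymAux.choose_theta (l1 := l1) (l2 := l2) h0 hm hmN
      (Real.sqrt_nonneg _) (Real.sqrt_nonneg _) (by
        have := hn2.le
        rw [div_le_iff₀ (by positivity)] at this ⊢
        nlinarith)
    obtain ⟨hi, hmgf⟩ := AsymAux.joint_mgf p hKmeas hKbdd hνpp hθ0 hθ1 hN h1 h2 h3 h4
    have hch := ProbabilityTheory.measure_ge_le_exp_mul_mgf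
      (μ := AsymAux.PP p n1X n1Y n2X n2Y)
      (X := fun z => asymMMD K n1X n1Y n2X n2Y z.1 z.2) (t := N * θ) t (by positivity) hi
    have hfin : (AsymAux.PP p n1X n1Y n2X n2Y).real
        {z | t ≤ asymMMD K n1X n1Y n2X n2Y z.1 z.2} ≤ α * γ := by
      refine hch.trans ?_
      calc _ ≤ Real.exp (-(N * θ) * t) * Real.exp (N * (4 * ν * θ^2)) :=
            mul_le_mul_of_nonneg_left hmgf (Real.exp_pos _).le
        _ ≤ Real.exp (-Real.log (4/α) + -Real.log (8/γ)) := by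
            rw [← Real.exp_add, Real.exp_le_exp]
            rw [← ht, hl1', hl2'] at hθ
            linarith
        _ = (α / 4) * (γ / 8) := by
            rw [Real.exp_add, Real.exp_neg, Real.exp_neg, Real.exp_log (by positivity),
              Real.exp_log (by positivity), inv_div, inv_div]
        _ ≤ α * γ := by nlinarith [mul_pos hα hγ]
    have hsub : {z : AsymAux.Sm 𝒳 n1X n1Y n2X n2Y | asymMMD K n1X n1Y n2X n2Y z.1 z.2 > t} ⊆
        {z : AsymAux.Sm 𝒳 n1X n1Y n2X n2Y | t ≤ asymMMD K n1X n1Y n2X n2Y z.1 z.2} := by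
      intro z hz
      simp only [Set.mem_ofPred_eq] at hz ⊢
      exact hz.le
    refine (measure_mono hsub).trans ?_
    exact (ENNReal.le_ofReal_iff_toReal_le (measure_ne_top _ _) (by positivity)).2 hfin
end

section
/- (Theorem 3.2, power part, test-only bootstrap.) Assume the alternative hypothesis p ≠ q with δ_K > 0. Let α_level, γ ∈ (0,1), define λ_{(2),1} = √(4 log(4/α_level)), λ_{(1)} = √(4 log(8/γ)), and the threshold t_thres = 4 (√(1.1) λ_{(2),1} + λ_{(1)}) √(ν/(c_a n)). If n > (λ_{(1)}/(0.1 ν))²/(8 c_a) and for some λ_{(2),2} > 0, n > (1/c_a) · max{ max{λ_{(1)}, λ_{(2),1}, λ_{(2),2}}²/(9 ν), (16 ν/δ_K²)·(2 λ_{(1)} + √(1.1)(λ_{(2),1} + λ_{(2),2}))² }, then there exists a measurable set E of training configurations D_tr with P_(1)(E) ≥ 1 − γ such that for every D_tr ∈ E, the conditional probability P_(2)[ T̂_a ≤ t_thres ] ≤ 4 e^{−λ_{(2),2}²/4}. -/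
open MeasureTheory Real
open scoped BigOperators ENNReal

lemma aux_exp_le {x : ℝ} (h : |x| ≤ 3/2) : Real.exp x ≤ 1 + x + x^2 := by
  rw [abs_le] at h
  rcases le_total 0 x with hx | hx
  · have hb := Real.exp_bound' (x := x/2) (by linarith) (by linarith) (n := 4) (by norm_num)
    simp only [Finset.sum_range_succ, Finset.sum_range_zero, Nat.factorial] at hb
    norm_num at hb
    set y := x/2 with hy
    have hxy : x = y + y := by rw [hy]; ring
    have h0 : 0 ≤ y := by linarith
    have h1 : y ≤ 3/4 := by linarith
    have hb2 : Real.exp y ≤ 1 + y + (3/4) * y^2 := by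
      have e2 : y^3 ≤ 3/4 * y^2 := by nlinarith [sq_nonneg y]
      have e3 : y^4 ≤ 9/16 * y^2 := by nlinarith [sq_nonneg y]
      nlinarith [sq_nonneg y]
    have hE : Real.exp x = Real.exp y * Real.exp y := by rw [hxy, Real.exp_add]
    rw [hE]
    have hp := Real.exp_pos y
    have : Real.exp y * Real.exp y ≤ (1 + y + (3/4) * y^2) * (1 + y + (3/4) * y^2) :=
      mul_le_mul hb2 hb2 hp.le (by positivity)
    have e2 : y^3 ≤ 3/4 * y^2 := by nlinarith [sq_nonneg y]
    have e3 : y^4 ≤ 9/16 * y^2 := by nlinarith [sq_nonneg y]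
    rw [hxy]
    nlinarith [sq_nonneg y]
  · rcases le_total (-1) x with h1 | h1
    · have := Real.abs_exp_sub_one_sub_id_le (x := x) (by rw [abs_le]; constructor <;> linarith)
      have := (abs_le.1 this).2
      linarith
    · have : Real.exp x ≤ 1 := Real.exp_le_one_iff.2 hx
      nlinarith

lemma aux_int_s7 {X : Type*} [MeasurableSpace X] (μ : Measure X) [IsFiniteMeasure μ] {f : X → ℝ}
    (hf : Measurable f) {C : ℝ} (hb : ∀ x, |f x| ≤ C) : Integrable f μ :=
  Integrable.of_bound hf.aestronglyMeasurable C (Filter.Eventually.of_forall hb)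

lemma aux_jensen {X : Type*} [MeasurableSpace X] (μ : Measure X) [IsProbabilityMeasure μ]
    {f : X → ℝ} (hf : Measurable f) (hb : ∀ x, |f x| ≤ 1) :
    (∫ x, f x ∂μ)^2 ≤ ∫ x, (f x)^2 ∂μ := by
  set a := ∫ x, f x ∂μ with ha
  have i1 := aux_int_s7 μ hf hb
  have i2 : Integrable (fun x => (f x)^2) μ := aux_int_s7 μ (hf.pow_const 2) (C := 1) (by
    intro x; rw [abs_pow]; exact pow_le_one₀ (abs_nonneg _) (hb x))
  have : 0 ≤ ∫ x, (f x - a)^2 ∂μ := integral_nonneg (fun x => sq_nonneg _)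
  have e : ∫ x, (f x - a)^2 ∂μ = (∫ x, (f x)^2 ∂μ) - 2*a*a + a^2 := by
    have : (fun x => (f x - a)^2) = fun x => ((f x)^2 - 2*a*f x) + a^2 := by
      funext x; ring
    have i3 : Integrable (fun x => (f x)^2 - 2*a*f x) μ := i2.sub (i1.const_mul _)
    rw [this, integral_add i3 (integrable_const _),
      integral_sub i2 (i1.const_mul _), integral_const_mul, ← ha]
    simp
  nlinarith

lemma aux_chernoff {X : Type*} [MeasurableSpace X] (μ : Measure X) [IsProbabilityMeasure μ]
    {f : X → ℝ} (hf : Measurable f) (hb : ∀ x, |f x| ≤ 1) (N : ℕ) (θ τ c : ℝ) (hθ : 0 ≤ θ)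
    (hc : ∫ x, Real.exp (θ * f x) ∂μ ≤ Real.exp (θ * (∫ x, f x ∂μ) + c)) :
    (Measure.pi fun _ : Fin N => μ) {x | N * ((∫ x, f x ∂μ) + τ) ≤ ∑ i, f (x i)}
      ≤ ENNReal.ofReal (Real.exp (N * (c - θ * τ))) := by
  set P := Measure.pi fun _ : Fin N => μ with hP
  set a := ∫ x, f x ∂μ with ha
  have hmeas : Measurable (fun x : Fin N → X => ∑ i, f (x i)) :=
    Finset.measurable_sum _ (fun i _ => hf.comp (measurable_pi_apply i))
  have hsb : ∀ x : Fin N → X, |∑ i, f (x i)| ≤ N := fun x => by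
    refine (Finset.abs_sum_le_sum_abs _ _).trans ?_
    refine (Finset.sum_le_sum (fun i _ => hb (x i))).trans ?_
    simp
  have hint : Integrable (fun x : Fin N → X => Real.exp (θ * ∑ i, f (x i))) P := by
    refine aux_int_s7 P (hmeas.const_mul θ).exp (C := Real.exp (θ * N)) (fun x => ?_)
    rw [abs_of_pos (Real.exp_pos _)]
    exact Real.exp_le_exp.2 (mul_le_mul_of_nonneg_left ((le_abs_self _).trans (hsb x)) hθ)
  have hprod : ∫ x, Real.exp (θ * ∑ i, f (x i)) ∂P = (∫ x, Real.exp (θ * f x) ∂μ)^N := by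
    have : (fun x : Fin N → X => Real.exp (θ * ∑ i, f (x i)))
        = fun x => ∏ i, Real.exp (θ * f (x i)) := by
      funext x; rw [Finset.mul_sum, Real.exp_sum]
    rw [this, hP, integral_fintype_prod_eq_pow (ι := Fin N) (fun x => Real.exp (θ * f x))]
    simp
  have hle : ∫ x, Real.exp (θ * ∑ i, f (x i)) ∂P ≤ Real.exp (N * (θ * a + c)) := by
    rw [hprod, Real.exp_nat_mul]
    exact pow_le_pow_left₀ (integral_nonneg (fun x => (Real.exp_pos _).le)) hc N
  have hmk := mul_meas_ge_le_integral_of_nonneg (μ := P)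
    (Filter.Eventually.of_forall (fun x => (Real.exp_pos (θ * ∑ i, f (x i))).le)) hint
    (Real.exp (θ * (N * (a + τ))))
  have hsub : P.real {x | N * (a + τ) ≤ ∑ i, f (x i)} ≤
      P.real {x | Real.exp (θ * (N * (a + τ))) ≤ Real.exp (θ * ∑ i, f (x i))} := by
    refine measureReal_mono (fun x hx => ?_)
    exact Real.exp_le_exp.2 (mul_le_mul_of_nonneg_left hx hθ)
  have hfin : P.real {x | N * (a + τ) ≤ ∑ i, f (x i)} ≤ Real.exp (N * (c - θ * τ)) := by
    have h1 := hmk.trans hle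
    have hpos := Real.exp_pos (θ * (N * (a + τ)))
    have h2 : Real.exp (N * (θ * a + c)) =
        Real.exp (θ * (N * (a + τ))) * Real.exp (N * (c - θ * τ)) := by
      rw [← Real.exp_add]; congr 1; ring
    rw [h2] at h1
    exact hsub.trans (le_of_mul_le_mul_left h1 hpos)
  rw [← ENNReal.ofReal_toReal (measure_ne_top P _)]
  exact ENNReal.ofReal_le_ofReal hfin

lemma aux_bernstein {X : Type*} [MeasurableSpace X] (μ : Measure X) [IsProbabilityMeasure μ]
    {f : X → ℝ} (hf : Measurable f) (hb : ∀ x, |f x| ≤ 1) (N : ℕ) (v τ L : ℝ) (hv : 0 < v)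
    (hτ0 : 0 ≤ τ) (hτ : τ ≤ 3 * v) (hm : ∫ x, (f x)^2 ∂μ ≤ v) (hL : L^2 * v ≤ N * τ^2) :
    (Measure.pi fun _ : Fin N => μ) {x | N * ((∫ x, f x ∂μ) + τ) ≤ ∑ i, f (x i)}
      ≤ ENNReal.ofReal (Real.exp (-L^2/4)) := by
  set θ := τ / (2*v) with hθd
  have hθ : 0 ≤ θ := by positivity
  have hθ1 : θ ≤ 3/2 := by rw [hθd, div_le_iff₀ (by positivity)]; linarith
  have hθv : θ * (2 * v) = τ := by rw [hθd]; field_simp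
  refine (aux_chernoff μ hf hb N θ τ (θ^2 * v) hθ ?_).trans (ENNReal.ofReal_le_ofReal
    (Real.exp_le_exp.2 ?_))
  · have i1 := aux_int_s7 μ hf hb
    have i2 : Integrable (fun x => (f x)^2) μ := aux_int_s7 μ (hf.pow_const 2) (C := 1) (by
      intro x; rw [abs_pow]; exact pow_le_one₀ (abs_nonneg _) (hb x))
    have i3 : Integrable (fun x => (1 + θ * f x) + θ^2 * (f x)^2) μ :=
      ((integrable_const _).add (i1.const_mul _)).add (i2.const_mul _)
    have hpt : ∀ x, |θ * f x| ≤ 3/2 := fun x => by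
      rw [abs_mul, abs_of_nonneg hθ]
      have := hb x
      have := abs_nonneg (f x)
      nlinarith
    have i4 : Integrable (fun x => Real.exp (θ * f x)) μ :=
      aux_int_s7 μ (hf.const_mul θ).exp (C := Real.exp (3/2)) (fun x => by
        rw [abs_of_pos (Real.exp_pos _)]
        exact Real.exp_le_exp.2 ((le_abs_self _).trans (hpt x)))
    have h1 : ∫ x, Real.exp (θ * f x) ∂μ ≤ ∫ x, ((1 + θ * f x) + θ^2 * (f x)^2) ∂μ := by
      refine integral_mono i4 i3 (fun x => ?_)
      have := aux_exp_le (hpt x)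
      simp only
      linarith [mul_pow θ (f x) 2]
    have i5 : Integrable (fun x => 1 + θ * f x) μ := (integrable_const _).add (i1.const_mul _)
    rw [integral_add i5 (i2.const_mul _),
      integral_add (integrable_const _) (i1.const_mul _), integral_const_mul,
      integral_const_mul] at h1
    simp only [integral_const, probReal_univ, smul_eq_mul, mul_one] at h1
    have h2 := Real.add_one_le_exp (θ * (∫ x, f x ∂μ) + θ^2 * v)
    nlinarith [sq_nonneg θ]
  · have e : θ^2 * v - θ * τ = - (θ^2 * v) := by rw [← hθv]; ring
    have e2 : τ^2 = 4 * v * (θ^2 * v) := by rw [← hθv]; ring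
    rw [e]
    rw [e2] at hL
    have : v * L^2 ≤ v * (N * (4 * (θ^2 * v))) := by linarith
    have := le_of_mul_le_mul_left this hv
    linarith

lemma aux_hoeffding {X : Type*} [MeasurableSpace X] (μ : Measure X) [IsProbabilityMeasure μ]
    {f : X → ℝ} (hf : Measurable f) (h0 : ∀ x, 0 ≤ f x) (h1 : ∀ x, f x ≤ 1) (N : ℕ) (τ L : ℝ)
    (hτ0 : 0 ≤ τ) (hL : L^2 ≤ 8 * N * τ^2) :
    (Measure.pi fun _ : Fin N => μ) {x | N * ((∫ x, f x ∂μ) + τ) ≤ ∑ i, f (x i)}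
      ≤ ENNReal.ofReal (Real.exp (-L^2/4)) := by
  refine (aux_chernoff μ hf (fun x => ?_) N (4*τ) τ (2 * τ^2) (by positivity) ?_).trans
    (ENNReal.ofReal_le_ofReal (Real.exp_le_exp.2 (by linarith)))
  · rw [abs_of_nonneg (h0 x)]; exact h1 x
  · have hs := (ProbabilityTheory.hasSubgaussianMGF_of_mem_Icc (μ := μ) (X := f) (a := 0) (b := 1)
      hf.aemeasurable (Filter.Eventually.of_forall fun x => ⟨h0 x, h1 x⟩)).mgf_le (4*τ)
    rw [ProbabilityTheory.mgf] at hs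
    set a := ∫ x, f x ∂μ
    have e : (fun x => Real.exp (4 * τ * f x)) =
        fun x => Real.exp (4*τ*a) * Real.exp (4 * τ * (f x - a)) := by
      funext x; rw [← Real.exp_add]; congr 1; ring
    rw [e, integral_const_mul, Real.exp_add]
    refine mul_le_mul_of_nonneg_left (hs.trans (Real.exp_le_exp.2 ?_)) (Real.exp_pos _).le
    apply le_of_eq
    push_cast
    norm_num
    ring

lemma aux_h_meas {X : Type*} [MeasurableSpace X] (μ : Measure X) [IsProbabilityMeasure μ]
    {G : X → X → ℝ} (hG : Measurable (Function.uncurry G)) :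
    Measurable (fun z => ∫ x, G z x ∂μ) :=
  (hG.stronglyMeasurable.integral_prod_right' (ν := μ)).measurable

lemma aux_right_meas {X : Type*} [MeasurableSpace X]
    {G : X → X → ℝ} (hG : Measurable (Function.uncurry G)) (z : X) :
    Measurable (fun x => G z x) := hG.comp measurable_prodMk_left

lemma aux_left_meas {X : Type*} [MeasurableSpace X]
    {G : X → X → ℝ} (hG : Measurable (Function.uncurry G)) (z : X) :
    Measurable (fun x => G x z) := hG.comp measurable_prodMk_right

lemma aux_swap {X : Type*} [MeasurableSpace X] (p q : Measure X) [IsProbabilityMeasure p]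
    [IsProbabilityMeasure q] {G : X → X → ℝ} (hG : Measurable (Function.uncurry G))
    (hs : ∀ x y, G x y = G y x) (hb : ∀ x y, |G x y| ≤ 1) :
    ∫ x, ∫ y, G x y ∂p ∂q = ∫ x, ∫ y, G x y ∂q ∂p := by
  rw [integral_integral_swap (aux_int_s7 (q.prod p) hG (C := 1) (fun z => hb z.1 z.2))]
  simp_rw [fun x y => hs x y]

lemma aux_abs_int {X : Type*} [MeasurableSpace X] (μ : Measure X) [IsProbabilityMeasure μ]
    {f : X → ℝ} (hb : ∀ x, |f x| ≤ 1) : |∫ x, f x ∂μ| ≤ 1 := by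
  have := norm_integral_le_of_norm_le_const (μ := μ) (f := f) (C := 1)
    (Filter.Eventually.of_forall hb)
  simpa using this

lemma aux_avg {X : Type*} [MeasurableSpace X] (μ : Measure X) [IsProbabilityMeasure μ]
    {K : X → X → ℝ} (hK : Measurable (Function.uncurry K))
    (hs : ∀ x y, K x y = K y x) (hb : ∀ x y, |K x y| ≤ 1) (n : ℕ) (hn : 0 < n) (x : Fin n → X) :
    Measurable (fun z => (1/(n:ℝ)) * ∑ j, K z (x j)) ∧
    (∀ z, |(1/(n:ℝ)) * ∑ j, K z (x j)| ≤ 1) ∧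
    (∫ z, (1/(n:ℝ)) * ∑ j, K z (x j) ∂μ = (1/(n:ℝ)) * ∑ j, ∫ z, K (x j) z ∂μ) ∧
    (∫ z, ((1/(n:ℝ)) * ∑ j, K z (x j))^2 ∂μ ≤ (1/(n:ℝ)) * ∑ j, ∫ z, (K (x j) z)^2 ∂μ) := by
  have hn' : (0:ℝ) < n := by exact_mod_cast hn
  have hm : Measurable (fun z => (1/(n:ℝ)) * ∑ j, K z (x j)) :=
    (Finset.measurable_sum _ (fun j _ => aux_left_meas hK (x j))).const_mul _
  have hB : ∀ z, |(1/(n:ℝ)) * ∑ j, K z (x j)| ≤ 1 := fun z => by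
    rw [abs_mul, abs_of_pos (by positivity : (0:ℝ) < 1/n)]
    have h1 : |∑ j, K z (x j)| ≤ n := by
      refine (Finset.abs_sum_le_sum_abs _ _).trans ?_
      refine (Finset.sum_le_sum (fun i _ => hb z (x i))).trans ?_
      simp
    rw [one_div, inv_mul_le_iff₀ hn']
    linarith
  have hsq : ∀ a b, |(K a b)^2| ≤ 1 := fun a b => by
    rw [abs_pow]; exact pow_le_one₀ (abs_nonneg _) (hb a b)
  have is : ∀ j ∈ Finset.univ, Integrable (fun z => (K z (x j))^2) μ := fun j _ =>
    aux_int_s7 μ ((aux_left_meas hK (x j)).pow_const 2) (fun z => hsq z (x j))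
  refine ⟨hm, hB, ?_, ?_⟩
  · rw [integral_const_mul, integral_finsetSum _
      (fun j _ => aux_int_s7 μ (aux_left_meas hK (x j)) (fun z => hb z (x j)))]
    simp_rw [fun z j => hs z (x j)]
  · have : ∫ z, ((1/(n:ℝ)) * ∑ j, K z (x j))^2 ∂μ ≤ ∫ z, (1/(n:ℝ)) * ∑ j, (K z (x j))^2 ∂μ := by
      refine integral_mono (aux_int_s7 μ (hm.pow_const 2) (C := 1) (fun z => ?_))
        ((integrable_finsetSum _ is).const_mul _) (fun z => ?_)
      · rw [abs_pow]; exact pow_le_one₀ (abs_nonneg _) (hB z)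
      · have h := sq_sum_le_card_mul_sum_sq (s := Finset.univ) (f := fun j => K z (x j))
        simp only [Finset.card_univ, Fintype.card_fin] at h
        simp only
        rw [mul_pow, one_div, inv_pow, inv_mul_le_iff₀ (by positivity)]
        refine h.trans (le_of_eq ?_)
        field_simp
    refine this.trans (le_of_eq ?_)
    rw [integral_const_mul, integral_finsetSum _ is]
    simp_rw [fun z j => hs z (x j)]

lemma aux_prod_bad {X Y : Type*} [MeasurableSpace X] [MeasurableSpace Y] (P : Measure X)
    (Q : Measure Y) [IsProbabilityMeasure P] [IsProbabilityMeasure Q] (A : Set X) (B : Set Y) :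
    (P.prod Q) (Prod.fst ⁻¹' A ∪ Prod.snd ⁻¹' B) ≤ P A + Q B := by
  refine (measure_union_le _ _).trans (add_le_add ?_ ?_)
  · rw [show Prod.fst ⁻¹' A = A ×ˢ (Set.univ : Set Y) by ext; simp, Measure.prod_prod]; simp
  · rw [show Prod.snd ⁻¹' B = (Set.univ : Set X) ×ˢ B by ext; simp, Measure.prod_prod]; simp

lemma aux_neg_sq {X : Type*} [MeasurableSpace X] (μ : Measure X) (f : X → ℝ) :
    ∫ x, (-f x)^2 ∂μ = ∫ x, (f x)^2 ∂μ := by simp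

/-- conditional (test) step -/
lemma aux_test {X : Type*} [MeasurableSpace X] (p q : Measure X) [IsProbabilityMeasure p]
    [IsProbabilityMeasure q] {f g : X → ℝ} (hf : Measurable f) (hg : Measurable g)
    (hfb : ∀ x, |f x| ≤ 1) (hgb : ∀ x, |g x| ≤ 1) (N M : ℕ) (hN : 0 < N) (hM : 0 < M)
    (v τ L t : ℝ) (hv : 0 < v) (hτ0 : 0 ≤ τ) (hτ : τ ≤ 3 * v)
    (h1 : ∫ x, (f x)^2 ∂p ≤ v) (h2 : ∫ x, (f x)^2 ∂q ≤ v)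
    (h3 : ∫ x, (g x)^2 ∂p ≤ v) (h4 : ∫ x, (g x)^2 ∂q ≤ v)
    (hLN : L^2 * v ≤ N * τ^2) (hLM : L^2 * v ≤ M * τ^2)
    (ht : t < (∫ x, f x ∂p) - (∫ x, g x ∂p) - (∫ x, f x ∂q) + (∫ x, g x ∂q) - 4 * τ) :
    ((Measure.pi fun _ : Fin N => p).prod (Measure.pi fun _ : Fin M => q))
      {d : (Fin N → X) × (Fin M → X) |
        (1/(N:ℝ)) * ∑ i, f (d.1 i) - (1/(N:ℝ)) * ∑ i, g (d.1 i)
         - (1/(M:ℝ)) * ∑ i, f (d.2 i) + (1/(M:ℝ)) * ∑ i, g (d.2 i) ≤ t}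
      ≤ ENNReal.ofReal (4 * Real.exp (-L^2/4)) := by
  have hN' : (0:ℝ) < N := by exact_mod_cast hN
  have hM' : (0:ℝ) < M := by exact_mod_cast hM
  have b1 := aux_bernstein p hf.neg (f := fun x => - f x) (by simpa using hfb) N v τ L hv hτ0 hτ
    (by rw [aux_neg_sq]; exact h1) hLN
  have b2 := aux_bernstein p hg hgb N v τ L hv hτ0 hτ h3 hLN
  have b3 := aux_bernstein q hf hfb M v τ L hv hτ0 hτ h2 hLM
  have b4 := aux_bernstein q hg.neg (f := fun x => - g x) (by simpa using hgb) M v τ L hv hτ0 hτ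
    (by rw [aux_neg_sq]; exact h4) hLM
  rw [integral_neg] at b1 b4
  set A1 := {x : Fin N → X | N * (-(∫ x, f x ∂p) + τ) ≤ ∑ i, - f (x i)}
  set A2 := {x : Fin N → X | N * ((∫ x, g x ∂p) + τ) ≤ ∑ i, g (x i)}
  set B1 := {x : Fin M → X | M * ((∫ x, f x ∂q) + τ) ≤ ∑ i, f (x i)}
  set B2 := {x : Fin M → X | M * (-(∫ x, g x ∂q) + τ) ≤ ∑ i, - g (x i)}
  set e := Real.exp (-L^2/4)
  have he : 0 ≤ e := (Real.exp_pos _).le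
  have hfin : ENNReal.ofReal (4 * e) = (ENNReal.ofReal e + ENNReal.ofReal e) +
      (ENNReal.ofReal e + ENNReal.ofReal e) := by
    rw [← ENNReal.ofReal_add he he, ← ENNReal.ofReal_add (by positivity) (by positivity)]
    congr 1; ring
  rw [hfin]
  refine le_trans (measure_mono ?_) ((aux_prod_bad _ _ (A1 ∪ A2) (B1 ∪ B2)).trans
    (add_le_add ((measure_union_le _ _).trans (add_le_add b1 b2))
      ((measure_union_le _ _).trans (add_le_add b3 b4))))
  rintro ⟨x, y⟩ hxy
  by_contra hcon
  simp only [Set.mem_union, Set.mem_preimage, not_or, A1, A2, B1, B2, Set.mem_ofPred_eq, not_le,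
    Finset.sum_neg_distrib] at hcon hxy
  obtain ⟨⟨c1, c2⟩, c3, c4⟩ := hcon
  have key : ∀ (n s a : ℝ), 0 < n → s < n * a → (1/n) * s < a := fun n s a hn h => by
    rw [one_div, inv_mul_lt_iff₀ hn]; exact h
  have d1 := key _ _ _ hN' c1
  have d2 := key _ _ _ hN' c2
  have d3 := key _ _ _ hM' c3
  have d4 := key _ _ _ hM' c4
  linarith

lemma aux_meas_bad {X : Type*} [MeasurableSpace X] {f : X → ℝ} (hf : Measurable f) (N : ℕ) (c : ℝ) :
    MeasurableSet {x : Fin N → X | c ≤ ∑ i, f (x i)} :=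
  measurableSet_le measurable_const
    (Finset.measurable_sum _ (fun i _ => hf.comp (measurable_pi_apply i)))

/-- per-sample training bad event -/
lemma aux_train {X : Type*} [MeasurableSpace X] (μ : Measure X) [IsProbabilityMeasure μ]
    {a b V W : X → ℝ} (ha : Measurable a) (hb : Measurable b) (hV : Measurable V)
    (hW : Measurable W) (hab : ∀ x, |a x| ≤ 1) (hbb : ∀ x, |b x| ≤ 1)
    (hV0 : ∀ x, 0 ≤ V x) (hV1 : ∀ x, V x ≤ 1) (hW0 : ∀ x, 0 ≤ W x) (hW1 : ∀ x, W x ≤ 1)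
    (haV : ∀ x, (a x)^2 ≤ V x) (hbW : ∀ x, (b x)^2 ≤ W x)
    (v τ L : ℝ) (N : ℕ) (hN : 0 < N) (hv : 0 < v) (hτ0 : 0 ≤ τ) (hτ : τ ≤ 3 * v)
    (hVv : ∫ x, V x ∂μ ≤ v) (hWv : ∫ x, W x ∂μ ≤ v)
    (hL : L^2 * v ≤ N * τ^2) (hL2 : L^2 ≤ 8 * N * (0.1 * v)^2) :
    ∃ B : Set (Fin N → X), MeasurableSet B ∧
      (Measure.pi fun _ : Fin N => μ) B ≤ ENNReal.ofReal (4 * Real.exp (-L^2/4)) ∧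
      ∀ x ∉ B, (1/(N:ℝ)) * ∑ i, V (x i) ≤ 1.1 * v ∧ (1/(N:ℝ)) * ∑ i, W (x i) ≤ 1.1 * v ∧
        (∫ x, a x ∂μ) - τ - (∫ x, b x ∂μ) - τ
          ≤ (1/(N:ℝ)) * ∑ i, a (x i) - (1/(N:ℝ)) * ∑ i, b (x i) := by
  have hN' : (0:ℝ) < N := by exact_mod_cast hN
  have iV : Integrable V μ := aux_int_s7 μ hV (C := 1) (fun x => by
    rw [abs_of_nonneg (hV0 x)]; exact hV1 x)
  have iW : Integrable W μ := aux_int_s7 μ hW (C := 1) (fun x => by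
    rw [abs_of_nonneg (hW0 x)]; exact hW1 x)
  have ha2 : ∫ x, (a x)^2 ∂μ ≤ v := (integral_mono (aux_int_s7 μ (ha.pow_const 2) (C := 1) (by
      intro x; rw [abs_pow]; exact pow_le_one₀ (abs_nonneg _) (hab x))) iV haV).trans hVv
  have hb2 : ∫ x, (b x)^2 ∂μ ≤ v := (integral_mono (aux_int_s7 μ (hb.pow_const 2) (C := 1) (by
      intro x; rw [abs_pow]; exact pow_le_one₀ (abs_nonneg _) (hbb x))) iW hbW).trans hWv
  have b1 := aux_bernstein μ ha.neg (f := fun x => - a x) (by simpa using hab) N v τ L hv hτ0 hτ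
    (by rw [aux_neg_sq]; exact ha2) hL
  have b2 := aux_bernstein μ hb hbb N v τ L hv hτ0 hτ hb2 hL
  have b3 := aux_hoeffding μ hV hV0 hV1 N (0.1 * v) L (by positivity) hL2
  have b4 := aux_hoeffding μ hW hW0 hW1 N (0.1 * v) L (by positivity) hL2
  rw [integral_neg] at b1
  have m1 := aux_meas_bad ha.neg N (N * (-(∫ x, a x ∂μ) + τ))
  have m2 := aux_meas_bad hb N (N * ((∫ x, b x ∂μ) + τ))
  have m3 := aux_meas_bad hV N (N * ((∫ x, V x ∂μ) + 0.1 * v))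
  have m4 := aux_meas_bad hW N (N * ((∫ x, W x ∂μ) + 0.1 * v))
  simp only [Pi.neg_apply] at m1
  set A1 := {x : Fin N → X | N * (-(∫ x, a x ∂μ) + τ) ≤ ∑ i, - a (x i)}
  set A2 := {x : Fin N → X | N * ((∫ x, b x ∂μ) + τ) ≤ ∑ i, b (x i)}
  set A3 := {x : Fin N → X | N * ((∫ x, V x ∂μ) + 0.1 * v) ≤ ∑ i, V (x i)}
  set A4 := {x : Fin N → X | N * ((∫ x, W x ∂μ) + 0.1 * v) ≤ ∑ i, W (x i)}
  set e := Real.exp (-L^2/4)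
  have he : 0 ≤ e := (Real.exp_pos _).le
  have hfin : ENNReal.ofReal (4 * e) = (ENNReal.ofReal e + ENNReal.ofReal e) +
      (ENNReal.ofReal e + ENNReal.ofReal e) := by
    rw [← ENNReal.ofReal_add he he, ← ENNReal.ofReal_add (by positivity) (by positivity)]
    congr 1; ring
  refine ⟨(A1 ∪ A2) ∪ (A3 ∪ A4), (m1.union m2).union (m3.union m4), ?_, ?_⟩
  · rw [hfin]
    exact (measure_union_le _ _).trans
      (add_le_add ((measure_union_le _ _).trans (add_le_add b1 b2))
      ((measure_union_le _ _).trans (add_le_add b3 b4)))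
  · intro x hcon
    simp only [Set.mem_union, not_or, A1, A2, A3, A4, Set.mem_ofPred_eq, not_le,
      Finset.sum_neg_distrib] at hcon
    obtain ⟨⟨c1, c2⟩, c3, c4⟩ := hcon
    have key : ∀ (n s a : ℝ), 0 < n → s < n * a → (1/n) * s < a := fun n s a hn h => by
      rw [one_div, inv_mul_lt_iff₀ hn]; exact h
    have d1 := key _ _ _ hN' c1
    have d2 := key _ _ _ hN' c2
    have d3 := key _ _ _ hN' c3
    have d4 := key _ _ _ hN' c4
    refine ⟨by linarith, by linarith, by linarith⟩

set_option maxHeartbeats 2000000 in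
/-- Theorem 3.2, power part (test-only bootstrap): under `H₁ : p ≠ q` with `δ_K > 0`,
with `λ₍₂₎,₁ = √(4 log(4/α))`, `λ₍₁₎ = √(4 log(8/γ))` and threshold
`t_thres = 4(√1.1 λ₍₂₎,₁ + λ₍₁₎)√(ν/(c_a n))`, if `n > (λ₍₁₎/(0.1ν))²/(8c_a)` and
`n > (1/c_a)·max{max{λ₍₁₎, λ₍₂₎,₁, λ₍₂₎,₂}²/(9ν), (16ν/δ_K²)(2λ₍₁₎ + √1.1(λ₍₂₎,₁+λ₍₂₎,₂))²}`,
then there is a good event `E` of training data with `P₍₁₎(E) ≥ 1 − γ`, under which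
`P₍₂₎[T̂_a ≤ t_thres] ≤ 4 e^{−λ₍₂₎,₂²/4}`. -/
theorem asym_mmd_power_testonly_bootstrap
    {d : ℕ} (𝒳 : Set (EuclideanSpace ℝ (Fin d))) (h𝒳 : MeasurableSet 𝒳)
    (K : 𝒳 → 𝒳 → ℝ)
    (hKmeas : Measurable (Function.uncurry K))
    (hKsym : ∀ x y, K x y = K y x)
    (hKpsd : ∀ (m : ℕ) (z : Fin m → 𝒳) (a : Fin m → ℝ),
      0 ≤ ∑ i, ∑ j, a i * a j * K (z i) (z j))
    (hKbdd : ∀ x y, |K x y| ≤ 1)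
    (p q : Measure 𝒳) [IsProbabilityMeasure p] [IsProbabilityMeasure q]
    (ν : ℝ) (hν1 : ν ≤ 1)
    (hνpp : ∫ x, ∫ y, (K x y)^2 ∂p ∂p ≤ ν)
    (hνpq : ∫ x, ∫ y, (K x y)^2 ∂q ∂p ≤ ν)
    (hνqq : ∫ x, ∫ y, (K x y)^2 ∂q ∂q ≤ ν)
    (n1X n1Y n2X n2Y : ℕ) (ca : ℝ) (hca : 0 < ca) (hca1 : ca < 1)
    (hbal1 : ca * ((n1X + n1Y + n2X + n2Y : ℕ) : ℝ) ≤ (n1X : ℝ))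
    (hbal2 : ca * ((n1X + n1Y + n2X + n2Y : ℕ) : ℝ) ≤ (n1Y : ℝ))
    (hbal3 : ca * ((n1X + n1Y + n2X + n2Y : ℕ) : ℝ) ≤ (n2X : ℝ))
    (hbal4 : ca * ((n1X + n1Y + n2X + n2Y : ℕ) : ℝ) ≤ (n2Y : ℝ))
    (hH1 : p ≠ q) (hδ : 0 < deltaK K p q)
    (α γ : ℝ) (hα : 0 < α) (hα1 : α < 1) (hγ : 0 < γ) (hγ1 : γ < 1)
    (lam22 : ℝ) (hlam22 : 0 < lam22)
    (hn1 : ((n1X + n1Y + n2X + n2Y : ℕ) : ℝ) >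
      (Real.sqrt (4 * Real.log (8/γ)) / (0.1 * ν))^2 / (8 * ca))
    (hn2 : ((n1X + n1Y + n2X + n2Y : ℕ) : ℝ) > (1/ca) * max
      ((max (Real.sqrt (4 * Real.log (8/γ)))
          (max (Real.sqrt (4 * Real.log (4/α))) lam22))^2 / (9 * ν))
      ((16 * ν / (deltaK K p q)^2)
        * (2 * Real.sqrt (4 * Real.log (8/γ))
            + Real.sqrt 1.1 * (Real.sqrt (4 * Real.log (4/α)) + lam22))^2)) :
    ∃ E : Set ((Fin n1X → 𝒳) × (Fin n1Y → 𝒳)), MeasurableSet E ∧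
      1 - ENNReal.ofReal γ ≤
        ((Measure.pi fun _ : Fin n1X => p).prod (Measure.pi fun _ : Fin n1Y => q)) E ∧
      ∀ dtr ∈ E,
        ((Measure.pi fun _ : Fin n2X => p).prod (Measure.pi fun _ : Fin n2Y => q))
          {dte : (Fin n2X → 𝒳) × (Fin n2Y → 𝒳) |
            asymMMD K n1X n1Y n2X n2Y dtr dte ≤
              4 * (Real.sqrt 1.1 * Real.sqrt (4 * Real.log (4/α))
                    + Real.sqrt (4 * Real.log (8/γ)))
                * Real.sqrt (ν/(ca * ((n1X + n1Y + n2X + n2Y : ℕ) : ℝ)))}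
          ≤ ENNReal.ofReal (4 * Real.exp (-lam22^2 / 4)) := by
  obtain ⟨Nt, hNt⟩ : ∃ Nt : ℝ, Nt = ((n1X + n1Y + n2X + n2Y : ℕ) : ℝ) := ⟨_, rfl⟩
  rw [← hNt] at hbal1 hbal2 hbal3 hbal4 hn1 hn2
  rw [← hNt]
  clear hNt
  have hK2meas : Measurable (Function.uncurry (fun x y => (K x y)^2)) := hKmeas.pow_const 2
  have hK2sym : ∀ x y, (K x y)^2 = (K y x)^2 := fun x y => by rw [hKsym]
  have hK2b : ∀ x y, |(K x y)^2| ≤ 1 := fun a b => by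
    rw [abs_pow]; exact pow_le_one₀ (abs_nonneg _) (hKbdd a b)
  have hνqp : ∫ x, ∫ y, (K x y)^2 ∂p ∂q ≤ ν := by
    rw [aux_swap p q hK2meas hK2sym hK2b]; exact hνpq
  have hswap := aux_swap p q hKmeas hKsym hKbdd
  -- functions
  have hm : ∀ (μ : Measure 𝒳) [IsProbabilityMeasure μ], Measurable (fun z => ∫ x, K z x ∂μ) :=
    fun μ _ => aux_h_meas μ hKmeas
  have Vm : ∀ (μ : Measure 𝒳) [IsProbabilityMeasure μ], Measurable (fun z => ∫ x, (K z x)^2 ∂μ) :=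
    fun μ _ => aux_h_meas μ hK2meas
  have hb : ∀ (μ : Measure 𝒳) [IsProbabilityMeasure μ], ∀ z, |∫ x, K z x ∂μ| ≤ 1 :=
    fun μ _ z => aux_abs_int μ (hKbdd z)
  have V0 : ∀ (μ : Measure 𝒳) [IsProbabilityMeasure μ], ∀ z, 0 ≤ ∫ x, (K z x)^2 ∂μ :=
    fun μ _ z => integral_nonneg (fun x => sq_nonneg _)
  have V1 : ∀ (μ : Measure 𝒳) [IsProbabilityMeasure μ], ∀ z, ∫ x, (K z x)^2 ∂μ ≤ 1 :=
    fun μ _ z => (le_abs_self _).trans (aux_abs_int μ (hK2b z))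
  have hV : ∀ (μ : Measure 𝒳) [IsProbabilityMeasure μ], ∀ z,
      (∫ x, K z x ∂μ)^2 ≤ ∫ x, (K z x)^2 ∂μ :=
    fun μ _ z => aux_jensen μ (aux_right_meas hKmeas z) (hKbdd z)
  have hdd : ∀ (μ ρ : Measure 𝒳) [IsProbabilityMeasure μ] [IsProbabilityMeasure ρ],
      (∫ z, ∫ x, K z x ∂μ ∂ρ)^2 ≤ ∫ z, ∫ x, (K z x)^2 ∂μ ∂ρ := fun μ ρ _ _ => by
    refine (aux_jensen ρ (hm μ) (hb μ)).trans (integral_mono ?_ ?_ (hV μ))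
    · refine aux_int_s7 ρ ((hm μ).pow_const 2) (C := 1) (fun z => ?_)
      rw [abs_pow]; exact pow_le_one₀ (abs_nonneg _) (hb μ z)
    · refine aux_int_s7 ρ (Vm μ) (C := 1) (fun z => ?_)
      rw [abs_of_nonneg (V0 μ z)]; exact V1 μ z
  have hν : 0 < ν := by
    by_contra hcon
    have hc : ν ≤ 0 := not_lt.1 hcon
    have z1 := pow_eq_zero_iff (two_ne_zero) |>.1
      (le_antisymm ((hdd p p).trans (hνpp.trans hc)) (sq_nonneg _))
    have z2 := pow_eq_zero_iff (two_ne_zero) |>.1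
      (le_antisymm ((hdd q p).trans (hνpq.trans hc)) (sq_nonneg _))
    have z3 := pow_eq_zero_iff (two_ne_zero) |>.1
      (le_antisymm ((hdd q q).trans (hνqq.trans hc)) (sq_nonneg _))
    rw [deltaK, z1, z2, z3] at hδ
    norm_num at hδ
  -- constants
  obtain ⟨L1, hL1⟩ : ∃ L1, L1 = Real.sqrt (4 * Real.log (8/γ)) := ⟨_, rfl⟩
  obtain ⟨L2, hL2⟩ : ∃ L2, L2 = Real.sqrt (4 * Real.log (4/α)) := ⟨_, rfl⟩
  rw [← hL1] at hn1 hn2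
  rw [← hL2] at hn2
  rw [← hL1, ← hL2]
  have hL1n : 0 ≤ L1 := by rw [hL1]; exact Real.sqrt_nonneg _
  have hL2n : 0 ≤ L2 := by rw [hL2]; exact Real.sqrt_nonneg _
  have hlog : 0 ≤ Real.log (8/γ) := Real.log_nonneg (by rw [le_div_iff₀ hγ]; linarith)
  have hexp : Real.exp (-L1^2/4) = γ/8 := by
    rw [hL1, Real.sq_sqrt (by positivity),
      show -(4 * Real.log (8/γ))/4 = -Real.log (8/γ) by ring, Real.exp_neg,
      Real.exp_log (by positivity), inv_div]
  clear hL1 hL2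
  have hNtpos : 0 < Nt := lt_of_le_of_lt (by positivity) hn1
  obtain ⟨m, hmd⟩ : ∃ m, m = ca * Nt := ⟨_, rfl⟩
  have hmpos : 0 < m := by rw [hmd]; positivity
  have hH : L1^2 < 8 * m * (0.1 * ν)^2 := by
    rw [gt_iff_lt, div_lt_iff₀ (by positivity), div_pow, div_lt_iff₀ (by positivity)] at hn1
    rw [hmd]; linarith
  rw [gt_iff_lt, one_div, inv_mul_lt_iff₀ hca, ← hmd, max_lt_iff, div_lt_iff₀ (by positivity)] at hn2
  obtain ⟨hM, hQ⟩ := hn2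
  rw [← hmd] at hbal1 hbal2 hbal3 hbal4
  rw [← hmd]
  have hM1 : L1^2 ≤ m * (9 * ν) := (pow_le_pow_left₀ hL1n (le_max_left _ _) 2).trans hM.le
  have hM2 : lam22^2 ≤ m * (9 * ν) := (pow_le_pow_left₀ hlam22.le
    ((le_max_right _ _).trans (le_max_right _ _)) 2).trans hM.le
  obtain ⟨s, hs⟩ : ∃ s, s = Real.sqrt (ν/m) := ⟨_, rfl⟩
  have hs0 : 0 ≤ s := by rw [hs]; exact Real.sqrt_nonneg _
  have hs2 : m * s^2 = ν := by rw [hs, Real.sq_sqrt (by positivity)]; field_simp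
  rw [← hs]
  have hsL : ∀ L, 0 ≤ L → L^2 ≤ m * (9 * ν) → s * L ≤ 3 * ν := fun L hL h => by
    refine le_of_sq_le_sq ?_ (by positivity)
    have : s^2 * L^2 ≤ s^2 * (m * (9*ν)) := mul_le_mul_of_nonneg_left h (by positivity)
    calc (s*L)^2 = s^2 * L^2 := by ring
      _ ≤ s^2 * (m * (9*ν)) := this
      _ = (m * s^2) * (9 * ν) := by ring
      _ = (3*ν)^2 := by rw [hs2]; ring
  obtain ⟨r, hr⟩ : ∃ r, r = Real.sqrt 1.1 := ⟨_, rfl⟩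
  rw [← hr] at hQ
  rw [← hr]
  have hr0 : 0 ≤ r := by rw [hr]; exact Real.sqrt_nonneg _
  have hr2 : r^2 = 1.1 := by rw [hr, Real.sq_sqrt (by norm_num)]
  have hr1 : r ≤ 1.1 := by nlinarith
  have hδQ : 4 * s * (2 * L1 + r * (L2 + lam22)) < deltaK K p q := by
    refine lt_of_pow_lt_pow_left₀ 2 hδ.le ?_
    rw [div_mul_eq_mul_div, div_lt_iff₀ (by positivity), ← hs2] at hQ
    have : m * ((4 * s * (2 * L1 + r * (L2 + lam22)))^2) < m * (deltaK K p q)^2 := by linarith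
    exact lt_of_mul_lt_mul_left this hmpos.le
  -- positivity of sample sizes
  have hp1 : 0 < n1X := by have : (0:ℝ) < n1X := by linarith
                           exact_mod_cast this
  have hp2 : 0 < n1Y := by have : (0:ℝ) < n1Y := by linarith
                           exact_mod_cast this
  have hp3 : 0 < n2X := by have : (0:ℝ) < n2X := by linarith
                           exact_mod_cast this
  have hp4 : 0 < n2Y := by have : (0:ℝ) < n2Y := by linarith
                           exact_mod_cast this
  have hB1 : ∀ N : ℕ, m ≤ N → L1^2 * ν ≤ N * (s * L1)^2 := fun N hN => by
    calc L1^2 * ν = m * (s*L1)^2 := by rw [← hs2]; ring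
      _ ≤ N * (s*L1)^2 := mul_le_mul_of_nonneg_right hN (by positivity)
  have hB2 : ∀ N : ℕ, m ≤ N → L1^2 ≤ 8 * N * (0.1 * ν)^2 := fun N hN => by
    refine hH.le.trans (mul_le_mul_of_nonneg_right (by linarith) (by positivity))
  have hB3 : ∀ N : ℕ, m ≤ N → lam22^2 * (1.1 * ν) ≤ N * (r * (s * lam22))^2 := fun N hN => by
    calc lam22^2 * (1.1 * ν) = m * (r * (s*lam22))^2 := by rw [← hs2, ← hr2]; ring
      _ ≤ N * (r * (s*lam22))^2 := mul_le_mul_of_nonneg_right hN (by positivity)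
  obtain ⟨BX, mX, PX, gX⟩ := aux_train p (hm p) (hm q) (Vm p) (Vm q) (hb p) (hb q) (V0 p) (V1 p)
    (V0 q) (V1 q) (hV p) (hV q) ν (s * L1) L1 n1X hp1 hν (by positivity) (hsL L1 hL1n hM1)
    hνpp hνpq (hB1 _ hbal1) (hB2 _ hbal1)
  obtain ⟨BY, mY, PY, gY⟩ := aux_train q (hm q) (hm p) (Vm q) (Vm p) (hb q) (hb p) (V0 q) (V1 q)
    (V0 p) (V1 p) (hV q) (hV p) ν (s * L1) L1 n1Y hp2 hν (by positivity) (hsL L1 hL1n hM1)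
    hνqq hνqp (hB1 _ hbal2) (hB2 _ hbal2)
  rw [hexp] at PX PY
  refine ⟨(Prod.fst ⁻¹' BX ∪ Prod.snd ⁻¹' BY)ᶜ,
    ((measurable_fst mX).union (measurable_snd mY)).compl, ?_, ?_⟩
  · rw [prob_compl_eq_one_sub ((measurable_fst mX).union (measurable_snd mY))]
    refine tsub_le_tsub_left ((aux_prod_bad _ _ BX BY).trans ((add_le_add PX PY).trans ?_)) 1
    rw [← ENNReal.ofReal_add (by positivity) (by positivity)]
    exact ENNReal.ofReal_le_ofReal (by linarith)
  · rintro ⟨x, y⟩ hxy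
    simp only [Set.mem_compl_iff, Set.mem_union, Set.mem_preimage, not_or] at hxy
    obtain ⟨x1, x2, x3⟩ := gX x hxy.1
    obtain ⟨y1, y2, y3⟩ := gY y hxy.2
    obtain ⟨fm, fb, fip, fsp⟩ := aux_avg p hKmeas hKsym hKbdd n1X hp1 x
    obtain ⟨-, -, fiq, fsq⟩ := aux_avg q hKmeas hKsym hKbdd n1X hp1 x
    obtain ⟨gm, gb, gip, gsp⟩ := aux_avg p hKmeas hKsym hKbdd n1Y hp2 y
    obtain ⟨-, -, giq, gsq⟩ := aux_avg q hKmeas hKsym hKbdd n1Y hp2 y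
    have hfinal := aux_test p q fm gm fb gb n2X n2Y hp3 hp4 (1.1 * ν) (r * (s * lam22)) lam22
      (4 * (r * L2 + L1) * s) (by positivity) (by positivity) (by
        have h1 := hsL lam22 hlam22.le hM2
        have h2 : 0 ≤ s * lam22 := by positivity
        nlinarith)
      (fsp.trans x1) (fsq.trans x2) (gsp.trans y2) (gsq.trans y1) (hB3 _ hbal3) (hB3 _ hbal4)
      (by
        rw [fip, fiq, gip, giq]
        rw [deltaK] at hδQ
        rw [hswap] at y3
        linarith)
    refine le_trans (measure_mono ?_) hfinal
    intro d hd
    simp only [Set.mem_ofPred_eq, asymMMD] at hd ⊢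
    simp only [← Finset.mul_sum, ← mul_assoc]
    simp only [one_div, mul_inv] at hd ⊢
    exact hd
end

section
/- (Theorem 3.3, Type-I error part, full bootstrap.) Assume the null hypothesis p = q. Let α_level ∈ (0,1), define λ₁ = √(8 log(4/α_level)) and the threshold t_thres = 4 λ₁ √(ν/(c_a n)). If n > λ₁²/(9 ν c_a), then the probability (under the joint product law of the four samples) that T̂_a > t_thres is at most α_level. -/
open MeasureTheory Real
open scoped BigOperators ENNReal

theorem core_aux {X : Type*} [MeasurableSpace X] (p : Measure X) [IsProbabilityMeasure p]
    {k l : ℕ} (σ : Fin k → Fin l) (hσ : Function.Injective σ) (g : X → X → ℝ)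
    (hg : Measurable (Function.uncurry g)) (C : ℝ) (hC : ∀ x y, |g x y| ≤ C) :
    ∫ z, ∏ i, g (z.2 i) (z.1 (σ i)) ∂((Measure.pi fun _ : Fin l => p).prod
      (Measure.pi fun _ : Fin k => p)) = (∫ y, ∫ x, g x y ∂p ∂p) ^ k := by
  classical
  have hint : Integrable (fun z : (Fin l → X) × (Fin k → X) => ∏ i, g (z.2 i) (z.1 (σ i)))
      ((Measure.pi fun _ : Fin l => p).prod (Measure.pi fun _ : Fin k => p)) := by
    refine Integrable.of_bound (C := ∏ _i : Fin k, C) ?_ ?_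
    · refine Measurable.aestronglyMeasurable ?_
      refine Finset.measurable_prod _ fun i _ => ?_
      exact hg.comp (f := fun z : (Fin l → X) × (Fin k → X) => (z.2 i, z.1 (σ i))) (by fun_prop)
    · refine Filter.Eventually.of_forall fun z => ?_
      rw [norm_prod]
      exact Finset.prod_le_prod (fun _ _ => norm_nonneg _) (fun i _ => hC _ _)
  rw [integral_prod _ hint]
  have h1 : ∀ a : Fin l → X, ∫ b, ∏ i, g (b i) (a (σ i)) ∂(Measure.pi fun _ : Fin k => p)
      = ∏ i, (∫ x, g x (a (σ i)) ∂p) := fun a =>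
    integral_fintype_prod_eq_prod (μ := fun _ : Fin k => p) (fun i x => g x (a (σ i)))
  simp only [h1]
  have h2 : ∀ (φ : X → ℝ) (a : Fin l → X), ∏ i, φ (a (σ i)) =
      ∏ j, (fun (j : Fin l) (x : X) => if j ∈ Finset.univ.image σ then φ x else 1) j (a j) := by
    intro φ a
    simp only
    rw [Finset.prod_ite_mem, Finset.univ_inter, Finset.prod_image (fun _ _ _ _ h => hσ h)]
  have h3 : ∀ a : Fin l → X, ∏ i, (∫ x, g x (a (σ i)) ∂p) = _ :=
    h2 (fun y => ∫ x, g x y ∂p)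
  simp only [h3]
  rw [integral_fintype_prod_eq_prod (μ := fun _ : Fin l => p)
    (fun (j : Fin l) (y : X) => if j ∈ Finset.univ.image σ then (∫ x, g x y ∂p) else 1)]
  have h4 : ∀ j : Fin l, (∫ y, (if j ∈ Finset.univ.image σ then (∫ x, g x y ∂p) else 1) ∂p)
      = if j ∈ Finset.univ.image σ then (∫ y, ∫ x, g x y ∂p ∂p) else 1 := by
    intro j
    split_ifs <;> simp
  simp only [h4]
  rw [Finset.prod_ite_mem, Finset.univ_inter, Finset.prod_const,
    Finset.card_image_of_injective _ hσ]
  simp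

theorem mgf_one {X : Type*} [MeasurableSpace X] (p : Measure X) [IsProbabilityMeasure p]
    (f : X → X → ℝ) (hf : Measurable (Function.uncurry f)) (hb : ∀ x y, |f x y| ≤ 2) (ν : ℝ)
    (h0 : ∫ z, f z.1 z.2 ∂(p.prod p) = 0) (h2 : ∫ z, f z.1 z.2 ^ 2 ∂(p.prod p) ≤ ν)
    (u : ℝ) (hu : 0 ≤ u) (hu2 : 2 * u ≤ 1) :
    ∫ y, ∫ x, exp (u * f x y) ∂p ∂p ≤ exp (u ^ 2 * ν) := by
  have hm : Measurable (fun z : X × X => f z.1 z.2) := hf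
  have i1 : Integrable (fun z : X × X => f z.1 z.2) (p.prod p) :=
    Integrable.of_bound (C := 2) hm.aestronglyMeasurable
      (Filter.Eventually.of_forall fun z => hb _ _)
  have i2 : Integrable (fun z : X × X => f z.1 z.2 ^ 2) (p.prod p) :=
    Integrable.of_bound (C := 2 ^ 2) (hm.pow_const 2).aestronglyMeasurable
      (Filter.Eventually.of_forall fun z => by
        rw [norm_pow]; exact pow_le_pow_left₀ (norm_nonneg _) (hb _ _) 2)
  have hle : ∀ x y, exp (u * f x y) ≤ 1 + u * f x y + u ^ 2 * f x y ^ 2 := by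
    intro x y
    have hx : |u * f x y| ≤ 1 := by
      rw [abs_mul, abs_of_nonneg hu]
      nlinarith [hb x y]
    have := (abs_le.1 (Real.abs_exp_sub_one_sub_id_le hx)).2
    nlinarith
  have i3 : Integrable (fun z : X × X => exp (u * f z.1 z.2)) (p.prod p) :=
    Integrable.of_bound (C := exp 1) (by fun_prop)
      (Filter.Eventually.of_forall fun z => by
        rw [Real.norm_eq_abs, abs_of_pos (exp_pos _), exp_le_exp]
        have := (abs_le.1 (hb z.1 z.2)).2
        nlinarith)
  have : ∫ y, ∫ x, exp (u * f x y) ∂p ∂p = ∫ z, exp (u * f z.1 z.2) ∂(p.prod p) :=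
    (integral_prod_symm _ i3).symm
  rw [this]
  calc ∫ z, exp (u * f z.1 z.2) ∂(p.prod p)
      ≤ ∫ z, (1 + u * f z.1 z.2 + u ^ 2 * f z.1 z.2 ^ 2) ∂(p.prod p) := by
        refine integral_mono i3 ?_ (fun z => hle _ _)
        exact ((integrable_const _).add (i1.const_mul u)).add (i2.const_mul _)
    _ = 1 + u ^ 2 * ∫ z, f z.1 z.2 ^ 2 ∂(p.prod p) := by
        have i4 : Integrable (fun z : X × X => 1 + u * f z.1 z.2) (p.prod p) :=
          (integrable_const _).add (i1.const_mul u)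
        rw [integral_add i4 (i2.const_mul _),
          integral_add (integrable_const _) (i1.const_mul u), integral_const_mul,
          integral_const_mul, h0]
        simp
    _ ≤ 1 + u ^ 2 * ν := by gcongr
    _ ≤ exp (u ^ 2 * ν) := by linarith [add_one_le_exp (u ^ 2 * ν)]

theorem exp_U_integrable {X : Type*} [MeasurableSpace X] (p : Measure X) [IsProbabilityMeasure p]
    (f : X → X → ℝ) (hf : Measurable (Function.uncurry f)) (hb : ∀ x y, |f x y| ≤ 2)
    (k l : ℕ) (s : ℝ) :
    Integrable (fun z : (Fin l → X) × (Fin k → X) =>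
        exp (s * (1 / ((k : ℝ) * l) * ∑ i, ∑ j, f (z.2 i) (z.1 j))))
      ((Measure.pi fun _ : Fin l => p).prod (Measure.pi fun _ : Fin k => p)) := by
  refine Integrable.of_bound
    (C := exp (|s| * (|1 / ((k : ℝ) * l)| * ∑ _i : Fin k, ∑ _j : Fin l, 2))) ?_ ?_
  · refine Measurable.aestronglyMeasurable ?_
    refine measurable_exp.comp (Measurable.const_mul (Measurable.const_mul ?_ _) _)
    refine Finset.measurable_sum _ fun i _ => Finset.measurable_sum _ fun j _ => ?_
    exact hf.comp (f := fun z : (Fin l → X) × (Fin k → X) => (z.2 i, z.1 j)) (by fun_prop)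
  · refine Filter.Eventually.of_forall fun z => ?_
    rw [Real.norm_eq_abs, abs_of_pos (exp_pos _), exp_le_exp]
    refine (le_abs_self _).trans ?_
    rw [abs_mul, abs_mul]
    gcongr
    refine (Finset.abs_sum_le_sum_abs _ _).trans (Finset.sum_le_sum fun i _ => ?_)
    exact (Finset.abs_sum_le_sum_abs _ _).trans (Finset.sum_le_sum fun j _ => hb _ _)

theorem mgf_U_le {X : Type*} [MeasurableSpace X] (p : Measure X) [IsProbabilityMeasure p]
    (f : X → X → ℝ) (hf : Measurable (Function.uncurry f)) (hb : ∀ x y, |f x y| ≤ 2) (ν : ℝ)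
    (hν : 0 ≤ ν)
    (h0 : ∫ z, f z.1 z.2 ∂(p.prod p) = 0) (h2 : ∫ z, f z.1 z.2 ^ 2 ∂(p.prod p) ≤ ν)
    (k l : ℕ) (hkl : k ≤ l) (m : ℝ) (hm : 0 < m) (hk : m ≤ k)
    (s : ℝ) (hs : 0 ≤ s) (hs2 : 2 * s ≤ m) :
    ∫ z, exp (s * (1 / ((k : ℝ) * l) * ∑ i, ∑ j, f (z.2 i) (z.1 j)))
      ∂((Measure.pi fun _ : Fin l => p).prod (Measure.pi fun _ : Fin k => p))
      ≤ exp (s ^ 2 * ν / m) := by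
  have hkR : (0 : ℝ) < k := hm.trans_le hk
  have hlR : (0 : ℝ) < l := hkR.trans_le (by exact_mod_cast hkl)
  have hl : l ≠ 0 := by rintro rfl; simp at hlR
  have : NeZero l := ⟨hl⟩
  set σ : Fin l → Fin k → Fin l := fun c i => c + Fin.castLE hkl i with hσdef
  have hσ : ∀ c, Function.Injective (σ c) := by
    intro c i j h
    exact Fin.castLE_injective hkl (add_left_cancel h)
  set u : ℝ := s / k with hu
  have hu0 : 0 ≤ u := by positivity
  have hu2 : 2 * u ≤ 1 := by
    rw [hu, ← mul_div_assoc, div_le_one hkR]; linarith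
  have hone := mgf_one p f hf hb ν h0 h2 u hu0 hu2
  have hmeasg : Measurable (Function.uncurry fun x y => exp (u * f x y)) :=
    measurable_exp.comp (hf.const_mul u)
  have hbg : ∀ x y, |exp (u * f x y)| ≤ exp 1 := by
    intro x y
    rw [abs_of_pos (exp_pos _), exp_le_exp]
    have := (abs_le.1 (hb x y)).2
    nlinarith
  set P := ((Measure.pi fun _ : Fin l => p).prod (Measure.pi fun _ : Fin k => p)) with hP
  have hcore := fun c => core_aux p (σ c) (hσ c) (fun x y => exp (u * f x y)) hmeasg _ hbg
  have hI : ∀ c, Integrable (fun z : (Fin l → X) × (Fin k → X) =>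
      (1 / (l : ℝ)) * ∏ i, exp (u * f (z.2 i) (z.1 (σ c i)))) P := by
    intro c
    refine Integrable.const_mul ?_ _
    refine Integrable.of_bound (C := ∏ _i : Fin k, exp 1) ?_ ?_
    · refine Measurable.aestronglyMeasurable ?_
      refine Finset.measurable_prod _ fun i _ => ?_
      exact hmeasg.comp (f := fun z : (Fin l → X) × (Fin k → X) => (z.2 i, z.1 (σ c i)))
        (by fun_prop)
    · refine Filter.Eventually.of_forall fun z => ?_
      rw [norm_prod]
      exact Finset.prod_le_prod (fun _ _ => norm_nonneg _) (fun i _ => hbg _ _)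
  have hpt : ∀ z : (Fin l → X) × (Fin k → X),
      exp (s * (1 / ((k : ℝ) * l) * ∑ i, ∑ j, f (z.2 i) (z.1 j)))
      ≤ ∑ c, (1 / (l : ℝ)) * ∏ i, exp (u * f (z.2 i) (z.1 (σ c i))) := by
    intro z
    have e1 : s * (1 / ((k : ℝ) * l) * ∑ i, ∑ j, f (z.2 i) (z.1 j))
        = ∑ c : Fin l, (1 / (l : ℝ)) • ∑ i, u * f (z.2 i) (z.1 (σ c i)) := by
      have e2 : ∀ i : Fin k, ∑ j, f (z.2 i) (z.1 j) = ∑ c, f (z.2 i) (z.1 (σ c i)) := fun i =>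
        (Equiv.sum_comp (Equiv.addRight (Fin.castLE hkl i)) (fun j => f (z.2 i) (z.1 j))).symm
      simp only [e2]
      rw [Finset.sum_comm]
      simp only [smul_eq_mul, ← Finset.mul_sum]
      rw [hu]
      field_simp
    rw [e1]
    have := convexOn_exp.map_sum_le (t := (Finset.univ : Finset (Fin l)))
      (w := fun _ => 1 / (l : ℝ)) (p := fun c => ∑ i, u * f (z.2 i) (z.1 (σ c i)))
      (fun _ _ => by positivity) (by simp) (fun _ _ => Set.mem_univ _)
    refine this.trans (le_of_eq ?_)
    simp only [exp_sum, smul_eq_mul]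
  calc _ ≤ ∫ z, ∑ c, (1 / (l : ℝ)) * ∏ i, exp (u * f (z.2 i) (z.1 (σ c i))) ∂P :=
        integral_mono (exp_U_integrable p f hf hb k l s)
          (integrable_finsetSum _ fun c _ => hI c) hpt
    _ = (∫ y, ∫ x, exp (u * f x y) ∂p ∂p) ^ k := by
        rw [integral_finsetSum _ fun c _ => hI c]
        simp only [integral_const_mul, hP, hcore]
        simp
        field_simp
    _ ≤ (exp (u ^ 2 * ν)) ^ k := by
        gcongr
    _ ≤ exp (s ^ 2 * ν / m) := by
        rw [← exp_nat_mul, exp_le_exp]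
        have : (k : ℝ) * (u ^ 2 * ν) = s ^ 2 * ν / k := by rw [hu]; field_simp
        rw [this]
        gcongr

theorem mgf_U {X : Type*} [MeasurableSpace X] (p : Measure X) [IsProbabilityMeasure p]
    (f : X → X → ℝ) (hf : Measurable (Function.uncurry f)) (hb : ∀ x y, |f x y| ≤ 2) (ν : ℝ)
    (hν : 0 ≤ ν) (hsym : ∀ x y, f x y = f y x)
    (h0 : ∫ z, f z.1 z.2 ∂(p.prod p) = 0) (h2 : ∫ z, f z.1 z.2 ^ 2 ∂(p.prod p) ≤ ν)
    (k l : ℕ) (m : ℝ) (hm : 0 < m) (hk : m ≤ k) (hl : m ≤ l)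
    (s : ℝ) (hs : 0 ≤ s) (hs2 : 2 * s ≤ m) :
    ∫ z, exp (s * (1 / ((k : ℝ) * l) * ∑ i, ∑ j, f (z.2 i) (z.1 j)))
      ∂((Measure.pi fun _ : Fin l => p).prod (Measure.pi fun _ : Fin k => p))
      ≤ exp (s ^ 2 * ν / m) := by
  rcases le_total k l with h | h
  · exact mgf_U_le p f hf hb ν hν h0 h2 k l h m hm hk s hs hs2
  · have := mgf_U_le p f hf hb ν hν h0 h2 l k h m hm hl s hs hs2
    rw [← integral_prod_swap] at this
    refine le_trans (le_of_eq ?_) this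
    refine integral_congr_ae (Filter.Eventually.of_forall fun z => ?_)
    simp only [Prod.fst_swap, Prod.snd_swap]
    rw [Finset.sum_comm, mul_comm (k : ℝ)]
    simp only [hsym]

theorem asym_mgf {X : Type*} [MeasurableSpace X] (K : X → X → ℝ)
    (hKmeas : Measurable (Function.uncurry K)) (hKsym : ∀ x y, K x y = K y x)
    (hKbdd : ∀ x y, |K x y| ≤ 1) (p : Measure X) [IsProbabilityMeasure p]
    (ν : ℝ) (hν : ∫ x, ∫ y, (K x y)^2 ∂p ∂p ≤ ν)
    (n1X n1Y n2X n2Y : ℕ) (m : ℝ) (hm : 0 < m) (h1 : m ≤ n1X) (h2 : m ≤ n1Y)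
    (h3 : m ≤ n2X) (h4 : m ≤ n2Y) (s : ℝ) (hs : 0 ≤ s) (hs2 : 2 * s ≤ m) :
    Integrable (fun ω => exp (s * (asymMMD K n1X n1Y n2X n2Y ω.1 ω.2 / 4)))
      (((Measure.pi fun _ : Fin n1X => p).prod (Measure.pi fun _ : Fin n1Y => p)).prod
      ((Measure.pi fun _ : Fin n2X => p).prod (Measure.pi fun _ : Fin n2Y => p))) ∧
    ∫ ω, exp (s * (asymMMD K n1X n1Y n2X n2Y ω.1 ω.2 / 4))
      ∂(((Measure.pi fun _ : Fin n1X => p).prod (Measure.pi fun _ : Fin n1Y => p)).prod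
      ((Measure.pi fun _ : Fin n2X => p).prod (Measure.pi fun _ : Fin n2Y => p)))
      ≤ exp (s ^ 2 * ν / m) := by
  have hKm : Measurable (fun z : X × X => K z.1 z.2) := hKmeas
  have iK : Integrable (fun z : X × X => K z.1 z.2) (p.prod p) :=
    Integrable.of_bound (C := 1) hKm.aestronglyMeasurable
      (Filter.Eventually.of_forall fun z => hKbdd _ _)
  have iK2 : Integrable (fun z : X × X => K z.1 z.2 ^ 2) (p.prod p) :=
    Integrable.of_bound (C := 1 ^ 2) (hKm.pow_const 2).aestronglyMeasurable
      (Filter.Eventually.of_forall fun z => by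
        rw [norm_pow]; exact pow_le_pow_left₀ (norm_nonneg _) (hKbdd _ _) 2)
  have hν' : ∫ z, K z.1 z.2 ^ 2 ∂(p.prod p) ≤ ν := by
    rw [integral_prod _ iK2]; exact hν
  have hν0 : 0 ≤ ν := le_trans (integral_nonneg fun z => sq_nonneg _) hν'
  set θ : ℝ := ∫ z, K z.1 z.2 ∂(p.prod p) with hθ
  have hθ1 : |θ| ≤ 1 := by
    have := norm_integral_le_of_norm_le_const (μ := p.prod p) (f := fun z : X × X => K z.1 z.2)
      (C := 1) (Filter.Eventually.of_forall fun z => hKbdd _ _)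
    simpa using this
  -- the signed centred kernels
  set f : ℝ → X → X → ℝ := fun ε x y => ε * (K x y - θ) with hf
  have fm : ∀ ε, Measurable (Function.uncurry (f ε)) := fun ε =>
    (hKmeas.sub_const θ).const_mul ε
  have fb : ∀ ε, |ε| = 1 → ∀ x y, |f ε x y| ≤ 2 := by
    intro ε hε x y
    rw [hf]
    simp only
    rw [abs_mul, hε, one_mul]
    exact (abs_sub _ _).trans (by linarith [hKbdd x y])
  have fs : ∀ ε x y, f ε x y = f ε y x := by
    intro ε x y
    simp only [hf, hKsym x y]
  have f0 : ∀ ε, ∫ z, f ε z.1 z.2 ∂(p.prod p) = 0 := by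
    intro ε
    simp only [hf]
    rw [integral_const_mul, integral_sub iK (integrable_const _)]
    simp [hθ]
  have f2 : ∀ ε, |ε| = 1 → ∫ z, f ε z.1 z.2 ^ 2 ∂(p.prod p) ≤ ν := by
    intro ε hε
    have hε2 : ε ^ 2 = 1 := by rw [← sq_abs, hε]; norm_num
    have e : ∀ z : X × X, f ε z.1 z.2 ^ 2 = K z.1 z.2 ^ 2 - (2 * θ * K z.1 z.2 - θ ^ 2) := by
      intro z
      simp only [hf]
      rw [mul_pow, hε2]; ring
    simp only [e]
    have i5 : Integrable (fun z : X × X => 2 * θ * K z.1 z.2 - θ ^ 2) (p.prod p) :=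
      (iK.const_mul _).sub (integrable_const _)
    rw [integral_sub iK2 i5, integral_sub (iK.const_mul _) (integrable_const _),
      integral_const_mul, ← hθ]
    simp
    nlinarith [sq_nonneg θ]
  set V : ℝ → (k l : ℕ) → (Fin l → X) × (Fin k → X) → ℝ := fun ε k l z =>
    exp (s * (1 / ((k : ℝ) * l) * ∑ i, ∑ j, f ε (z.2 i) (z.1 j))) with hV
  have Vi := fun ε hε k l => exp_U_integrable p (f ε) (fm ε) (fb ε hε) k l s
  have Vb := fun ε hε k l hk hl => mgf_U p (f ε) (fm ε) (fb ε hε) ν hν0 (fs ε) (f0 ε) (f2 ε hε)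
    k l m hm hk hl s hs hs2
  set P1 := (Measure.pi fun _ : Fin n1X => p)
  set P2 := (Measure.pi fun _ : Fin n1Y => p)
  set P3 := (Measure.pi fun _ : Fin n2X => p)
  set P4 := (Measure.pi fun _ : Fin n2Y => p)
  set P := (P1.prod P2).prod (P3.prod P4)
  have m11 : MeasurePreserving (Prod.map Prod.fst Prod.fst) P (P1.prod P3) :=
    measurePreserving_fst.prod measurePreserving_fst
  have m12 : MeasurePreserving (Prod.map Prod.fst Prod.snd) P (P1.prod P4) :=
    measurePreserving_fst.prod measurePreserving_snd
  have m21 : MeasurePreserving (Prod.map Prod.snd Prod.fst) P (P2.prod P3) :=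
    measurePreserving_snd.prod measurePreserving_fst
  have m22 : MeasurePreserving (Prod.map Prod.snd Prod.snd) P (P2.prod P4) :=
    measurePreserving_snd.prod measurePreserving_snd
  have a1 : |(1 : ℝ)| = 1 := by norm_num
  have a2 : |(-1 : ℝ)| = 1 := by norm_num
  have tr : ∀ (ε : ℝ) (hε : |ε| = 1) (k l : ℕ) (hk : m ≤ k) (hl : m ≤ l)
      (φ : ((Fin n1X → X) × (Fin n1Y → X)) × ((Fin n2X → X) × (Fin n2Y → X)) →
        (Fin l → X) × (Fin k → X))
      (hφ : MeasurePreserving φ P ((Measure.pi fun _ : Fin l => p).prod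
        (Measure.pi fun _ : Fin k => p))),
      Integrable (fun ω => V ε k l (φ ω)) P ∧ ∫ ω, V ε k l (φ ω) ∂P ≤ exp (s ^ 2 * ν / m) := by
    intro ε hε k l hk hl φ hφ
    refine ⟨hφ.integrable_comp_of_integrable (Vi ε hε k l), ?_⟩
    have := integral_map (μ := P) (φ := φ) hφ.measurable.aemeasurable (f := V ε k l)
      (by rw [hφ.map_eq]; exact (Vi ε hε k l).aestronglyMeasurable)
    rw [← this, hφ.map_eq]
    exact Vb ε hε k l hk hl
  obtain ⟨I1, B1⟩ := tr 1 a1 n2X n1X h3 h1 _ m11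
  obtain ⟨I2, B2⟩ := tr (-1) a2 n2X n1Y h3 h2 _ m21
  obtain ⟨I3, B3⟩ := tr (-1) a2 n2Y n1X h4 h1 _ m12
  obtain ⟨I4, B4⟩ := tr 1 a1 n2Y n1Y h4 h2 _ m22
  have p1 : (n1X : ℝ) ≠ 0 := (hm.trans_le h1).ne'
  have p2 : (n1Y : ℝ) ≠ 0 := (hm.trans_le h2).ne'
  have p3 : (n2X : ℝ) ≠ 0 := (hm.trans_le h3).ne'
  have p4 : (n2Y : ℝ) ≠ 0 := (hm.trans_le h4).ne'
  have hVe : ∀ (ε : ℝ) (k l : ℕ) (hk : (k : ℝ) ≠ 0) (hl : (l : ℝ) ≠ 0)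
      (z : (Fin l → X) × (Fin k → X)), V ε k l z = exp (s * (ε *
        (1 / ((k : ℝ) * l) * ∑ i, ∑ j, K (z.2 i) (z.1 j) - θ))) := by
    intro ε k l hk hl z
    simp only [hV, hf, ← Finset.mul_sum, Finset.sum_sub_distrib]
    congr 2
    simp
    field_simp
  have hpt : ∀ ω : ((Fin n1X → X) × (Fin n1Y → X)) × ((Fin n2X → X) × (Fin n2Y → X)),
      exp (s * (asymMMD K n1X n1Y n2X n2Y ω.1 ω.2 / 4)) ≤
      (1 / 4) * (V 1 n2X n1X (Prod.map Prod.fst Prod.fst ω)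
        + V (-1) n2X n1Y (Prod.map Prod.snd Prod.fst ω)
        + V (-1) n2Y n1X (Prod.map Prod.fst Prod.snd ω)
        + V 1 n2Y n1Y (Prod.map Prod.snd Prod.snd ω)) := by
    intro ω
    rw [hVe _ _ _ p3 p1, hVe _ _ _ p3 p2, hVe _ _ _ p4 p1, hVe _ _ _ p4 p2]
    have gen : ∀ a b c d : ℝ, exp ((a + b + c + d) / 4) ≤
        (1 / 4) * (exp a + exp b + exp c + exp d) := by
      intro a b c d
      have := convexOn_exp.map_sum_le (t := (Finset.univ : Finset (Fin 4)))
        (w := fun _ => 1 / (4 : ℝ)) (p := ![a, b, c, d])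
        (fun _ _ => by positivity) (by simp) (fun _ _ => Set.mem_univ _)
      simp [Fin.sum_univ_four] at this
      have e : (a + b + c + d) / 4 = 4⁻¹ * a + 4⁻¹ * b + 4⁻¹ * c + 4⁻¹ * d := by ring
      rw [e]; linarith
    refine le_trans (le_of_eq ?_) (gen _ _ _ _)
    congr 1
    simp only [asymMMD, Prod.map_fst, Prod.map_snd]
    ring
  have hIs := (((I1.add I2).add I3).add I4).const_mul (1 / 4)
  have hmT : Measurable (fun ω : ((Fin n1X → X) × (Fin n1Y → X)) ×
      ((Fin n2X → X) × (Fin n2Y → X)) =>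
      exp (s * (asymMMD K n1X n1Y n2X n2Y ω.1 ω.2 / 4))) := by
    refine measurable_exp.comp (Measurable.const_mul (Measurable.div_const ?_ _) _)
    unfold asymMMD
    refine Measurable.add (Measurable.sub (Measurable.sub ?_ ?_) ?_) ?_ <;>
    · refine Measurable.const_mul ?_ _
      refine Finset.measurable_sum _ fun i _ => Finset.measurable_sum _ fun j _ => ?_
      exact hKm.comp (Measurable.prodMk (by fun_prop) (by fun_prop))
  have hIT : Integrable (fun ω => exp (s * (asymMMD K n1X n1Y n2X n2Y ω.1 ω.2 / 4))) P := by
    refine hIs.mono' hmT.aestronglyMeasurable (Filter.Eventually.of_forall fun ω => ?_)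
    rw [Real.norm_eq_abs, abs_of_pos (exp_pos _)]
    exact hpt ω
  refine ⟨hIT, (integral_mono hIT hIs hpt).trans ?_⟩
  rw [integral_const_mul, integral_add' ((I1.add I2).add I3) I4, integral_add' (I1.add I2) I3,
    integral_add' I1 I2]
  linarith

theorem asym_zero {X : Type*} [MeasurableSpace X] (K : X → X → ℝ)
    (hKmeas : Measurable (Function.uncurry K))
    (hKbdd : ∀ x y, |K x y| ≤ 1) (p : Measure X) [IsProbabilityMeasure p]
    (hν : ∫ x, ∫ y, (K x y)^2 ∂p ∂p ≤ 0) (n1X n1Y n2X n2Y : ℕ) :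
    ∀ᵐ ω ∂(((Measure.pi fun _ : Fin n1X => p).prod (Measure.pi fun _ : Fin n1Y => p)).prod
      ((Measure.pi fun _ : Fin n2X => p).prod (Measure.pi fun _ : Fin n2Y => p))),
      asymMMD K n1X n1Y n2X n2Y ω.1 ω.2 = 0 := by
  have hKm : Measurable (fun z : X × X => K z.1 z.2) := hKmeas
  have iK2 : Integrable (fun z : X × X => K z.1 z.2 ^ 2) (p.prod p) :=
    Integrable.of_bound (C := 1 ^ 2) (hKm.pow_const 2).aestronglyMeasurable
      (Filter.Eventually.of_forall fun z => by
        rw [norm_pow]; exact pow_le_pow_left₀ (norm_nonneg _) (hKbdd _ _) 2)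
  have hν' : ∫ z, K z.1 z.2 ^ 2 ∂(p.prod p) = 0 := by
    refine le_antisymm ?_ (integral_nonneg fun z => sq_nonneg _)
    rw [integral_prod _ iK2]; exact hν
  have hae : ∀ᵐ z ∂(p.prod p), K z.2 z.1 = 0 := by
    have := (integral_eq_zero_iff_of_nonneg (fun z => sq_nonneg _) iK2).1 hν'
    have h := (Measure.measurePreserving_swap (μ := p) (ν := p)).quasiMeasurePreserving.ae this
    filter_upwards [h] with z hz
    simpa using hz
  set P1 := (Measure.pi fun _ : Fin n1X => p)
  set P2 := (Measure.pi fun _ : Fin n1Y => p)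
  set P3 := (Measure.pi fun _ : Fin n2X => p)
  set P4 := (Measure.pi fun _ : Fin n2Y => p)
  set P := (P1.prod P2).prod (P3.prod P4)
  have ev : ∀ (n : ℕ) (i : Fin n), MeasurePreserving (fun x : Fin n → X => x i)
      (Measure.pi fun _ : Fin n => p) p := fun n i => measurePreserving_eval (fun _ => p) i
  have c1 : ∀ᵐ ω ∂P, ∀ i j, K (ω.2.1 i) (ω.1.1 j) = 0 := by
    refine ae_all_iff.2 fun i => ae_all_iff.2 fun j => ?_
    exact ((((ev n1X j).comp measurePreserving_fst).prod ((ev n2X i).comp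
      measurePreserving_fst) : MeasurePreserving _ P _)).quasiMeasurePreserving.ae hae
  have c2 : ∀ᵐ ω ∂P, ∀ i j, K (ω.2.1 i) (ω.1.2 j) = 0 := by
    refine ae_all_iff.2 fun i => ae_all_iff.2 fun j => ?_
    exact ((((ev n1Y j).comp measurePreserving_snd).prod ((ev n2X i).comp
      measurePreserving_fst) : MeasurePreserving _ P _)).quasiMeasurePreserving.ae hae
  have c3 : ∀ᵐ ω ∂P, ∀ i j, K (ω.2.2 i) (ω.1.1 j) = 0 := by
    refine ae_all_iff.2 fun i => ae_all_iff.2 fun j => ?_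
    exact ((((ev n1X j).comp measurePreserving_fst).prod ((ev n2Y i).comp
      measurePreserving_snd) : MeasurePreserving _ P _)).quasiMeasurePreserving.ae hae
  have c4 : ∀ᵐ ω ∂P, ∀ i j, K (ω.2.2 i) (ω.1.2 j) = 0 := by
    refine ae_all_iff.2 fun i => ae_all_iff.2 fun j => ?_
    exact ((((ev n1Y j).comp measurePreserving_snd).prod ((ev n2Y i).comp
      measurePreserving_snd) : MeasurePreserving _ P _)).quasiMeasurePreserving.ae hae
  filter_upwards [c1, c2, c3, c4] with ω d1 d2 d3 d4
  simp [asymMMD, d1, d2, d3, d4]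

/-- Theorem 3.3, Type-I error part (full bootstrap): under `H₀ : p = q`, with
`λ₁ = √(8 log(4/α))` and threshold `t_thres = 4λ₁√(ν/(c_a n))`, if `n > λ₁²/(9νc_a)`
then `Pr[T̂_a > t_thres] ≤ α` under the joint product law of the four samples. -/
theorem asym_mmd_type_I_error_full_bootstrap
    {d : ℕ} (𝒳 : Set (EuclideanSpace ℝ (Fin d))) (h𝒳 : MeasurableSet 𝒳)
    (K : 𝒳 → 𝒳 → ℝ)
    (hKmeas : Measurable (Function.uncurry K))
    (hKsym : ∀ x y, K x y = K y x)
    (hKpsd : ∀ (m : ℕ) (z : Fin m → 𝒳) (a : Fin m → ℝ),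
      0 ≤ ∑ i, ∑ j, a i * a j * K (z i) (z j))
    (hKbdd : ∀ x y, |K x y| ≤ 1)
    (p q : Measure 𝒳) [IsProbabilityMeasure p] [IsProbabilityMeasure q]
    (ν : ℝ) (hν1 : ν ≤ 1)
    (hνpp : ∫ x, ∫ y, (K x y)^2 ∂p ∂p ≤ ν)
    (hνpq : ∫ x, ∫ y, (K x y)^2 ∂q ∂p ≤ ν)
    (hνqq : ∫ x, ∫ y, (K x y)^2 ∂q ∂q ≤ ν)
    (n1X n1Y n2X n2Y : ℕ) (ca : ℝ) (hca : 0 < ca) (hca1 : ca < 1)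
    (hbal1 : ca * ((n1X + n1Y + n2X + n2Y : ℕ) : ℝ) ≤ (n1X : ℝ))
    (hbal2 : ca * ((n1X + n1Y + n2X + n2Y : ℕ) : ℝ) ≤ (n1Y : ℝ))
    (hbal3 : ca * ((n1X + n1Y + n2X + n2Y : ℕ) : ℝ) ≤ (n2X : ℝ))
    (hbal4 : ca * ((n1X + n1Y + n2X + n2Y : ℕ) : ℝ) ≤ (n2Y : ℝ))
    (hH0 : p = q)
    (α : ℝ) (hα : 0 < α) (hα1 : α < 1)
    (hn : ((n1X + n1Y + n2X + n2Y : ℕ) : ℝ) >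
      (Real.sqrt (8 * Real.log (4/α)))^2 / (9 * ν * ca)) :
    (((Measure.pi fun _ : Fin n1X => p).prod (Measure.pi fun _ : Fin n1Y => q)).prod
      ((Measure.pi fun _ : Fin n2X => p).prod (Measure.pi fun _ : Fin n2Y => q)))
      {ω : ((Fin n1X → 𝒳) × (Fin n1Y → 𝒳)) × ((Fin n2X → 𝒳) × (Fin n2Y → 𝒳)) |
        asymMMD K n1X n1Y n2X n2Y ω.1 ω.2 >
          4 * Real.sqrt (8 * Real.log (4/α))
            * Real.sqrt (ν/(ca * ((n1X + n1Y + n2X + n2Y : ℕ) : ℝ)))}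
      ≤ ENNReal.ofReal α := by
  subst hH0
  set n : ℝ := ((n1X + n1Y + n2X + n2Y : ℕ) : ℝ) with hndef
  set lam : ℝ := Real.sqrt (8 * Real.log (4/α)) with hlam
  have hlog : 0 ≤ Real.log (4/α) := Real.log_nonneg (by rw [le_div_iff₀ hα]; linarith)
  have hlam2 : lam ^ 2 = 8 * Real.log (4/α) := Real.sq_sqrt (by positivity)
  have hlam0 : 0 ≤ lam := Real.sqrt_nonneg _
  have hν0 : 0 ≤ ν := le_trans
    (integral_nonneg fun x => integral_nonneg fun y => sq_nonneg (K x y)) hνpp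
  have hn0 : 0 < n := lt_of_le_of_lt (by positivity) hn
  set m : ℝ := ca * n with hmdef
  have hm : 0 < m := by positivity
  set P := (((Measure.pi fun _ : Fin n1X => p).prod (Measure.pi fun _ : Fin n1Y => p)).prod
      ((Measure.pi fun _ : Fin n2X => p).prod (Measure.pi fun _ : Fin n2Y => p))) with hP
  rcases hν0.eq_or_lt with h0 | hνpos
  · have hz := asym_zero K hKmeas hKbdd p (by rw [h0]; exact hνpp) n1X n1Y n2X n2Y
    rw [← hP] at hz
    refine le_trans (le_of_eq ?_) zero_le
    have : ∀ᵐ ω ∂P, ¬ (asymMMD K n1X n1Y n2X n2Y ω.1 ω.2 > 4 * lam * Real.sqrt (ν / m)) := by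
      filter_upwards [hz] with ω hω
      rw [hω, not_lt]
      positivity
    simpa [ae_iff] using this
  · set t : ℝ := lam * Real.sqrt (ν / m) with ht
    have ht0 : 0 ≤ t := by positivity
    have ht2 : t ^ 2 = lam ^ 2 * (ν / m) := by
      have := Real.sq_sqrt (show 0 ≤ ν / m by positivity)
      rw [ht, mul_pow, this]
    have hn' : lam ^ 2 < 9 * ν * m := by
      rw [gt_iff_lt, div_lt_iff₀ (by positivity)] at hn
      rw [hmdef]; linarith
    have ht3 : t ≤ 3 * ν := by
      refine abs_le_of_sq_le_sq' ?_ (by positivity) |>.2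
      rw [ht2, ← mul_div_assoc, div_le_iff₀ hm]
      nlinarith
    set s : ℝ := m * t / (6 * ν) with hs
    have hs0 : 0 ≤ s := by positivity
    have hs2 : 2 * s ≤ m := by
      rw [hs, ← mul_div_assoc, div_le_iff₀ (by positivity)]
      nlinarith
    obtain ⟨hI, hB⟩ := asym_mgf K hKmeas hKsym hKbdd p ν hνpp n1X n1Y n2X n2Y m hm
      hbal1 hbal2 hbal3 hbal4 s hs0 hs2
    rw [← hP] at hI hB
    have hmk := mul_meas_ge_le_integral_of_nonneg
      (Filter.Eventually.of_forall fun ω => (exp_pos _).le) hI (exp (s * t))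
    set F : ((Fin n1X → 𝒳) × (Fin n1Y → 𝒳)) × ((Fin n2X → 𝒳) × (Fin n2Y → 𝒳)) → ℝ :=
      fun ω => exp (s * (asymMMD K n1X n1Y n2X n2Y ω.1 ω.2 / 4)) with hF
    have hsub : {ω : ((Fin n1X → 𝒳) × (Fin n1Y → 𝒳)) × ((Fin n2X → 𝒳) × (Fin n2Y → 𝒳)) |
        asymMMD K n1X n1Y n2X n2Y ω.1 ω.2 > 4 * lam * Real.sqrt (ν / m)} ⊆
        {ω | exp (s * t) ≤ F ω} := by
      intro ω hω
      simp only [Set.mem_ofPred_eq, hF, exp_le_exp] at hω ⊢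
      refine mul_le_mul_of_nonneg_left ?_ hs0
      rw [ht]; linarith
    refine (measure_mono hsub).trans ?_
    rw [← ofReal_measureReal]
    refine ENNReal.ofReal_le_ofReal ?_
    have e1 : P.real {ω | exp (s * t) ≤ F ω} ≤ exp (s ^ 2 * ν / m - s * t) := by
      rw [exp_sub, le_div_iff₀ (exp_pos _), mul_comm]
      exact hmk.trans hB
    refine e1.trans ?_
    have e2 : s ^ 2 * ν / m - s * t = - (5 / 36) * lam ^ 2 := by
      have : s ^ 2 * ν / m - s * t = - (5 / 36) * (t ^ 2 * (m / ν)) := by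
        rw [hs]; field_simp; ring
      rw [this, ht2]; field_simp
    rw [e2, hlam2]
    calc exp (-(5 / 36) * (8 * Real.log (4 / α))) ≤ exp (- Real.log (4 / α)) := by
          rw [exp_le_exp]; linarith
      _ = α / 4 := by
          rw [exp_neg, exp_log (by positivity), inv_div]
      _ ≤ α := by linarith
end
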